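/- arXiv:1308.2499 — 5 statements merged into one kernel-verified Lean document; each statement's English description precedes it below -/
import Mathlib

section
/- Let p ∈ (7/3, 8/3). Then for all f, g ∈ W^{3p/2−2,2}(ℝ/ℤ,ℝⁿ) one has Q^{(p)}(f,g) = Σ_{k∈ℤ} ρ_k ⟨f̂_k, ĝ_k⟩_{ℂⁿ}, where ρ_k := ∬_D |(e^{2πikw}−1)/w − (e^{2πikv}−1)/v|² / (|v|^{p−2} |w|^{p−2} |v−w|^p) dw dv; moreover ρ_k / |k|^{3p−4} converges, as |k| → ∞, to the finite positive constant c := ∬_{(−∞,0)×(0,∞)} |(e^{2πiw}−1)/w − (e^{2πiv}−1)/v|² / (|v|^{p−2} |w|^{p−2} |v−w|^p) dw dv, so that ρ_k = c|k|^{3p−4} + o(|k|^{3p−4}). -/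
open MeasureTheory Set Filter Topology
open scoped ENNReal

noncomputable section

/-- The range of integration `D ⊆ (-1/2,0) × (0,1/2)` given by
`w ≤ 1 + 2v` and `v ≥ -1 + 2w`. -/
def domainD : Set (ℝ × ℝ) :=
  {x | x.1 ∈ Set.Ioo (-(1/2) : ℝ) 0 ∧ x.2 ∈ Set.Ioo (0 : ℝ) (1/2) ∧
    x.2 ≤ 1 + 2 * x.1 ∧ -1 + 2 * x.2 ≤ x.1}

/-- The `k`-th Fourier coefficient `f̂_k ∈ ℂⁿ` of a (componentwise real)
`1`-periodic function. -/
def fourierCoef {n : ℕ} (f : ℝ → EuclideanSpace ℝ (Fin n)) (k : ℤ) :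
    EuclideanSpace ℂ (Fin n) :=
  (WithLp.equiv 2 (Fin n → ℂ)).symm fun j =>
    ∫ x in Ico (0:ℝ) 1, (f x j : ℂ) *
      Complex.exp (-(((2 * Real.pi * (k : ℝ) * x : ℝ) : ℂ) * Complex.I))

/-- The bilinear form `Q^{(p)}`. -/
def Qform {n : ℕ} (p : ℝ) (f g : ℝ → EuclideanSpace ℝ (Fin n)) : ℝ :=
  ∫ u in Ico (0:ℝ) 1, ∫ x in domainD,
    (inner ℝ (x.2⁻¹ • (f (u + x.2) - f u) - x.1⁻¹ • (f (u + x.1) - f u))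
           (x.2⁻¹ • (g (u + x.2) - g u) - x.1⁻¹ • (g (u + x.1) - g u)) : ℝ) /
      (|x.1 - x.2| ^ p * |x.1| ^ (p - 2) * |x.2| ^ (p - 2))

/-- The integrand of the Fourier multiplier `ρ_k`. -/
def rhoIntegrand (p : ℝ) (k : ℤ) (x : ℝ × ℝ) : ℝ :=
  ‖(Complex.exp (((2 * Real.pi * (k : ℝ) * x.2 : ℝ) : ℂ) * Complex.I) - 1) / (x.2 : ℂ)
    - (Complex.exp (((2 * Real.pi * (k : ℝ) * x.1 : ℝ) : ℂ) * Complex.I) - 1) / (x.1 : ℂ)‖ ^ 2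
    / (|x.1| ^ (p - 2) * |x.2| ^ (p - 2) * |x.1 - x.2| ^ p)

/-- The Fourier multiplier `ρ_k` of `Q^{(p)}`. -/
def rhoCoef (p : ℝ) (k : ℤ) : ℝ := ∫ x in domainD, rhoIntegrand p k x

/-- The limit constant `c`. -/
def climit (p : ℝ) : ℝ :=
  ∫ x in {y : ℝ × ℝ | y.1 < 0 ∧ 0 < y.2}, rhoIntegrand p 1 x

/-!
A translation acts on the `k`-th Fourier coefficient through the character `e^{2πikt}`, so for
fixed steps `(v, w)` the bracket in `Q^{(p)}` is a Fourier multiplier. Parseval in `u`, followed by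
integration over `(v, w)`, turns `Q^{(p)}` into a series with weights `ρ_k`; the interchange is
justified by applying the same identity to `f = g`, where all terms are nonnegative.

The substitution `x ↦ |k| x` gives `ρ_k = |k|^{3p-4} ∫_{|k| D} F`, where `F` is the integrand of
`c`. As `D` is a neighbourhood of the origin relative to the quadrant `v < 0 < w`, the sets
`|k| D` exhaust the quadrant, whence the limit. `F` is integrable because its numerator is at most
`K min(1, (|v| + |w|)²)`, while `|v|^α |w|^β ≤ (|v| + |w|)^{α+β}` allows the factor `|v - w|^{-p}`
to be traded for powers of `|v|` and `|w|` on either side of the critical exponent `-1`.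
-/

section General

theorem rpow_mul_rpow_le_add_rpow {a b α β : ℝ} (ha : 0 < a) (hb : 0 < b)
    (hα : 0 ≤ α) (hβ : 0 ≤ β) : a ^ α * b ^ β ≤ (a + b) ^ (α + β) := by
  rw [Real.rpow_add (by positivity)]
  gcongr <;> linarith

theorem le_mul_rpow_of_le_of_le_mul_sq {s K r θ : ℝ} (hr : 0 < r) (hK : 0 ≤ K)
    (hθ : θ ∈ Icc (0 : ℝ) 2) (hs : s ≤ K) (hs' : s ≤ K * r ^ 2) : s ≤ K * r ^ θ := by
  rcases le_total r 1 with h | h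
  · refine hs'.trans (mul_le_mul_of_nonneg_left ?_ hK)
    simpa using Real.rpow_le_rpow_of_exponent_ge hr h hθ.2
  · exact hs.trans (le_mul_of_one_le_right hK (Real.one_le_rpow h hθ.1))

theorem integrableOn_min_rpow_Ioi {α β : ℝ} (hα : -1 < α) (hβ : β < -1) :
    IntegrableOn (fun t : ℝ => min (t ^ α) (t ^ β)) (Ioi 0) := by
  have hm : Measurable fun t : ℝ => min (t ^ α) (t ^ β) := by fun_prop
  have h0 : ∀ t : ℝ, 0 < t → 0 ≤ min (t ^ α) (t ^ β) := fun t ht => by positivity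
  rw [← Ioc_union_Ioi_eq_Ioi (zero_le_one' ℝ)]
  refine IntegrableOn.union ?_ ?_
  · have h : IntegrableOn (fun t : ℝ => t ^ α) (Ioc 0 1) :=
      (intervalIntegrable_iff_integrableOn_Ioc_of_le zero_le_one).1
        (intervalIntegral.intervalIntegrable_rpow' hα)
    refine h.mono' hm.aestronglyMeasurable
      (ae_restrict_of_forall_mem measurableSet_Ioc fun t ht => ?_)
    exact (Real.norm_of_nonneg (h0 t ht.1)).trans_le (min_le_left _ _)
  · refine (integrableOn_Ioi_rpow_of_lt hβ one_pos).mono' hm.aestronglyMeasurable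
      (ae_restrict_of_forall_mem measurableSet_Ioi fun t ht => ?_)
    exact (Real.norm_of_nonneg (h0 t (one_pos.trans ht))).trans_le (min_le_right _ _)

theorem norm_exp_ofReal_mul_I_sub_one_sub_le (x : ℝ) :
    ‖Complex.exp (x * Complex.I) - 1 - x * Complex.I‖ ≤ 2 * x ^ 2 := by
  have hx : ‖(x * Complex.I : ℂ)‖ = |x| := by simp
  rcases le_total |x| 1 with h | h
  · have := Complex.norm_exp_sub_one_sub_id_le (hx.trans_le h)
    rw [hx, sq_abs] at this
    linarith [sq_nonneg x]
  · have h1 : ‖Complex.exp (x * Complex.I) - 1‖ ≤ |x| := by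
      simpa [mul_comm] using Real.norm_exp_I_mul_ofReal_sub_one_le (x := x)
    calc _ ≤ |x| + |x| := (norm_sub_le _ _).trans (add_le_add h1 hx.le)
      _ ≤ 2 * x ^ 2 := by nlinarith [sq_abs x]

variable {X E : Type*} [MeasurableSpace X] {μ : Measure X}

theorem integrable_of_hasSum {ι : Type*} [Countable ι] [NormedAddCommGroup E] {F : ι → X → E}
    {S : X → E} (hF : ∀ i, Integrable (F i) μ) (hsum : Summable fun i => ∫ x, ‖F i x‖ ∂μ)
    (hS : ∀ᵐ x ∂μ, HasSum (F · x) (S x)) : Integrable S μ := by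
  have hm : AEStronglyMeasurable S μ :=
    aestronglyMeasurable_of_tendsto_ae atTop (f := fun (s : Finset ι) x => ∑ i ∈ s, F i x)
      (fun s => (integrable_finsetSum s fun i _ => hF i).1) hS
  refine ⟨hm, ?_⟩
  calc ∫⁻ x, ‖S x‖ₑ ∂μ ≤ ∫⁻ x, ∑' i, ‖F i x‖ₑ ∂μ := by
        refine lintegral_mono_ae (hS.mono fun x hx => ?_)
        rw [← hx.tsum_eq]
        exact enorm_tsum_le_tsum_enorm
    _ = ∑' i, ∫⁻ x, ‖F i x‖ₑ ∂μ := lintegral_tsum fun i => (hF i).1.enorm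
    _ = ∑' i, ENNReal.ofReal (∫ x, ‖F i x‖ ∂μ) := by
        simp only [ofReal_integral_norm_eq_lintegral_enorm (hF _)]
    _ < ⊤ := by
        rw [← ENNReal.ofReal_tsum_of_nonneg (fun i => by positivity) hsum]
        exact ENNReal.ofReal_lt_top

theorem integrable_inner_of_memLp_two {𝕜 : Type*} [RCLike 𝕜] [NormedAddCommGroup E]
    [InnerProductSpace 𝕜 E] {f g : X → E} (hf : MemLp f 2 μ) (hg : MemLp g 2 μ) :
    Integrable (fun x => inner 𝕜 (f x) (g x)) μ := by
  refine (L2.integrable_inner (𝕜 := 𝕜) (hf.toLp f) (hg.toLp g)).congr ?_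
  filter_upwards [hf.coeFn_toLp, hg.coeFn_toLp] with x hfx hgx
  rw [hfx, hgx]

theorem setIntegral_pos_of_continuousOn [TopologicalSpace X] [OpensMeasurableSpace X]
    [μ.IsOpenPosMeasure] {U : Set X} {f : X → ℝ} {x : X} (hU : IsOpen U)
    (hf : ContinuousOn f U) (hfi : IntegrableOn f U μ) (hf0 : ∀ y ∈ U, 0 ≤ f y) (hx : x ∈ U)
    (hfx : 0 < f x) : 0 < ∫ y in U, f y ∂μ := by
  rw [setIntegral_pos_iff_support_of_nonneg_ae
    (ae_restrict_of_forall_mem hU.measurableSet hf0) hfi]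
  refine ((hf.isOpen_inter_preimage hU isOpen_Ioi).measure_pos μ ⟨x, hx, hfx⟩).trans_le
    (measure_mono ?_)
  exact fun y hy => ⟨(mem_Ioi.1 hy.2).ne', hy.1⟩

end General

section Multiplier

/-- The open quadrant `(-∞,0) × (0,∞)` over which the limit constant `c` is integrated. -/
def quadrant : Set (ℝ × ℝ) := {y | y.1 < 0 ∧ 0 < y.2}

/-- The difference quotient at `0`, with step `t`, of the character `t ↦ e^{2πiξt}`;
it is `0` (not `2πiξ`) at `t = 0`. -/
def expSlope (ξ t : ℝ) : ℂ :=
  (Complex.exp (((2 * Real.pi * ξ * t : ℝ) : ℂ) * Complex.I) - 1) / (t : ℂ)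

/-- The Fourier multiplier of the operator taking a function to the difference of its
difference quotients with steps `w = x.2` and `v = x.1`. -/
def symbol (ξ : ℝ) (x : ℝ × ℝ) : ℂ := expSlope ξ x.2 - expSlope ξ x.1

/-- The singular weight `|v|^{p-2} |w|^{p-2} |v-w|^p`. -/
def weight (p : ℝ) (x : ℝ × ℝ) : ℝ := |x.1| ^ (p - 2) * |x.2| ^ (p - 2) * |x.1 - x.2| ^ p

theorem quadrant_eq_prod : quadrant = Iio 0 ×ˢ Ioi 0 := by
  ext; simp [quadrant]

theorem isOpen_quadrant : IsOpen quadrant :=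
  quadrant_eq_prod ▸ isOpen_Iio.prod isOpen_Ioi

theorem rhoIntegrand_eq (p : ℝ) (k : ℤ) (x : ℝ × ℝ) :
    rhoIntegrand p k x = ‖symbol k x‖ ^ 2 / weight p x := rfl

theorem weight_nonneg (p : ℝ) (x : ℝ × ℝ) : 0 ≤ weight p x := by
  unfold weight; positivity

theorem weight_eq_of_mem_quadrant (p : ℝ) {x : ℝ × ℝ} (hx : x ∈ quadrant) :
    weight p x = (-x.1) ^ (p - 2) * x.2 ^ (p - 2) * (-x.1 + x.2) ^ p := by
  have hsub : |x.1 - x.2| = -x.1 + x.2 := by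
    rw [abs_of_neg (by linarith [hx.1, hx.2])]
    ring
  rw [weight, abs_of_neg hx.1, abs_of_pos hx.2, hsub]

theorem weight_pos (p : ℝ) {x : ℝ × ℝ} (hx : x ∈ quadrant) : 0 < weight p x := by
  have h1 : 0 < -x.1 := neg_pos.2 hx.1
  have h2 : 0 < x.2 := hx.2
  rw [weight_eq_of_mem_quadrant p hx]
  positivity

theorem rhoIntegrand_nonneg (p : ℝ) (k : ℤ) (x : ℝ × ℝ) : 0 ≤ rhoIntegrand p k x :=
  div_nonneg (by positivity) (weight_nonneg p x)

theorem measurable_weight (p : ℝ) : Measurable (weight p) := by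
  unfold weight; fun_prop

theorem measurable_rhoIntegrand (p : ℝ) (k : ℤ) : Measurable (rhoIntegrand p k) := by
  unfold rhoIntegrand; fun_prop

theorem norm_expSlope_le (ξ t : ℝ) : ‖expSlope ξ t‖ ≤ 2 * Real.pi * |ξ| := by
  have h := Real.norm_exp_I_mul_ofReal_sub_one_le (x := 2 * Real.pi * ξ * t)
  rw [mul_comm Complex.I] at h
  rw [expSlope, norm_div, Complex.norm_real]
  refine div_le_of_le_mul₀ (norm_nonneg _) (by positivity) (h.trans_eq ?_)
  simp [abs_of_pos Real.pi_pos]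

theorem norm_expSlope_sub_le (ξ : ℝ) {t : ℝ} (ht : t ≠ 0) :
    ‖expSlope ξ t - 2 * Real.pi * ξ * Complex.I‖ ≤ 8 * Real.pi ^ 2 * ξ ^ 2 * |t| := by
  have ht' : (t : ℂ) ≠ 0 := by exact_mod_cast ht
  have h := norm_exp_ofReal_mul_I_sub_one_sub_le (2 * Real.pi * ξ * t)
  have heq : expSlope ξ t - 2 * Real.pi * ξ * Complex.I =
      (Complex.exp (((2 * Real.pi * ξ * t : ℝ) : ℂ) * Complex.I) - 1
        - ((2 * Real.pi * ξ * t : ℝ) : ℂ) * Complex.I) / t := by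
    rw [expSlope]
    push_cast
    field_simp
  rw [heq, norm_div, Complex.norm_real, Real.norm_eq_abs, div_le_iff₀ (abs_pos.2 ht)]
  refine h.trans_eq ?_
  rw [mul_assoc _ |t|, abs_mul_abs_self]
  ring

theorem norm_symbol_le (ξ : ℝ) (x : ℝ × ℝ) : ‖symbol ξ x‖ ≤ 4 * Real.pi * |ξ| :=
  calc ‖symbol ξ x‖ ≤ 2 * Real.pi * |ξ| + 2 * Real.pi * |ξ| :=
        (norm_sub_le _ _).trans (add_le_add (norm_expSlope_le _ _) (norm_expSlope_le _ _))
    _ = 4 * Real.pi * |ξ| := by ring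

theorem norm_symbol_le_mul_add (ξ : ℝ) {x : ℝ × ℝ} (hx : x ∈ quadrant) :
    ‖symbol ξ x‖ ≤ 8 * Real.pi ^ 2 * ξ ^ 2 * (-x.1 + x.2) := by
  have h1 := norm_expSlope_sub_le ξ hx.1.ne
  have h2 := norm_expSlope_sub_le ξ hx.2.ne'
  rw [norm_sub_rev, abs_of_neg hx.1] at h1
  rw [abs_of_pos hx.2] at h2
  calc ‖symbol ξ x‖
      ≤ 8 * Real.pi ^ 2 * ξ ^ 2 * x.2 + 8 * Real.pi ^ 2 * ξ ^ 2 * -x.1 :=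
        (norm_sub_le_norm_sub_add_norm_sub _ _ _).trans (add_le_add h2 h1)
    _ = 8 * Real.pi ^ 2 * ξ ^ 2 * (-x.1 + x.2) := by ring

theorem div_weight_le {p a b α β s K : ℝ} (ha : 0 < a) (hb : 0 < b) (hK : 0 ≤ K)
    (hα : 0 ≤ α) (hβ : 0 ≤ β) (hs : s ≤ K * (a + b) ^ (p - α - β)) :
    s / (a ^ (p - 2) * b ^ (p - 2) * (a + b) ^ p)
      ≤ K * (a ^ (2 - p - α) * b ^ (2 - p - β)) := by
  have hab : 0 < a + b := by positivity
  rw [div_le_iff₀ (by positivity)]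
  have ha2 : a ^ (2 - p - α) * a ^ (p - 2) * a ^ α = 1 := by
    rw [← Real.rpow_add ha, ← Real.rpow_add ha]; ring_nf; exact Real.rpow_zero a
  have hb2 : b ^ (2 - p - β) * b ^ (p - 2) * b ^ β = 1 := by
    rw [← Real.rpow_add hb, ← Real.rpow_add hb]; ring_nf; exact Real.rpow_zero b
  have hp : (a + b) ^ (α + β) * (a + b) ^ (p - α - β) = (a + b) ^ p := by
    rw [← Real.rpow_add hab]; ring_nf
  calc s ≤ K * (a + b) ^ (p - α - β) := hs
    _ = K * (a ^ (2 - p - α) * b ^ (2 - p - β)) *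
          (a ^ (p - 2) * b ^ (p - 2) * (a ^ α * b ^ β * (a + b) ^ (p - α - β))) := by
        linear_combination (-K * (a + b) ^ (p - α - β)) *
          (b ^ (2 - p - β) * b ^ (p - 2) * b ^ β * ha2 + hb2)
    _ ≤ K * (a ^ (2 - p - α) * b ^ (2 - p - β)) *
          (a ^ (p - 2) * b ^ (p - 2) * ((a + b) ^ (α + β) * (a + b) ^ (p - α - β))) := by
        gcongr
        exact rpow_mul_rpow_le_add_rpow ha hb hα hβ
    _ = _ := by rw [hp]

/-- A majorant of `t⁻¹` up to exponents `±δ` that is integrable at both ends of `(0,∞)`;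
a product of two of them dominates the densities of the multipliers. -/
def tameSingularity (δ t : ℝ) : ℝ := min (t ^ (-1 + δ)) (t ^ (-1 - δ))

theorem div_weight_le_tameSingularity {p δ a b s K : ℝ} (hδ : 0 ≤ δ) (hp : 2 * δ ≤ 3 * p - 6)
    (hp' : 2 * δ ≤ 8 - 3 * p) (ha : 0 < a) (hb : 0 < b) (hK : 0 ≤ K) (hs : s ≤ K)
    (hs' : s ≤ K * (a + b) ^ 2) :
    s / (a ^ (p - 2) * b ^ (p - 2) * (a + b) ^ p)
      ≤ K * (tameSingularity δ a * tameSingularity δ b) := by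
  have hbound : ∀ ε ∈ Icc (-δ) δ, ∀ ε' ∈ Icc (-δ) δ,
      s / (a ^ (p - 2) * b ^ (p - 2) * (a + b) ^ p) ≤ K * (a ^ (-1 + ε) * b ^ (-1 + ε')) := by
    intro ε hε ε' hε'
    have h := le_mul_rpow_of_le_of_le_mul_sq (θ := p - (3 - p - ε) - (3 - p - ε'))
      (add_pos ha hb) hK ⟨by linarith [hε.1, hε'.1], by linarith [hε.2, hε'.2]⟩ hs hs'
    convert! div_weight_le ha hb hK (by linarith [hε.2]) (by linarith [hε'.2]) h using 4 <;> ring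
  have hmem : δ ∈ Icc (-δ) δ := ⟨by linarith, le_rfl⟩
  have hmem' : -δ ∈ Icc (-δ) δ := ⟨le_rfl, by linarith⟩
  unfold tameSingularity
  rcases min_choice (a ^ (-1 + δ)) (a ^ (-1 - δ)) with h | h <;>
    rcases min_choice (b ^ (-1 + δ)) (b ^ (-1 - δ)) with h' | h' <;> rw [h, h']
  exacts [hbound _ hmem _ hmem, hbound _ hmem _ hmem', hbound _ hmem' _ hmem,
    hbound _ hmem' _ hmem']

theorem rhoIntegrand_le {p δ : ℝ} (hδ : 0 ≤ δ) (hp : 2 * δ ≤ 3 * p - 6)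
    (hp' : 2 * δ ≤ 8 - 3 * p) (k : ℤ) {x : ℝ × ℝ} (hx : x ∈ quadrant) :
    rhoIntegrand p k x ≤ (8 * Real.pi ^ 2 * (k : ℝ) ^ 2) ^ 2 *
      (tameSingularity δ (-x.1) * tameSingularity δ x.2) := by
  have hk : |(k : ℝ)| ≤ (k : ℝ) ^ 2 := by
    exact_mod_cast Int.natCast_natAbs k ▸ Int.natAbs_le_self_sq k
  have hbound : ‖symbol k x‖ ≤ 8 * Real.pi ^ 2 * (k : ℝ) ^ 2 :=
    calc ‖symbol k x‖ ≤ 4 * Real.pi * |(k : ℝ)| := norm_symbol_le _ _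
      _ ≤ 8 * Real.pi ^ 2 * (k : ℝ) ^ 2 :=
        mul_le_mul (by nlinarith [Real.pi_gt_three]) hk (abs_nonneg _) (by positivity)
  rw [rhoIntegrand_eq, weight_eq_of_mem_quadrant p hx]
  refine div_weight_le_tameSingularity hδ hp hp' (neg_pos.2 hx.1) hx.2 (by positivity) ?_ ?_
  · gcongr
  · rw [← mul_pow]
    gcongr
    exact norm_symbol_le_mul_add _ hx

theorem integrableOn_rhoIntegrand {p : ℝ} (hp : p ∈ Ioo (2 : ℝ) (8 / 3)) (k : ℤ) :
    IntegrableOn (rhoIntegrand p k) quadrant := by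
  obtain ⟨δ, hδ, hδp⟩ : ∃ δ : ℝ, 0 < δ ∧ δ < min (3 * p - 6) (8 - 3 * p) / 2 :=
    exists_between (half_pos (lt_min (by linarith [hp.1]) (by linarith [hp.2])))
  have hδ1 : 2 * δ ≤ 3 * p - 6 := by linarith [min_le_left (3 * p - 6) (8 - 3 * p)]
  have hδ2 : 2 * δ ≤ 8 - 3 * p := by linarith [min_le_right (3 * p - 6) (8 - 3 * p)]
  have h2 : IntegrableOn (tameSingularity δ) (Ioi 0) :=
    integrableOn_min_rpow_Ioi (by linarith) (by linarith)
  have h1 : IntegrableOn (fun v => tameSingularity δ (-v)) (Iio 0) := by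
    simpa using h2.comp_neg
  have h := (Integrable.mul_prod h1 h2).const_mul ((8 * Real.pi ^ 2 * (k : ℝ) ^ 2) ^ 2)
  rw [Measure.prod_restrict, ← quadrant_eq_prod] at h
  refine h.mono' (measurable_rhoIntegrand p k).aestronglyMeasurable
    (ae_restrict_of_forall_mem isOpen_quadrant.measurableSet fun x hx => ?_)
  rw [Real.norm_of_nonneg (rhoIntegrand_nonneg _ _ _)]
  exact rhoIntegrand_le hδ.le hδ1 hδ2 k hx

theorem expSlope_mul (c ξ t : ℝ) : expSlope (c * ξ) t = c * expSlope ξ (c * t) := by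
  rcases eq_or_ne c 0 with rfl | hc
  · simp [expSlope]
  have hc' : (c : ℂ) ≠ 0 := by exact_mod_cast hc
  rw [expSlope, expSlope, show 2 * Real.pi * ξ * (c * t) = 2 * Real.pi * (c * ξ) * t by ring,
    Complex.ofReal_mul c t, mul_div_mul_left _ _ hc' |>.symm, mul_div_assoc]

theorem expSlope_neg (ξ t : ℝ) : expSlope (-ξ) t = (starRingEnd ℂ) (expSlope ξ t) := by
  rw [expSlope, expSlope, map_div₀, map_sub, ← Complex.exp_conj, map_mul, map_one,
    Complex.conj_I, Complex.conj_ofReal, Complex.conj_ofReal]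
  push_cast
  ring_nf

theorem norm_symbol_neg (ξ : ℝ) (x : ℝ × ℝ) : ‖symbol (-ξ) x‖ = ‖symbol ξ x‖ := by
  rw [symbol, expSlope_neg, expSlope_neg, ← map_sub, RCLike.norm_conj, symbol]

theorem norm_symbol_eq (ξ : ℝ) (x : ℝ × ℝ) :
    ‖symbol ξ x‖ = |ξ| * ‖symbol 1 (|ξ| • x)‖ := by
  have habs : ‖symbol ξ x‖ = ‖symbol (|ξ| * 1) x‖ := by
    rcases abs_choice ξ with h | h <;> rw [h, mul_one]
    exact (norm_symbol_neg ξ x).symm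
  rw [habs, symbol, expSlope_mul, expSlope_mul, ← mul_sub, norm_mul, Complex.norm_real,
    Real.norm_of_nonneg (abs_nonneg ξ), symbol]
  rfl

theorem weight_smul (p : ℝ) {r : ℝ} (hr : 0 < r) (x : ℝ × ℝ) :
    weight p (r • x) = r ^ (3 * p - 4) * weight p x := by
  simp only [weight, Prod.smul_fst, Prod.smul_snd, smul_eq_mul, ← mul_sub, abs_mul,
    abs_of_pos hr]
  rw [Real.mul_rpow hr.le (abs_nonneg _), Real.mul_rpow hr.le (abs_nonneg _),
    Real.mul_rpow hr.le (abs_nonneg _),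
    show 3 * p - 4 = (p - 2) + (p - 2) + p by ring, Real.rpow_add hr, Real.rpow_add hr]
  ring

theorem rhoIntegrand_eq_mul_rhoIntegrand_one (p : ℝ) {k : ℤ} (hk : k ≠ 0) (x : ℝ × ℝ) :
    rhoIntegrand p k x =
      |(k : ℝ)| ^ (3 * p - 4) * (|(k : ℝ)| ^ 2 * rhoIntegrand p 1 (|(k : ℝ)| • x)) := by
  have hr : 0 < |(k : ℝ)| := abs_pos.2 (by exact_mod_cast hk)
  have := (Real.rpow_pos_of_pos hr (3 * p - 4)).ne'
  rw [rhoIntegrand_eq, rhoIntegrand_eq, weight_smul p hr, norm_symbol_eq, Int.cast_one]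
  field_simp

end Multiplier

section Asymptotics

open scoped Pointwise

variable {p : ℝ}

theorem aecover_smul_of_mem_nhdsWithin {E : Type*} [AddCommGroup E] [Module ℝ E]
    [TopologicalSpace E] [T1Space E] [ContinuousSMul ℝ E] [MeasurableSpace E] [BorelSpace E]
    {μ : Measure E} {C s : Set E} (hC : MeasurableSet C)
    (hcone : ∀ r : ℝ, 0 < r → ∀ x ∈ C, r • x ∈ C) (hs : MeasurableSet s) (hs0 : s ∈ 𝓝[C] 0) :
    AECover (μ.restrict C) atTop fun r : ℝ => r • s where
  measurableSet := hs.const_smul₀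
  ae_eventually_mem := by
    refine ae_restrict_of_forall_mem hC fun x hx => ?_
    have hx0 : Tendsto (fun r : ℝ => r⁻¹ • x) atTop (𝓝[C] 0) := by
      refine tendsto_nhdsWithin_iff.2 ⟨?_, ?_⟩
      · simpa only [zero_smul] using (tendsto_inv_atTop_zero (𝕜 := ℝ)).smul_const x
      · filter_upwards [eventually_gt_atTop 0] with r hr using hcone _ (inv_pos.2 hr) x hx
    filter_upwards [hx0 hs0, eventually_ne_atTop 0] with r hr hr0
    exact (mem_smul_set_iff_inv_smul_mem₀ hr0 _ _).2 hr

theorem smul_mem_quadrant {r : ℝ} (hr : 0 < r) {x : ℝ × ℝ} (hx : x ∈ quadrant) :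
    r • x ∈ quadrant :=
  ⟨mul_neg_of_pos_of_neg hr hx.1, mul_pos hr hx.2⟩

theorem domainD_subset_quadrant : domainD ⊆ quadrant := fun _ hx => ⟨hx.1.2, hx.2.1.1⟩

theorem smul_domainD_subset_quadrant {r : ℝ} (hr : 0 < r) : r • domainD ⊆ quadrant :=
  smul_set_subset_iff.2 fun _ hx => smul_mem_quadrant hr (domainD_subset_quadrant hx)

theorem measurableSet_domainD : MeasurableSet domainD := by
  unfold domainD
  measurability

theorem domainD_mem_nhdsWithin_quadrant : domainD ∈ 𝓝[quadrant] (0 : ℝ × ℝ) := by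
  filter_upwards [self_mem_nhdsWithin, nhdsWithin_le_nhds
    (Metric.ball_mem_nhds (0 : ℝ × ℝ) (ε := 1 / 4) (by norm_num))] with x hx hball
  obtain ⟨h1, h2⟩ : |x.1| < 1 / 4 ∧ |x.2| < 1 / 4 := by
    simpa [Prod.norm_def] using mem_ball_zero_iff.1 hball
  rw [abs_lt] at h1 h2
  exact ⟨⟨by linarith, hx.1⟩, ⟨hx.2, by linarith⟩, by linarith, by linarith⟩

theorem climit_eq (p : ℝ) : climit p = ∫ x in quadrant, rhoIntegrand p 1 x := rfl

theorem climit_nonneg (p : ℝ) : 0 ≤ climit p :=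
  integral_nonneg fun _ => rhoIntegrand_nonneg _ _ _

theorem continuousOn_rhoIntegrand (p : ℝ) (k : ℤ) :
    ContinuousOn (rhoIntegrand p k) quadrant := by
  have h1 : ∀ x ∈ quadrant, x.1 ≠ 0 := fun x hx => hx.1.ne
  have h2 : ∀ x ∈ quadrant, x.2 ≠ 0 := fun x hx => hx.2.ne'
  have h12 : ∀ x ∈ quadrant, |x.1 - x.2| ≠ 0 := fun x hx =>
    abs_ne_zero.2 (by linarith [hx.1, hx.2] : x.1 - x.2 < 0).ne
  have hw : ContinuousOn (weight p) quadrant := by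
    refine ((ContinuousOn.rpow_const (by fun_prop) fun x hx => ?_).mul
      (ContinuousOn.rpow_const (by fun_prop) fun x hx => ?_)).mul
      (ContinuousOn.rpow_const (by fun_prop) fun x hx => ?_)
    exacts [.inl (abs_ne_zero.2 (h1 x hx)), .inl (abs_ne_zero.2 (h2 x hx)), .inl (h12 x hx)]
  refine ContinuousOn.div ?_ hw fun x hx => (weight_pos p hx).ne'
  refine ((ContinuousOn.div (by fun_prop) (by fun_prop) fun x hx => ?_).sub
    (ContinuousOn.div (by fun_prop) (by fun_prop) fun x hx => ?_)).norm.pow 2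
  exacts [Complex.ofReal_ne_zero.2 (h2 x hx), Complex.ofReal_ne_zero.2 (h1 x hx)]

theorem symbol_one_neg_half_half : symbol 1 (-(1 / 2), 1 / 2) = -8 := by
  have h1 : ((2 * Real.pi * 1 * (1 / 2) : ℝ) : ℂ) * Complex.I = Real.pi * Complex.I := by
    push_cast; ring
  have h2 : ((2 * Real.pi * 1 * -(1 / 2) : ℝ) : ℂ) * Complex.I = -(Real.pi * Complex.I) := by
    push_cast; ring
  rw [symbol, expSlope, expSlope, h1, h2, Complex.exp_neg, Complex.exp_pi_mul_I]
  norm_num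

theorem climit_pos (hp : p ∈ Ioo (2 : ℝ) (8 / 3)) : 0 < climit p := by
  have hmem : ((-(1 / 2), 1 / 2) : ℝ × ℝ) ∈ quadrant := by constructor <;> norm_num
  refine setIntegral_pos_of_continuousOn isOpen_quadrant (continuousOn_rhoIntegrand p 1)
    (integrableOn_rhoIntegrand hp 1) (fun x _ => rhoIntegrand_nonneg p 1 x) hmem ?_
  rw [rhoIntegrand_eq, Int.cast_one, symbol_one_neg_half_half]
  exact div_pos (by norm_num) (weight_pos p hmem)

theorem rhoCoef_nonneg (p : ℝ) (k : ℤ) : 0 ≤ rhoCoef p k :=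
  integral_nonneg fun _ => rhoIntegrand_nonneg _ _ _

theorem rhoCoef_eq (p : ℝ) {k : ℤ} (hk : k ≠ 0) :
    rhoCoef p k = |(k : ℝ)| ^ (3 * p - 4) *
      ∫ y in |(k : ℝ)| • domainD, rhoIntegrand p 1 y := by
  have hr : 0 < |(k : ℝ)| := abs_pos.2 (by exact_mod_cast hk)
  have h := Measure.setIntegral_comp_smul_of_pos volume (rhoIntegrand p 1) domainD hr
  simp only [Module.finrank_prod, Module.finrank_self, smul_eq_mul] at h
  simp only [rhoCoef, rhoIntegrand_eq_mul_rhoIntegrand_one p hk, integral_const_mul]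
  rw [h]
  field_simp

theorem rhoCoef_le (hp : p ∈ Ioo (2 : ℝ) (8 / 3)) (k : ℤ) :
    rhoCoef p k ≤ climit p * (1 + (k : ℝ) ^ 2) ^ (3 * p / 2 - 2) := by
  rcases eq_or_ne k 0 with rfl | hk
  · simp [rhoCoef, rhoIntegrand, climit_nonneg]
  have hr : 0 < |(k : ℝ)| := abs_pos.2 (by exact_mod_cast hk)
  have hle : ∫ y in |(k : ℝ)| • domainD, rhoIntegrand p 1 y ≤ climit p :=
    setIntegral_mono_set (integrableOn_rhoIntegrand hp 1)
      (Eventually.of_forall fun _ => rhoIntegrand_nonneg _ _ _)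
      (smul_domainD_subset_quadrant hr).eventuallyLE
  have hpow : |(k : ℝ)| ^ (3 * p - 4) ≤ (1 + (k : ℝ) ^ 2) ^ (3 * p / 2 - 2) := by
    rw [show 3 * p - 4 = (2 : ℕ) * (3 * p / 2 - 2) by push_cast; ring,
      Real.rpow_natCast_mul hr.le, sq_abs]
    exact Real.rpow_le_rpow (by positivity) (by linarith) (by linarith [hp.1])
  rw [rhoCoef_eq p hk, mul_comm]
  exact mul_le_mul hle hpow (by positivity) (climit_nonneg p)

theorem summable_rhoCoef_mul (hp : p ∈ Ioo (2 : ℝ) (8 / 3)) {s : ℤ → ℝ} (hs : ∀ k, 0 ≤ s k)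
    (h : Summable fun k : ℤ => (1 + (k : ℝ) ^ 2) ^ (3 * p / 2 - 2) * s k) :
    Summable fun k => rhoCoef p k * s k := by
  refine (h.mul_left (climit p)).of_nonneg_of_le
    (fun k => mul_nonneg (rhoCoef_nonneg p k) (hs k)) fun k => ?_
  rw [← mul_assoc]
  exact mul_le_mul_of_nonneg_right (rhoCoef_le hp k) (hs k)

theorem tendsto_setIntegral_smul_domainD (hp : p ∈ Ioo (2 : ℝ) (8 / 3)) :
    Tendsto (fun r : ℝ => ∫ y in r • domainD, rhoIntegrand p 1 y) atTop (𝓝 (climit p)) := by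
  have hcover : AECover (volume.restrict quadrant) atTop fun r : ℝ => r • domainD :=
    aecover_smul_of_mem_nhdsWithin isOpen_quadrant.measurableSet
      (fun _ hr _ hx => smul_mem_quadrant hr hx) measurableSet_domainD
      domainD_mem_nhdsWithin_quadrant
  rw [climit_eq]
  refine (hcover.integral_tendsto_of_countably_generated
    (integrableOn_rhoIntegrand hp 1)).congr' ?_
  filter_upwards [eventually_gt_atTop 0] with r hr
  rw [Measure.restrict_restrict (hcover.measurableSet r),
    inter_eq_left.2 (smul_domainD_subset_quadrant hr)]

theorem tendsto_rhoCoef_div (hp : p ∈ Ioo (2 : ℝ) (8 / 3)) :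
    Tendsto (fun k : ℤ => rhoCoef p k / |(k : ℝ)| ^ (3 * p - 4)) cofinite (𝓝 (climit p)) := by
  have habs : Tendsto (fun k : ℤ => |(k : ℝ)|) cofinite atTop := by
    rw [Int.cofinite_eq, tendsto_sup]
    exact ⟨tendsto_abs_atBot_atTop.comp (tendsto_intCast_atBot_iff.2 tendsto_id),
      tendsto_abs_atTop_atTop.comp tendsto_intCast_atTop_atTop⟩
  refine ((tendsto_setIntegral_smul_domainD hp).comp habs).congr' ?_
  filter_upwards [eventually_cofinite_ne 0] with k hk
  have hr : 0 < |(k : ℝ)| := abs_pos.2 (by exact_mod_cast hk)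
  rw [rhoCoef_eq p hk, Function.comp_apply, mul_div_cancel_left₀]
  exact (Real.rpow_pos_of_pos hr _).ne'

end Asymptotics

section FourierCoeff

open AddCircle

variable {T : ℝ} [hT : Fact (0 < T)]

section NormedSpace

variable {E : Type*} [NormedAddCommGroup E]

theorem memLp_haarAddCircle_of_memLp_comp_coe {F : AddCircle T → E} {q : ℝ≥0∞} {t : ℝ}
    (hF : MemLp (fun x : ℝ => F x) q (volume.restrict (Ioc t (t + T)))) :
    MemLp F q haarAddCircle := by
  have hcoe : MeasurePreserving (fun u => (equivIoc T t u : ℝ)) (volume : Measure (AddCircle T))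
      (volume.restrict (Ioc t (t + T))) :=
    (measurePreserving_subtype_coe measurableSet_Ioc).comp (measurePreserving_equivIoc T)
  have h := (hF.comp_measurePreserving hcoe).smul_measure (c := (ENNReal.ofReal T)⁻¹)
    (by simp [hT.out])
  rw [volume_eq_smul_haarAddCircle, smul_smul,
    ENNReal.inv_mul_cancel (by simp [hT.out]) ENNReal.ofReal_ne_top, one_smul] at h
  exact h.ae_eq (Eventually.of_forall fun u => congrArg F coe_equivIoc)

variable [NormedSpace ℂ E]

theorem fourierCoeff_sub {F G : AddCircle T → E} (hF : Integrable F haarAddCircle)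
    (hG : Integrable G haarAddCircle) : fourierCoeff (F - G) = fourierCoeff F - fourierCoeff G := by
  ext k
  simpa only [fourierCoeff, Pi.sub_apply, smul_sub] using
    integral_sub (hF.fourier_smul _) (hG.fourier_smul _)

theorem fourierCoeff_comp_add_right (F : AddCircle T → E) (s : AddCircle T) (k : ℤ) :
    fourierCoeff (fun u => F (u + s)) k = fourier k s • fourierCoeff F k := by
  have hfourier (u : AddCircle T) : fourier (-k) u = fourier k s * fourier (-k) (u + s) := by
    simp only [fourier_apply, neg_smul, smul_add, toCircle_add, toCircle_neg, Circle.coe_mul]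
    rw [mul_left_comm, ← Circle.coe_mul, mul_inv_cancel, Circle.coe_one, mul_one]
  calc fourierCoeff (fun u => F (u + s)) k
      = ∫ u, fourier k s • (fourier (-k) (u + s) • F (u + s)) ∂haarAddCircle :=
        integral_congr_ae (Eventually.of_forall fun u => by simp only [hfourier u, mul_smul])
    _ = fourier k s • ∫ u, fourier (-k) (u + s) • F (u + s) ∂haarAddCircle :=
        integral_smul _ _
    _ = fourier k s • fourierCoeff F k :=
        congrArg _ (integral_add_right_eq_self (fun u => fourier (-k) u • F u) s)

theorem fourierCoeff_clm_comp {E' : Type*} [NormedAddCommGroup E'] [NormedSpace ℂ E']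
    [CompleteSpace E] [CompleteSpace E'] (L : E →L[ℂ] E') {F : AddCircle T → E}
    (hF : Integrable F haarAddCircle) (k : ℤ) :
    fourierCoeff (fun u => L (F u)) k = L (fourierCoeff F k) := by
  simpa only [fourierCoeff, map_smul] using L.integral_comp_comm (hF.fourier_smul (-k))

end NormedSpace

theorem hasSum_inner_fourierCoeff_complex {F G : AddCircle T → ℂ} (hF : MemLp F 2 haarAddCircle)
    (hG : MemLp G 2 haarAddCircle) :
    HasSum (fun k : ℤ => inner ℂ (fourierCoeff F k) (fourierCoeff G k))
      (∫ u, inner ℂ (F u) (G u) ∂haarAddCircle) := by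
  have h := fourierBasis.hasSum_inner_mul_inner (hF.toLp F) (hG.toLp G)
  convert! h using 1
  · ext k
    rw [← inner_conj_symm (hF.toLp F), ← fourierBasis.repr_apply_apply,
      ← fourierBasis.repr_apply_apply, fourierBasis_repr, fourierBasis_repr,
      fourierCoeff_congr_ae hF.coeFn_toLp, fourierCoeff_congr_ae hG.coeFn_toLp,
      RCLike.inner_apply']
  · rw [L2.inner_def]
    refine integral_congr_ae ?_
    filter_upwards [hF.coeFn_toLp, hG.coeFn_toLp] with u h1 h2
    rw [h1, h2]

theorem hasSum_inner_fourierCoeff {ι : Type*} [Fintype ι]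
    {F G : AddCircle T → EuclideanSpace ℂ ι} (hF : MemLp F 2 haarAddCircle)
    (hG : MemLp G 2 haarAddCircle) :
    HasSum (fun k : ℤ => inner ℂ (fourierCoeff F k) (fourierCoeff G k))
      (∫ u, inner ℂ (F u) (G u) ∂haarAddCircle) := by
  have hcoord {H : AddCircle T → EuclideanSpace ℂ ι} (hH : MemLp H 2 haarAddCircle) (j : ι) :
      MemLp (fun u => H u j) 2 haarAddCircle :=
    (EuclideanSpace.proj (𝕜 := ℂ) j).comp_memLp' hH
  have hcoeff {H : AddCircle T → EuclideanSpace ℂ ι} (hH : MemLp H 2 haarAddCircle) (k : ℤ)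
      (j : ι) : fourierCoeff (fun u => H u j) k = fourierCoeff H k j :=
    fourierCoeff_clm_comp (EuclideanSpace.proj j) (hH.integrable one_le_two) k
  have h := hasSum_sum fun j (_ : j ∈ Finset.univ) =>
    hasSum_inner_fourierCoeff_complex (hcoord hF j) (hcoord hG j)
  simp only [PiLp.inner_apply]
  rw [integral_finsetSum _ fun j _ => integrable_inner_of_memLp_two (hcoord hF j) (hcoord hG j)]
  simpa only [hcoeff hF, hcoeff hG] using h

theorem hasSum_norm_sq_fourierCoeff {ι : Type*} [Fintype ι] {F : AddCircle T → EuclideanSpace ℂ ι}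
    (hF : MemLp F 2 haarAddCircle) :
    HasSum (fun k : ℤ => ‖fourierCoeff F k‖ ^ 2) (∫ u, ‖F u‖ ^ 2 ∂haarAddCircle) := by
  have h := hasSum_inner_fourierCoeff hF hF
  simp only [inner_self_eq_norm_sq_to_K, ← RCLike.ofReal_pow] at h
  rw [integral_ofReal] at h
  exact (RCLike.hasSum_ofReal ℂ).1 h

end FourierCoeff

section DiffQuot

open AddCircle

variable {E : Type*} [NormedAddCommGroup E] [NormedSpace ℂ E]

/-- The difference quotient `(F(u+t) - F(u)) / t` of a function on the circle; it is `0` when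
`t = 0`. -/
def diffQuot (F : UnitAddCircle → E) (t : ℝ) (u : UnitAddCircle) : E :=
  (t : ℂ)⁻¹ • (F (u + t) - F u)

/-- The difference of the difference quotients with steps `w = x.2` and `v = x.1`, the building
block of `Q^{(p)}`. -/
def diffQuotSub (F : UnitAddCircle → E) (x : ℝ × ℝ) (u : UnitAddCircle) : E :=
  diffQuot F x.2 u - diffQuot F x.1 u

theorem memLp_diffQuot {F : UnitAddCircle → E} {q : ℝ≥0∞} (hF : MemLp F q haarAddCircle) (t : ℝ) :
    MemLp (diffQuot F t) q haarAddCircle :=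
  ((hF.comp_measurePreserving (measurePreserving_add_right _ (t : UnitAddCircle))).sub
    hF).const_smul _

theorem memLp_diffQuotSub {F : UnitAddCircle → E} {q : ℝ≥0∞} (hF : MemLp F q haarAddCircle)
    (x : ℝ × ℝ) : MemLp (diffQuotSub F x) q haarAddCircle :=
  (memLp_diffQuot hF x.2).sub (memLp_diffQuot hF x.1)

theorem fourierCoeff_diffQuot {F : UnitAddCircle → E} (hF : Integrable F haarAddCircle) (t : ℝ)
    (k : ℤ) : fourierCoeff (diffQuot F t) k = expSlope k t • fourierCoeff F k := by
  have hslope : expSlope k t = (t : ℂ)⁻¹ * (fourier k (t : UnitAddCircle) - 1) := by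
    rw [fourier_coe_apply, expSlope, div_eq_inv_mul]
    push_cast
    ring_nf
  calc fourierCoeff (diffQuot F t) k
      = (t : ℂ)⁻¹ • fourierCoeff ((fun u => F (u + t)) - F) k := fourierCoeff.const_smul _ _ _
    _ = (t : ℂ)⁻¹ • (fourier k (t : UnitAddCircle) • fourierCoeff F k - fourierCoeff F k) := by
        rw [fourierCoeff_sub (hF.comp_add_right _) hF, Pi.sub_apply, fourierCoeff_comp_add_right]
    _ = expSlope k t • fourierCoeff F k := by
        rw [hslope, mul_smul, sub_smul, one_smul]

theorem fourierCoeff_diffQuotSub {F : UnitAddCircle → E} (hF : MemLp F 1 haarAddCircle)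
    (x : ℝ × ℝ) (k : ℤ) : fourierCoeff (diffQuotSub F x) k = symbol k x • fourierCoeff F k := by
  have hF' := memLp_one_iff_integrable.1 hF
  have hint (t : ℝ) := memLp_one_iff_integrable.1 (memLp_diffQuot hF t)
  calc fourierCoeff (diffQuotSub F x) k
      = fourierCoeff (diffQuot F x.2) k - fourierCoeff (diffQuot F x.1) k :=
        congrFun (fourierCoeff_sub (hint x.2) (hint x.1)) k
    _ = symbol k x • fourierCoeff F k := by
        rw [fourierCoeff_diffQuot hF', fourierCoeff_diffQuot hF', ← sub_smul, symbol]

theorem aestronglyMeasurable_diffQuotSub {F : UnitAddCircle → E}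
    (hF : AEStronglyMeasurable F haarAddCircle) (ν : Measure (ℝ × ℝ)) [SFinite ν] :
    AEStronglyMeasurable (fun z : UnitAddCircle × (ℝ × ℝ) => diffQuotSub F z.2 z.1)
      (haarAddCircle.prod ν) := by
  have hshift {φ : ℝ × ℝ → ℝ} (hφ : Measurable φ) : AEStronglyMeasurable
      (fun z : UnitAddCircle × (ℝ × ℝ) => F (z.1 + φ z.2)) (haarAddCircle.prod ν) := by
    refine hF.comp_quasiMeasurePreserving
      (f := fun z : UnitAddCircle × (ℝ × ℝ) => z.1 + (φ z.2 : UnitAddCircle))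
      (QuasiMeasurePreserving.prod_of_left ?_ (Eventually.of_forall fun x =>
        (measurePreserving_add_right _ (φ x : UnitAddCircle)).quasiMeasurePreserving))
    exact measurable_fst.add (AddCircle.measurable_mk'.comp (hφ.comp measurable_snd))
  have hquot {φ : ℝ × ℝ → ℝ} (hφ : Measurable φ) : AEStronglyMeasurable
      (fun z : UnitAddCircle × (ℝ × ℝ) => diffQuot F (φ z.2) z.1) (haarAddCircle.prod ν) := by
    have hinv : Measurable fun z : UnitAddCircle × (ℝ × ℝ) => ((φ z.2 : ℝ) : ℂ)⁻¹ := by fun_prop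
    exact hinv.aestronglyMeasurable.smul ((hshift hφ).sub hF.comp_fst)
  exact (hquot measurable_snd).sub (hquot measurable_fst)

end DiffQuot

section Diagonalization

open AddCircle

variable {ι : Type*} [Fintype ι] {F G : UnitAddCircle → EuclideanSpace ℂ ι}
  {p : ℝ} {ν : Measure (ℝ × ℝ)}

/-- The sesquilinear density on `ℝ/ℤ × ℝ²` whose integral over `ℝ/ℤ × D` is `Q^{(p)}`. -/
def density (p : ℝ) (F G : UnitAddCircle → EuclideanSpace ℂ ι)
    (z : UnitAddCircle × (ℝ × ℝ)) : ℂ :=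
  inner ℂ (diffQuotSub F z.2 z.1) (diffQuotSub G z.2 z.1) / (weight p z.2 : ℂ)

theorem hasSum_rhoIntegrand_mul_norm_sq (p : ℝ) (hF : MemLp F 2 haarAddCircle) (x : ℝ × ℝ) :
    HasSum (fun k : ℤ => rhoIntegrand p k x * ‖fourierCoeff F k‖ ^ 2)
      (∫ u, ‖diffQuotSub F x u‖ ^ 2 / weight p x ∂haarAddCircle) := by
  have h := (hasSum_norm_sq_fourierCoeff (memLp_diffQuotSub hF x)).div_const (weight p x)
  rw [← integral_div] at h
  refine h.congr_fun fun k => ?_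
  rw [fourierCoeff_diffQuotSub (hF.mono_exponent one_le_two), rhoIntegrand_eq, norm_smul]
  ring

theorem hasSum_rhoIntegrand_mul_inner (p : ℝ) (hF : MemLp F 2 haarAddCircle)
    (hG : MemLp G 2 haarAddCircle) (x : ℝ × ℝ) :
    HasSum (fun k : ℤ => (rhoIntegrand p k x : ℂ) * inner ℂ (fourierCoeff F k) (fourierCoeff G k))
      (∫ u, density p F G (u, x) ∂haarAddCircle) := by
  have h := (hasSum_inner_fourierCoeff (memLp_diffQuotSub hF x)
    (memLp_diffQuotSub hG x)).div_const (weight p x : ℂ)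
  rw [← integral_div] at h
  refine h.congr_fun fun k => ?_
  have hsymbol : ((‖symbol k x‖ ^ 2 : ℝ) : ℂ) = (starRingEnd ℂ) (symbol k x) * symbol k x := by
    rw [RCLike.conj_mul]
    norm_cast
  rw [fourierCoeff_diffQuotSub (hF.mono_exponent one_le_two),
    fourierCoeff_diffQuotSub (hG.mono_exponent one_le_two), inner_smul_left, inner_smul_right,
    rhoIntegrand_eq, Complex.ofReal_div, hsymbol]
  ring

variable [SFinite ν]

theorem integrable_norm_sq_diffQuotSub_div_weight (hF : MemLp F 2 haarAddCircle)
    (hρ : ∀ k, Integrable (rhoIntegrand p k) ν)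
    (hsF : Summable fun k : ℤ => (∫ x, rhoIntegrand p k x ∂ν) * ‖fourierCoeff F k‖ ^ 2) :
    Integrable (fun z : UnitAddCircle × (ℝ × ℝ) => ‖diffQuotSub F z.2 z.1‖ ^ 2 / weight p z.2)
      (haarAddCircle.prod ν) := by
  have hmeas : AEStronglyMeasurable
      (fun z : UnitAddCircle × (ℝ × ℝ) => ‖diffQuotSub F z.2 z.1‖ ^ 2 / weight p z.2)
      (haarAddCircle.prod ν) :=
    (((aestronglyMeasurable_diffQuotSub hF.1 ν).norm.aemeasurable.pow_const 2).div
      ((measurable_weight p).comp measurable_snd).aemeasurable).aestronglyMeasurable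
  have hnorm (x : ℝ × ℝ) (u : UnitAddCircle) : ‖‖diffQuotSub F x u‖ ^ 2 / weight p x‖
      = ‖diffQuotSub F x u‖ ^ 2 / weight p x :=
    Real.norm_of_nonneg (div_nonneg (sq_nonneg _) (weight_nonneg p x))
  rw [integrable_prod_iff' hmeas]
  refine ⟨Eventually.of_forall fun x => ?_, ?_⟩
  · exact ((memLp_diffQuotSub hF x).integrable_norm_pow two_ne_zero).div_const (weight p x)
  · simp only [hnorm]
    refine integrable_of_hasSum (fun k => (hρ k).mul_const (‖fourierCoeff F k‖ ^ 2)) ?_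
      (Eventually.of_forall (hasSum_rhoIntegrand_mul_norm_sq p hF))
    simpa only [norm_mul, norm_pow, norm_norm, Real.norm_of_nonneg (rhoIntegrand_nonneg p _ _),
      integral_mul_const] using hsF

theorem integrable_density (hF : MemLp F 2 haarAddCircle) (hG : MemLp G 2 haarAddCircle)
    (hρ : ∀ k, Integrable (rhoIntegrand p k) ν)
    (hsF : Summable fun k : ℤ => (∫ x, rhoIntegrand p k x ∂ν) * ‖fourierCoeff F k‖ ^ 2)
    (hsG : Summable fun k : ℤ => (∫ x, rhoIntegrand p k x ∂ν) * ‖fourierCoeff G k‖ ^ 2) :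
    Integrable (density p F G) (haarAddCircle.prod ν) := by
  have hweight : Measurable fun z : UnitAddCircle × (ℝ × ℝ) => (weight p z.2 : ℂ) :=
    Complex.measurable_ofReal.comp ((measurable_weight p).comp measurable_snd)
  have hmeas : AEStronglyMeasurable (density p F G) (haarAddCircle.prod ν) :=
    (((aestronglyMeasurable_diffQuotSub hF.1 ν).inner
      (aestronglyMeasurable_diffQuotSub hG.1 ν)).aemeasurable.div
        hweight.aemeasurable).aestronglyMeasurable
  refine ((integrable_norm_sq_diffQuotSub_div_weight hF hρ hsF).add
    (integrable_norm_sq_diffQuotSub_div_weight hG hρ hsG)).mono' hmeas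
    (Eventually.of_forall fun z => ?_)
  rw [density, norm_div, Complex.norm_real, Real.norm_of_nonneg (weight_nonneg p z.2),
    Pi.add_apply, ← add_div]
  refine div_le_div_of_nonneg_right ((norm_inner_le_norm _ _).trans ?_) (weight_nonneg p z.2)
  nlinarith [two_mul_le_add_sq ‖diffQuotSub F z.2 z.1‖ ‖diffQuotSub G z.2 z.1‖,
    sq_nonneg ‖diffQuotSub F z.2 z.1‖, sq_nonneg ‖diffQuotSub G z.2 z.1‖]

theorem hasSum_integral_density (hF : MemLp F 2 haarAddCircle) (hG : MemLp G 2 haarAddCircle)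
    (hρ : ∀ k, Integrable (rhoIntegrand p k) ν)
    (hsF : Summable fun k : ℤ => (∫ x, rhoIntegrand p k x ∂ν) * ‖fourierCoeff F k‖ ^ 2)
    (hsG : Summable fun k : ℤ => (∫ x, rhoIntegrand p k x ∂ν) * ‖fourierCoeff G k‖ ^ 2) :
    HasSum (fun k : ℤ => ((∫ x, rhoIntegrand p k x ∂ν : ℝ) : ℂ) *
        inner ℂ (fourierCoeff F k) (fourierCoeff G k))
      (∫ z, density p F G z ∂haarAddCircle.prod ν) := by
  have hint (k : ℤ) : Integrable (fun x => (rhoIntegrand p k x : ℂ) *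
      inner ℂ (fourierCoeff F k) (fourierCoeff G k)) ν := (hρ k).ofReal.mul_const _
  have hρ0 (k : ℤ) : 0 ≤ ∫ x, rhoIntegrand p k x ∂ν :=
    integral_nonneg (rhoIntegrand_nonneg p k)
  have hsum : Summable fun k : ℤ => ∫ x, ‖(rhoIntegrand p k x : ℂ) *
      inner ℂ (fourierCoeff F k) (fourierCoeff G k)‖ ∂ν := by
    simp only [norm_mul, Complex.norm_real, Real.norm_of_nonneg (rhoIntegrand_nonneg p _ _),
      integral_mul_const]
    refine (hsF.add hsG).of_nonneg_of_le (fun k => mul_nonneg (hρ0 k) (norm_nonneg _)) fun k => ?_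
    rw [← mul_add]
    refine mul_le_mul_of_nonneg_left ((norm_inner_le_norm _ _).trans ?_) (hρ0 k)
    nlinarith [two_mul_le_add_sq ‖fourierCoeff F k‖ ‖fourierCoeff G k‖,
      sq_nonneg ‖fourierCoeff F k‖, sq_nonneg ‖fourierCoeff G k‖]
  rw [integral_prod_symm _ (integrable_density hF hG hρ hsF hsG)]
  simp only [← (hasSum_rhoIntegrand_mul_inner p hF hG _).tsum_eq]
  refine (hasSum_integral_of_summable_integral_norm hint hsum).congr_fun fun k => ?_
  rw [integral_mul_const, integral_complex_ofReal]

end Diagonalization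

section PeriodicFunction

open AddCircle

section Complexify

variable {ι : Type*} [Fintype ι]

/-- The inclusion `ℝⁿ → ℂⁿ`, as a real linear isometry. -/
def complexify : EuclideanSpace ℝ ι →ₗᵢ[ℝ] EuclideanSpace ℂ ι where
  toFun a := WithLp.toLp 2 fun j => (a j : ℂ)
  map_add' a b := by ext j; simp
  map_smul' c a := by ext j; simp
  norm_map' a := by simp [EuclideanSpace.norm_eq]

theorem inner_complexify (a b : EuclideanSpace ℝ ι) :
    inner ℂ (complexify a) (complexify b) = ((inner ℝ a b : ℝ) : ℂ) := by
  simp [complexify, PiLp.inner_apply]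

end Complexify

variable {n : ℕ} {f g : ℝ → EuclideanSpace ℝ (Fin n)}

/-- The function on the circle induced by a `1`-periodic function `ℝ → ℝⁿ`, with values in
`ℂⁿ` so that it has Fourier coefficients there. -/
def circleLift (hf : Function.Periodic f 1) : UnitAddCircle → EuclideanSpace ℂ (Fin n) :=
  (hf.comp complexify).lift

theorem circleLift_coe (hf : Function.Periodic f 1) (u : ℝ) :
    circleLift hf u = complexify (f u) := rfl

theorem memLp_circleLift (hf : Function.Periodic f 1) {q : ℝ≥0∞}
    (hfq : MemLp f q (volume.restrict (Ico (0 : ℝ) 1))) :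
    MemLp (circleLift hf) q haarAddCircle := by
  refine memLp_haarAddCircle_of_memLp_comp_coe (t := 0) ?_
  rw [zero_add, ← restrict_Ico_eq_restrict_Ioc]
  exact complexify.toContinuousLinearMap.comp_memLp' hfq

theorem fourierCoef_eq_fourierCoeff (hf : Function.Periodic f 1)
    (hint : Integrable (circleLift hf) haarAddCircle) (k : ℤ) :
    fourierCoef f k = fourierCoeff (circleLift hf) k := by
  ext j
  change _ = EuclideanSpace.proj (𝕜 := ℂ) j (fourierCoeff (circleLift hf) k)
  rw [← fourierCoeff_clm_comp _ hint, fourierCoeff_eq_intervalIntegral _ _ 0, zero_add,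
    intervalIntegral.integral_of_le zero_le_one, ← restrict_Ico_eq_restrict_Ioc, div_one, one_smul]
  refine integral_congr_ae (Eventually.of_forall fun x => ?_)
  change (f x j : ℂ) * _ = fourier (-k) (x : UnitAddCircle) * (f x j : ℂ)
  rw [fourier_coe_apply, mul_comm]
  congr 2
  push_cast
  ring

theorem diffQuotSub_circleLift (hf : Function.Periodic f 1) (u : ℝ) (x : ℝ × ℝ) :
    diffQuotSub (circleLift hf) x u
      = complexify (x.2⁻¹ • (f (u + x.2) - f u) - x.1⁻¹ • (f (u + x.1) - f u)) := by
  simp only [diffQuotSub, diffQuot, ← AddCircle.coe_add, circleLift_coe, map_sub, map_smul,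
    ← Complex.ofReal_inv, Complex.coe_smul]

theorem density_circleLift (p : ℝ) (hf : Function.Periodic f 1) (hg : Function.Periodic g 1)
    (u : ℝ) (x : ℝ × ℝ) :
    density p (circleLift hf) (circleLift hg) (u, x) =
      (((inner ℝ (x.2⁻¹ • (f (u + x.2) - f u) - x.1⁻¹ • (f (u + x.1) - f u))
          (x.2⁻¹ • (g (u + x.2) - g u) - x.1⁻¹ • (g (u + x.1) - g u))) /
        (|x.1 - x.2| ^ p * |x.1| ^ (p - 2) * |x.2| ^ (p - 2)) : ℝ) : ℂ) := by
  have hweight : |x.1 - x.2| ^ p * |x.1| ^ (p - 2) * |x.2| ^ (p - 2) = weight p x := by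
    rw [weight]
    ring
  rw [density, diffQuotSub_circleLift, diffQuotSub_circleLift, inner_complexify, hweight,
    Complex.ofReal_div]

theorem Qform_eq_integral_density {p : ℝ} (hf : Function.Periodic f 1)
    (hg : Function.Periodic g 1) (hint : Integrable (density p (circleLift hf) (circleLift hg))
      (haarAddCircle.prod (volume.restrict domainD))) :
    (Qform p f g : ℂ) = ∫ z, density p (circleLift hf) (circleLift hg) z
      ∂haarAddCircle.prod (volume.restrict domainD) := by
  rw [integral_prod _ hint, AddCircle.integral_haarAddCircle, inv_one, one_smul,
    ← UnitAddCircle.integral_preimage 0, zero_add, ← restrict_Ico_eq_restrict_Ioc]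
  simp only [density_circleLift, integral_complex_ofReal, Qform]

end PeriodicFunction

theorem Qform_fourier_general (n : ℕ) (p : ℝ) (hp : p ∈ Ioo (2 : ℝ) (8 / 3)) :
    (∀ f g : ℝ → EuclideanSpace ℝ (Fin n),
      Function.Periodic f 1 → Function.Periodic g 1 →
      MemLp f 2 (volume.restrict (Ico (0 : ℝ) 1)) →
      MemLp g 2 (volume.restrict (Ico (0 : ℝ) 1)) →
      Summable (fun k : ℤ => (1 + (k : ℝ) ^ 2) ^ (3 * p / 2 - 2) * ‖fourierCoef f k‖ ^ 2) →
      Summable (fun k : ℤ => (1 + (k : ℝ) ^ 2) ^ (3 * p / 2 - 2) * ‖fourierCoef g k‖ ^ 2) →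
      HasSum (fun k : ℤ => (rhoCoef p k : ℂ) * inner ℂ (fourierCoef f k) (fourierCoef g k))
        (Qform p f g : ℂ)) ∧
    IntegrableOn (rhoIntegrand p 1) {y : ℝ × ℝ | y.1 < 0 ∧ 0 < y.2} ∧
    0 < climit p ∧
    Tendsto (fun k : ℤ => rhoCoef p k / |(k : ℝ)| ^ (3 * p - 4)) cofinite (𝓝 (climit p)) := by
  refine ⟨fun f g hf hg hfm hgm hfs hgs => ?_, integrableOn_rhoIntegrand hp 1, climit_pos hp,
    tendsto_rhoCoef_div hp⟩
  have hρ (k : ℤ) : IntegrableOn (rhoIntegrand p k) domainD :=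
    (integrableOn_rhoIntegrand hp k).mono_set domainD_subset_quadrant
  have hF := memLp_circleLift hf hfm
  have hG := memLp_circleLift hg hgm
  simp only [fourierCoef_eq_fourierCoeff hf (hF.integrable one_le_two),
    fourierCoef_eq_fourierCoeff hg (hG.integrable one_le_two)] at hfs hgs ⊢
  have hsF := summable_rhoCoef_mul hp (fun k => sq_nonneg _) hfs
  have hsG := summable_rhoCoef_mul hp (fun k => sq_nonneg _) hgs
  rw [Qform_eq_integral_density hf hg (integrable_density hF hG hρ hsF hsG)]
  exact hasSum_integral_density hF hG hρ hsF hsG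

/-- **Fourier representation of the leading-order bilinear form `Q^{(p)}`.**
For `p ∈ (7/3, 8/3)` and `f, g ∈ W^{3p/2-2,2}(ℝ/ℤ,ℝⁿ)` one has
`Q^{(p)}(f,g) = Σ_k ρ_k ⟨f̂_k, ĝ_k⟩_{ℂⁿ}`, and
`ρ_k / |k|^{3p-4} → c ∈ (0,∞)` as `|k| → ∞`, i.e.
`ρ_k = c |k|^{3p-4} + o(|k|^{3p-4})`. -/
theorem Qform_fourier (n : ℕ) (p : ℝ) (hp : p ∈ Ioo (7/3 : ℝ) (8/3)) :
    (∀ f g : ℝ → EuclideanSpace ℝ (Fin n),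
      Function.Periodic f 1 → Function.Periodic g 1 →
      MemLp f 2 (volume.restrict (Ico (0:ℝ) 1)) →
      MemLp g 2 (volume.restrict (Ico (0:ℝ) 1)) →
      Summable (fun k : ℤ => (1 + (k:ℝ)^2) ^ (3*p/2 - 2) * ‖fourierCoef f k‖^2) →
      Summable (fun k : ℤ => (1 + (k:ℝ)^2) ^ (3*p/2 - 2) * ‖fourierCoef g k‖^2) →
      ((Qform p f g : ℝ) : ℂ) =
        ∑' k : ℤ, ((rhoCoef p k : ℝ) : ℂ) *
          (inner ℂ (fourierCoef f k) (fourierCoef g k) : ℂ)) ∧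
    IntegrableOn (rhoIntegrand p 1) {y : ℝ × ℝ | y.1 < 0 ∧ 0 < y.2} ∧
    0 < climit p ∧
    Tendsto (fun k : ℤ => rhoCoef p k / |(k : ℝ)| ^ (3*p - 4))
      cofinite (𝓝 (climit p)) := by
  have h := Qform_fourier_general n p ⟨by linarith [hp.1], hp.2⟩
  exact ⟨fun f g hf hg hfm hgm hfs hgs => (h.1 f g hf hg hfm hgm hfs hgs).tsum_eq.symm, h.2⟩
end
end

section
/- Let q > 1 and p ≥ q + 2/3. Then every injective, arc-length parametrized curve γ ∈ C¹(ℝ/ℤ,ℝⁿ) satisfies E_{p,q}(γ) = ∞; that is, in this parameter range there are no closed finite-energy C¹ knots at all. -/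
open MeasureTheory Set Filter Topology
open scoped ENNReal

noncomputable section

/-- The area `|a ∧ b|` of the parallelogram spanned by `a, b ∈ ℝⁿ`. -/
def wedgeNorm {n : ℕ} (a b : EuclideanSpace ℝ (Fin n)) : ℝ :=
  Real.sqrt (‖a‖ ^ 2 * ‖b‖ ^ 2 - (inner ℝ a b : ℝ) ^ 2)

/-- `1 / R^{p,q}(x,y,z) = |(y-x) ∧ (z-x)|^q / (|y-z| |y-x| |z-x|)^p`. -/
def invR {n : ℕ} (p q : ℝ) (x y z : EuclideanSpace ℝ (Fin n)) : ℝ :=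
  wedgeNorm (y - x) (z - x) ^ q / (‖y - z‖ * ‖y - x‖ * ‖z - x‖) ^ p

/-- The generalized integral Menger curvature `E_{p,q}` of a closed curve,
modelled by a `1`-periodic function together with its derivative,
the parameter domain `ℝ/ℤ` being represented by `[0,1)`; values in `[0,∞]`. -/
def menger {n : ℕ} (p q : ℝ) (γ γ' : ℝ → EuclideanSpace ℝ (Fin n)) : ℝ≥0∞ :=
  ∫⁻ u₁ in Ico (0:ℝ) 1, ∫⁻ u₂ in Ico (0:ℝ) 1, ∫⁻ u₃ in Ico (0:ℝ) 1,
    ENNReal.ofReal (‖γ' u₁‖ * ‖γ' u₂‖ * ‖γ' u₃‖ * invR p q (γ u₁) (γ u₂) (γ u₃))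

/-- Injectivity of a `1`-periodic curve as a map on `ℝ/ℤ`. -/
def InjCircle {n : ℕ} (γ : ℝ → EuclideanSpace ℝ (Fin n)) : Prop :=
  ∀ u v : ℝ, γ u = γ v → ∃ k : ℤ, v = u + k

/-- Distance on `ℝ/ℤ`. -/
def circleDist (u v : ℝ) : ℝ := ⨅ k : ℤ, |u - v - (k : ℝ)|

/-- The `ρ`-th power of the Sobolev–Slobodeckiĭ seminorm `[f]_{W^{1+s,ρ}}`
of a periodic function with derivative `f'`; values in `[0,∞]`. -/
def sobSemiPow {n : ℕ} (s ρ : ℝ) (f' : ℝ → EuclideanSpace ℝ (Fin n)) : ℝ≥0∞ :=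
  ∫⁻ u in Ico (0:ℝ) 1, ∫⁻ w in Icc (-(1/2) : ℝ) (1/2),
    ENNReal.ofReal (‖f' (u + w) - f' u‖ ^ ρ / |w| ^ (1 + ρ * s))

/-- The norm `‖f‖_{W^{1+s,ρ}} = ‖f‖_{W^{1,ρ}} + [f]_{W^{1+s,ρ}}`. -/
def sobNorm {n : ℕ} (s ρ : ℝ) (f f' : ℝ → EuclideanSpace ℝ (Fin n)) : ℝ :=
  (∫ u in Ico (0:ℝ) 1, ‖f u‖ ^ ρ) ^ (1/ρ) + (∫ u in Ico (0:ℝ) 1, ‖f' u‖ ^ ρ) ^ (1/ρ)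
    + (sobSemiPow s ρ f').toReal ^ (1/ρ)

/-- `γ` is a closed `W^{1,1}` curve with weak derivative `γ'`:
both are `1`-periodic, `γ'` is measurable and `γ` is the primitive of `γ'`. -/
structure CurvePair {n : ℕ} (γ γ' : ℝ → EuclideanSpace ℝ (Fin n)) : Prop where
  periodic : Function.Periodic γ 1
  periodic' : Function.Periodic γ' 1
  meas' : Measurable γ'
  primitive : ∀ u, γ u = γ 0 + ∫ t in (0:ℝ)..u, γ' t

/-!
Put `d a u` for the direction of the chord from `γ u` to `γ (u + a)`. At the triple of parameters
`u, u + a, u + a + c` the integrand of the energy is comparable to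
`(a c) ^ (q - p) (a + c) ^ (-p) |d a u - d c (u + a)| ^ q`. If the tangent directions at `s < t`
differ, then `d a` must change by a fixed amount along a chain of about `(t - s) / (a + c)` steps
of length `a + c`, so that by Jensen's inequality the integral over `u` of
`|d a u - d c (u + a)| ^ q + |d c u - d a (u + c)| ^ q` is at least a multiple of `(a + c) ^ q`.
What remains is `∬ (a c (a + c)) ^ (q - p)`, which is homogeneous of degree `3 (q - p) + 2` and
hence diverges at the origin precisely because `p ≥ q + 2/3`. Therefore finite energy forces the
tangent direction of a regular `C¹` curve to be constant, which is impossible for a closed curve.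
-/

section Translation

variable {G : Type*} [AddGroup G] [MeasurableSpace G] [MeasurableAdd G] {μ : Measure G}
  [μ.IsAddLeftInvariant] {E : Type*} [NormedAddCommGroup E] {q : ℝ}

theorem setLIntegral_const_add_le {s t : Set G} {x : G} (hst : MapsTo (x + ·) s t)
    (f : G → ℝ≥0∞) : ∫⁻ u in s, f (x + u) ∂μ ≤ ∫⁻ u in t, f u ∂μ :=
  (lintegral_mono_set hst).trans_eq <|
    (measurePreserving_add_left μ x).setLIntegral_comp_preimage_emb
      (MeasurableEquiv.addLeft x).measurableEmbedding f t

theorem enorm_sub_rpow_le_sum_range (hq : 1 ≤ q) (f : ℕ → E) (N : ℕ) :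
    ‖f N - f 0‖ₑ ^ q ≤ (N : ℝ≥0∞) ^ (q - 1) * ∑ j ∈ Finset.range N, ‖f (j + 1) - f j‖ₑ ^ q := by
  calc ‖f N - f 0‖ₑ ^ q = ‖∑ j ∈ Finset.range N, (f (j + 1) - f j)‖ₑ ^ q := by
        rw [Finset.sum_range_sub]
    _ ≤ (∑ j ∈ Finset.range N, ‖f (j + 1) - f j‖ₑ) ^ q := by
        gcongr
        exact enorm_sum_le _ _
    _ ≤ _ := by
        simpa using ENNReal.rpow_sum_le_const_mul_sum_rpow (Finset.range N)
          (fun j => ‖f (j + 1) - f j‖ₑ) hq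

theorem setLIntegral_enorm_nsmul_add_sub_rpow_le (hq : 1 ≤ q) {g : G → E}
    (hg : StronglyMeasurable g) {I K : Set G} {h : G} {N : ℕ}
    (hIK : ∀ j < N, MapsTo (j • h + ·) I K) :
    ∫⁻ u in I, ‖g (N • h + u) - g u‖ₑ ^ q ∂μ ≤
      (N : ℝ≥0∞) ^ q * ∫⁻ u in K, ‖g (h + u) - g u‖ₑ ^ q ∂μ := by
  have hshift (x : G) : StronglyMeasurable fun u => g (x + u) :=
    hg.comp_measurable (measurable_const_add x)
  have hmeas (j : ℕ) : Measurable fun u => ‖g (h + (j • h + u)) - g (j • h + u)‖ₑ ^ q :=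
    ((((hshift h).comp_measurable (measurable_const_add (j • h))).sub
      (hshift (j • h))).enorm).pow_const q
  calc ∫⁻ u in I, ‖g (N • h + u) - g u‖ₑ ^ q ∂μ
      ≤ ∫⁻ u in I, (N : ℝ≥0∞) ^ (q - 1) *
          ∑ j ∈ Finset.range N, ‖g (h + (j • h + u)) - g (j • h + u)‖ₑ ^ q ∂μ := by
        refine lintegral_mono fun u => ?_
        simpa [succ_nsmul', add_assoc] using
          enorm_sub_rpow_le_sum_range hq (fun j => g (j • h + u)) N
    _ = (N : ℝ≥0∞) ^ (q - 1) *
          ∑ j ∈ Finset.range N, ∫⁻ u in I, ‖g (h + (j • h + u)) - g (j • h + u)‖ₑ ^ q ∂μ := by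
        rw [lintegral_const_mul _ (Finset.measurable_fun_sum _ fun j _ => hmeas j),
          lintegral_finsetSum _ fun j _ => hmeas j]
    _ ≤ (N : ℝ≥0∞) ^ (q - 1) *
          ∑ _j ∈ Finset.range N, ∫⁻ u in K, ‖g (h + u) - g u‖ₑ ^ q ∂μ := by
        gcongr _ * ∑ j ∈ _, ?_ with j hj
        exact setLIntegral_const_add_le (hIK j (Finset.mem_range.1 hj))
          fun u => ‖g (h + u) - g u‖ₑ ^ q
    _ = (N : ℝ≥0∞) ^ q * ∫⁻ u in K, ‖g (h + u) - g u‖ₑ ^ q ∂μ := by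
        rw [Finset.sum_const, Finset.card_range, nsmul_eq_mul, ← mul_assoc]
        congr 1
        simpa using (ENNReal.rpow_add_of_nonneg (x := (N : ℝ≥0∞)) (q - 1) 1
          (sub_nonneg.2 hq) zero_le_one).symm

end Translation

section Turn

variable {E : Type*} [NormedAddCommGroup E] {q : ℝ} {D : ℝ → ℝ → E}

/-- The change between two consecutive values of a field `D` over parameter intervals, where
`D a u` is attached to `[u, u + a]`: the first interval is `[u, u + a]`, the second one
`[u + a, u + a + c]`. It is used for the directions of the chords of a curve. -/
def turn (D : ℝ → ℝ → E) (a c u : ℝ) : E :=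
  D a u - D c (u + a)

theorem stronglyMeasurable_turn (hD : StronglyMeasurable (Function.uncurry D)) :
    StronglyMeasurable fun x : ℝ × ℝ × ℝ => turn D x.1 x.2.1 x.2.2 :=
  (hD.comp_measurable (g := fun x : ℝ × ℝ × ℝ => (x.1, x.2.2)) (by fun_prop)).sub
    (hD.comp_measurable (g := fun x : ℝ × ℝ × ℝ => (x.2.1, x.2.2 + x.1)) (by fun_prop))

theorem measurable_enorm_turn_rpow (hD : StronglyMeasurable (Function.uncurry D)) :
    Measurable fun x : ℝ × ℝ × ℝ => ‖turn D x.1 x.2.1 x.2.2‖ₑ ^ q :=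
  (stronglyMeasurable_turn hD).enorm.pow_const q

theorem turn_add_turn (D : ℝ → ℝ → E) (a c u : ℝ) :
    turn D a c u + turn D c a (a + u) = D a u - D a (a + c + u) := by
  simp only [turn]
  rw [add_comm u a, sub_add_sub_cancel, show a + u + c = a + c + u by ring]

theorem setLIntegral_enorm_add_sub_rpow_le_turn (hq : 1 ≤ q)
    (hD : StronglyMeasurable (Function.uncurry D)) {K L : Set ℝ} {a c : ℝ} (hKL : K ⊆ L)
    (haKL : MapsTo (a + ·) K L) :
    ∫⁻ u in K, ‖D a (a + c + u) - D a u‖ₑ ^ q ≤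
      2 ^ (q - 1) * ((∫⁻ u in L, ‖turn D a c u‖ₑ ^ q) + ∫⁻ u in L, ‖turn D c a u‖ₑ ^ q) := by
  have hmeas : Measurable fun u => ‖turn D a c u‖ₑ ^ q :=
    (measurable_enorm_turn_rpow hD).comp (by fun_prop : Measurable fun u : ℝ => (a, c, u))
  calc ∫⁻ u in K, ‖D a (a + c + u) - D a u‖ₑ ^ q
      ≤ ∫⁻ u in K, 2 ^ (q - 1) * (‖turn D a c u‖ₑ ^ q + ‖turn D c a (a + u)‖ₑ ^ q) := by
        refine lintegral_mono fun u => ?_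
        rw [enorm_sub_rev, ← turn_add_turn]
        exact (ENNReal.rpow_le_rpow (enorm_add_le _ _) (zero_le_one.trans hq)).trans
          (ENNReal.rpow_add_le_mul_rpow_add_rpow _ _ hq)
    _ = 2 ^ (q - 1) *
          ((∫⁻ u in K, ‖turn D a c u‖ₑ ^ q) + ∫⁻ u in K, ‖turn D c a (a + u)‖ₑ ^ q) := by
        rw [lintegral_const_mul' _ _ (by finiteness), lintegral_add_left hmeas]
    _ ≤ _ := by
        gcongr _ * (?_ + ?_)
        · exact lintegral_mono_set hKL
        · exact setLIntegral_const_add_le haKL fun u => ‖turn D c a u‖ₑ ^ q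

theorem exists_le_enorm_sub_of_tendsto {s t : ℝ} {v w : E} (hvw : v ≠ w)
    (hs : Tendsto (Function.uncurry D) (𝓝[>] 0 ×ˢ 𝓝 s) (𝓝 v))
    (ht : Tendsto (Function.uncurry D) (𝓝[>] 0 ×ˢ 𝓝 t) (𝓝 w)) :
    ∃ ε : ℝ≥0∞, ε ≠ 0 ∧ ∃ r > 0, ∀ a ∈ Ioo 0 r, ∀ x ∈ Ioo (s - r) (s + r),
      ∀ y ∈ Ioo (t - r) (t + r), ε ≤ ‖D a y - D a x‖ₑ := by
  obtain ⟨ε, hε, hεvw⟩ := exists_between (enorm_pos.2 (sub_ne_zero.2 hvw.symm))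
  have hdiff : Tendsto (fun x : ℝ × ℝ × ℝ => ‖D x.1 x.2.2 - D x.1 x.2.1‖ₑ)
      (𝓝[>] 0 ×ˢ 𝓝 s ×ˢ 𝓝 t) (𝓝 ‖w - v‖ₑ) :=
    ((ht.comp (tendsto_fst.prodMk (tendsto_snd.comp tendsto_snd))).sub
      (hs.comp (tendsto_fst.prodMk (tendsto_fst.comp tendsto_snd)))).enorm
  have hmono (x : ℝ) : MonotoneOn (fun r => Ioo (x - r) (x + r)) {r | 0 < r} :=
    fun _ _ _ _ h => Ioo_subset_Ioo (by gcongr) (by gcongr)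
  have hbasis := (nhdsGT_basis (0 : ℝ)).prod_same_index_mono
    ((nhds_basis_Ioo_pos s).prod_same_index_mono (nhds_basis_Ioo_pos t) (hmono s) (hmono t))
    (fun _ _ _ _ h => Ioo_subset_Ioo_right h)
    (fun _ hi _ hj h => prod_mono (hmono s hi hj h) (hmono t hi hj h))
  obtain ⟨r, hr, hle⟩ := hbasis.eventually_iff.1 (hdiff.eventually_const_lt hεvw)
  exact ⟨ε, hε.ne', r, hr, fun a ha x hx y hy => (@hle (a, x, y) ⟨ha, hx, hy⟩).le⟩

/-- Each of the `N` steps from `u` to `u + N (a + c)` changes `D a` by the sum of two turns, and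
the steps are averaged over `u`. -/
theorem rpow_mul_ofReal_le_of_le_enorm_sub (hq : 1 ≤ q)
    (hD : StronglyMeasurable (Function.uncurry D)) {s t β a c l : ℝ} {ε : ℝ≥0∞} {N : ℕ}
    (ha : 0 < a) (hc : 0 < c) (hN : N * (a + c) ≤ t - s) (hβ : t + l + a ≤ β)
    (hsep : ∀ u ∈ Ioo s (s + l), ε ≤ ‖D a (N * (a + c) + u) - D a u‖ₑ) :
    ε ^ q * ENNReal.ofReal l ≤ (N : ℝ≥0∞) ^ q * (2 ^ (q - 1) *
      ((∫⁻ u in Ioo s β, ‖turn D a c u‖ₑ ^ q) + ∫⁻ u in Ioo s β, ‖turn D c a u‖ₑ ^ q)) := by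
  calc ε ^ q * ENNReal.ofReal l = ∫⁻ _ in Ioo s (s + l), ε ^ q := by
        rw [setLIntegral_const, Real.volume_Ioo, add_sub_cancel_left]
    _ ≤ ∫⁻ u in Ioo s (s + l), ‖D a (N • (a + c) + u) - D a u‖ₑ ^ q := by
        refine setLIntegral_mono' measurableSet_Ioo fun u hu => ?_
        rw [nsmul_eq_mul]
        gcongr
        exact hsep u hu
    _ ≤ (N : ℝ≥0∞) ^ q * ∫⁻ u in Ioo s (t + l), ‖D a (a + c + u) - D a u‖ₑ ^ q := by
        refine setLIntegral_enorm_nsmul_add_sub_rpow_le hq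
          (hD.comp_measurable measurable_prodMk_left) fun j hj u hu => ?_
        have hjN : (j : ℝ) * (a + c) ≤ N * (a + c) := by gcongr
        rw [nsmul_eq_mul]
        constructor <;> nlinarith [hu.1, hu.2, j.cast_nonneg (α := ℝ)]
    _ ≤ _ := by
        gcongr
        refine setLIntegral_enorm_add_sub_rpow_le_turn hq hD
          (Ioo_subset_Ioo_right (by linarith)) fun u hu => ⟨?_, ?_⟩ <;>
          linarith [hu.1, hu.2]

theorem exists_mul_rpow_le_setLIntegral_turn (hq : 1 ≤ q)
    (hD : StronglyMeasurable (Function.uncurry D)) {s t β : ℝ} (hst : s < t) (htβ : t < β)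
    {v w : E} (hvw : v ≠ w)
    (hs : Tendsto (Function.uncurry D) (𝓝[>] 0 ×ˢ 𝓝 s) (𝓝 v))
    (ht : Tendsto (Function.uncurry D) (𝓝[>] 0 ×ˢ 𝓝 t) (𝓝 w)) :
    ∃ C : ℝ≥0∞, C ≠ 0 ∧ ∃ r > 0, ∀ a ∈ Ioo 0 r, ∀ c ∈ Ioo 0 r,
      C * ENNReal.ofReal (a + c) ^ q ≤
        (∫⁻ u in Ioo s β, ‖turn D a c u‖ₑ ^ q) + ∫⁻ u in Ioo s β, ‖turn D c a u‖ₑ ^ q := by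
  obtain ⟨ε, hε, ρ, hρ, hsep⟩ := exists_le_enorm_sub_of_tendsto hvw hs ht
  obtain ⟨r, hr, hrρ, hrβ⟩ : ∃ r > 0, r ≤ ρ ∧ r ≤ β - t :=
    ⟨min ρ (β - t), lt_min hρ (sub_pos.2 htβ), min_le_left _ _, min_le_right _ _⟩
  refine ⟨ε ^ q * ENNReal.ofReal (r / 2) / (ENNReal.ofReal (t - s) ^ q * 2 ^ (q - 1)), ?_,
    r / 4, by positivity, fun a ha c hc => ?_⟩
  · have hr' : ENNReal.ofReal (r / 2) ≠ 0 := by simpa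
    exact (ENNReal.div_pos (mul_ne_zero (by positivity) hr') (by finiteness)).ne'
  set S := (∫⁻ u in Ioo s β, ‖turn D a c u‖ₑ ^ q) + ∫⁻ u in Ioo s β, ‖turn D c a u‖ₑ ^ q
  have hac : 0 < a + c := add_pos ha.1 hc.1
  set N := ⌊(t - s) / (a + c)⌋₊
  have hN : N * (a + c) ≤ t - s :=
    (le_div_iff₀ hac).1 (Nat.floor_le (div_nonneg (sub_pos.2 hst).le hac.le))
  have hN' : t - s < (N + 1) * (a + c) := (div_lt_iff₀ hac).1 (Nat.lt_floor_add_one _)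
  have hchain : ε ^ q * ENNReal.ofReal (r / 2) ≤ (N : ℝ≥0∞) ^ q * (2 ^ (q - 1) * S) := by
    refine rpow_mul_ofReal_le_of_le_enorm_sub hq hD ha.1 hc.1 hN
      (by linarith [ha.2]) fun u hu => hsep a ⟨ha.1, ?_⟩ u ⟨?_, ?_⟩ _ ⟨?_, ?_⟩ <;>
      linarith [hu.1, hu.2, ha.1, ha.2, hc.1, hc.2]
  rw [← ENNReal.mul_div_right_comm]
  refine ENNReal.div_le_of_le_mul' ?_
  calc ε ^ q * ENNReal.ofReal (r / 2) * ENNReal.ofReal (a + c) ^ q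
      ≤ (N : ℝ≥0∞) ^ q * (2 ^ (q - 1) * S) * ENNReal.ofReal (a + c) ^ q := by gcongr
    _ = ENNReal.ofReal (N * (a + c)) ^ q * 2 ^ (q - 1) * S := by
        rw [ENNReal.ofReal_mul N.cast_nonneg, ENNReal.ofReal_natCast,
          ENNReal.mul_rpow_of_nonneg _ _ (zero_le_one.trans hq)]
        ring
    _ ≤ ENNReal.ofReal (t - s) ^ q * 2 ^ (q - 1) * S := by gcongr

end Turn

section Weight

variable {p q : ℝ}

/-- The weight `(a c)^(q - p) (a + c)^(-p)` with which the `q`-th power of the turn between two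
consecutive chords of lengths `a` and `c` enters the Menger curvature. -/
def mengerWeight (p q a c : ℝ) : ℝ :=
  (a * c) ^ (q - p) * (a + c) ^ (-p)

theorem mengerWeight_comm (p q a c : ℝ) : mengerWeight p q a c = mengerWeight p q c a := by
  rw [mengerWeight, mengerWeight, mul_comm a, add_comm a]

theorem mengerWeight_nonneg (p q : ℝ) {a c : ℝ} (ha : 0 ≤ a) (hc : 0 ≤ c) :
    0 ≤ mengerWeight p q a c := by
  unfold mengerWeight
  positivity

theorem measurable_mengerWeight (p q : ℝ) :
    Measurable fun x : ℝ × ℝ => mengerWeight p q x.1 x.2 := by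
  unfold mengerWeight
  fun_prop

theorem mengerWeight_anti (hp : 0 ≤ p) (hqp : q ≤ p) {a a' c c' : ℝ} (ha : 0 < a) (haa' : a ≤ a')
    (hc : 0 < c) (hcc' : c ≤ c') : mengerWeight p q a' c' ≤ mengerWeight p q a c :=
  mul_le_mul
    (Real.rpow_le_rpow_of_nonpos (mul_pos ha hc)
      (mul_le_mul haa' hcc' hc.le (ha.le.trans haa')) (sub_nonpos.2 hqp))
    (Real.rpow_le_rpow_of_nonpos (add_pos ha hc) (add_le_add haa' hcc') (neg_nonpos.2 hp))
    (Real.rpow_nonneg (by linarith) _) (Real.rpow_nonneg (mul_pos ha hc).le _)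

theorem mengerWeight_mul_mul {M a c : ℝ} (hM : 0 < M) (ha : 0 ≤ a) (hc : 0 ≤ c) :
    mengerWeight p q (M * a) (M * c) = M ^ (2 * q - 3 * p) * mengerWeight p q a c := by
  have hexp : M ^ (2 * q - 3 * p) = M ^ (q - p) * M ^ (q - p) * M ^ (-p) := by
    rw [← Real.rpow_add hM, ← Real.rpow_add hM]
    ring_nf
  rw [mengerWeight, mengerWeight, mul_mul_mul_comm, ← mul_add,
    Real.mul_rpow (by positivity) (by positivity), Real.mul_rpow hM.le hM.le,
    Real.mul_rpow hM.le (by positivity), hexp]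
  ring

theorem mengerWeight_mul_add_rpow {a c : ℝ} (ha : 0 < a) (hc : 0 < c) :
    mengerWeight p q a c * (a + c) ^ q = (a * c * (a + c)) ^ (q - p) := by
  rw [mengerWeight, mul_assoc, ← Real.rpow_add (add_pos ha hc), neg_add_eq_sub,
    ← Real.mul_rpow (by positivity) (by positivity)]

end Weight

section Divergence

variable {r δ : ℝ}

theorem lintegral_Ioo_rpow_eq_top (hr : r ≤ -1) (hδ : 0 < δ) :
    ∫⁻ a in Ioo 0 δ, ENNReal.ofReal (a ^ r) = ⊤ := by
  by_contra hne
  refine hr.not_gt ((intervalIntegral.integrableOn_Ioo_rpow_iff hδ).1 ⟨by fun_prop, ?_⟩)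
  rw [hasFiniteIntegral_iff_ofReal]
  · exact lt_top_iff_ne_top.2 hne
  · filter_upwards [ae_restrict_mem measurableSet_Ioo] with a ha using Real.rpow_nonneg ha.1.le r

theorem lintegral_lintegral_mul_mul_add_rpow_eq_top (hr : r ≤ -(2 / 3)) (hδ : 0 < δ) :
    ∫⁻ a in Ioo 0 δ, ∫⁻ c in Ioo 0 δ, ENNReal.ofReal ((a * c * (a + c)) ^ r) = ⊤ := by
  have hdiag (a : ℝ) (ha : 0 < a) : ENNReal.ofReal (2 ^ r) * ENNReal.ofReal (a ^ (3 * r + 1)) ≤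
      ∫⁻ c in Ioo 0 a, ENNReal.ofReal ((a * c * (a + c)) ^ r) := by
    calc ENNReal.ofReal (2 ^ r) * ENNReal.ofReal (a ^ (3 * r + 1))
        = ∫⁻ _ in Ioo 0 a, ENNReal.ofReal ((2 * a ^ 3) ^ r) := by
          rw [setLIntegral_const, Real.volume_Ioo, sub_zero,
            ← ENNReal.ofReal_mul (by positivity), ← ENNReal.ofReal_mul (by positivity),
            Real.mul_rpow two_pos.le (by positivity), ← Real.rpow_natCast_mul ha.le,
            Real.rpow_add_one ha.ne', mul_assoc]
          norm_num
      _ ≤ ∫⁻ c in Ioo 0 a, ENNReal.ofReal ((a * c * (a + c)) ^ r) := by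
          refine setLIntegral_mono' measurableSet_Ioo fun c hc => ENNReal.ofReal_le_ofReal ?_
          have hc0 : 0 < c := hc.1
          refine Real.rpow_le_rpow_of_nonpos (by positivity) ?_ (by linarith)
          calc a * c * (a + c) ≤ a * a * (a + a) := by gcongr <;> exact hc.2.le
            _ = 2 * a ^ 3 := by ring
  refine top_le_iff.1 ?_
  calc ⊤ = ENNReal.ofReal (2 ^ r) * ∫⁻ a in Ioo 0 δ, ENNReal.ofReal (a ^ (3 * r + 1)) := by
        rw [lintegral_Ioo_rpow_eq_top (by linarith) hδ, ENNReal.mul_top]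
        simpa using Real.rpow_pos_of_pos two_pos r
    _ = ∫⁻ a in Ioo 0 δ, ENNReal.ofReal (2 ^ r) * ENNReal.ofReal (a ^ (3 * r + 1)) :=
        (lintegral_const_mul' _ _ ENNReal.ofReal_ne_top).symm
    _ ≤ ∫⁻ a in Ioo 0 δ, ∫⁻ c in Ioo 0 δ, ENNReal.ofReal ((a * c * (a + c)) ^ r) :=
        setLIntegral_mono' measurableSet_Ioo fun a ha =>
          (hdiag a ha.1).trans (lintegral_mono_set (Ioo_subset_Ioo_right ha.2.le))

theorem lintegral_lintegral_mul_add_swap {α : Type*} [MeasurableSpace α] {μ : Measure α}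
    [SFinite μ] {w H : α → α → ℝ≥0∞} (hw : Measurable (Function.uncurry w))
    (hH : Measurable (Function.uncurry H)) (hsymm : ∀ a c, w a c = w c a) :
    ∫⁻ a, ∫⁻ c, w a c * (H a c + H c a) ∂μ ∂μ = 2 * ∫⁻ a, ∫⁻ c, w a c * H a c ∂μ ∂μ := by
  have hwH : Measurable (Function.uncurry fun a c => w a c * H a c) := hw.mul hH
  have hswap : ∫⁻ a, ∫⁻ c, w a c * H c a ∂μ ∂μ = ∫⁻ a, ∫⁻ c, w a c * H a c ∂μ ∂μ := by
    rw [lintegral_lintegral_swap hwH.aemeasurable]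
    simp_rw [hsymm]
  calc ∫⁻ a, ∫⁻ c, w a c * (H a c + H c a) ∂μ ∂μ
      = ∫⁻ a, ((∫⁻ c, w a c * H a c ∂μ) + ∫⁻ c, w a c * H c a ∂μ) ∂μ := by
        simp_rw [mul_add]
        exact lintegral_congr fun a => lintegral_add_left hwH.of_uncurry_left _
    _ = 2 * ∫⁻ a, ∫⁻ c, w a c * H a c ∂μ ∂μ := by
        have hmeas : Measurable fun a => ∫⁻ c, w a c * H a c ∂μ := hwH.lintegral_prod_right'
        rw [lintegral_add_left hmeas, hswap, two_mul]

theorem lintegral_lintegral_mengerWeight_mul_eq_top {p q : ℝ} (hp : q + 2 / 3 ≤ p) (hδ : 0 < δ)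
    {C : ℝ≥0∞} (hC : C ≠ 0) {H : ℝ → ℝ → ℝ≥0∞} (hH : Measurable (Function.uncurry H))
    (hlow : ∀ a ∈ Ioo 0 δ, ∀ c ∈ Ioo 0 δ, C * ENNReal.ofReal (a + c) ^ q ≤ H a c + H c a) :
    ∫⁻ a in Ioo 0 δ, ∫⁻ c in Ioo 0 δ, ENNReal.ofReal (mengerWeight p q a c) * H a c = ⊤ := by
  have hpow (a : ℝ) (ha : a ∈ Ioo 0 δ) (c : ℝ) (hc : c ∈ Ioo 0 δ) :
      C * ENNReal.ofReal ((a * c * (a + c)) ^ (q - p)) ≤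
        ENNReal.ofReal (mengerWeight p q a c) * (H a c + H c a) := by
    rw [← mengerWeight_mul_add_rpow ha.1 hc.1,
      ENNReal.ofReal_mul (mengerWeight_nonneg p q ha.1.le hc.1.le),
      ← ENNReal.ofReal_rpow_of_pos (add_pos ha.1 hc.1), mul_left_comm]
    gcongr
    exact hlow a ha c hc
  have htwo : 2 * ∫⁻ a in Ioo 0 δ, ∫⁻ c in Ioo 0 δ,
      ENNReal.ofReal (mengerWeight p q a c) * H a c = ⊤ := by
    rw [← lintegral_lintegral_mul_add_swap (measurable_mengerWeight p q).ennreal_ofReal hH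
      fun a c => by rw [mengerWeight_comm], ← top_le_iff]
    calc ⊤ = C * ∫⁻ a in Ioo 0 δ, ∫⁻ c in Ioo 0 δ,
            ENNReal.ofReal ((a * c * (a + c)) ^ (q - p)) := by
          rw [lintegral_lintegral_mul_mul_add_rpow_eq_top (by linarith) hδ, ENNReal.mul_top hC]
      _ = ∫⁻ a in Ioo 0 δ, ∫⁻ c in Ioo 0 δ,
            C * ENNReal.ofReal ((a * c * (a + c)) ^ (q - p)) := by
          have hmeas : Measurable fun x : ℝ × ℝ =>
            ENNReal.ofReal ((x.1 * x.2 * (x.1 + x.2)) ^ (q - p)) := by fun_prop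
          rw [← lintegral_const_mul _ hmeas.lintegral_prod_right']
          exact lintegral_congr fun a => (lintegral_const_mul _ (by fun_prop)).symm
      _ ≤ _ := setLIntegral_mono' measurableSet_Ioo fun a ha =>
          setLIntegral_mono' measurableSet_Ioo fun c hc => hpow a ha c hc
  exact (ENNReal.mul_eq_top.1 htwo).elim And.right fun h => absurd h.1 ENNReal.ofNat_ne_top

end Divergence

section ChordGeometry

theorem norm_mul_norm_mul_norm_normalize_sub_le {n : ℕ} {a b : EuclideanSpace ℝ (Fin n)}
    (hab : 0 ≤ inner ℝ a b) :
    ‖a‖ * ‖b‖ * ‖NormedSpace.normalize a - NormedSpace.normalize b‖ ≤ √2 * wedgeNorm a b := by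
  rcases eq_or_ne a 0 with rfl | ha
  · simp [wedgeNorm]
  rcases eq_or_ne b 0 with rfl | hb
  · simp [wedgeNorm]
  have hna : ‖a‖ ≠ 0 := norm_ne_zero_iff.2 ha
  have hnb : ‖b‖ ≠ 0 := norm_ne_zero_iff.2 hb
  have hsq : (‖a‖ * ‖b‖ * ‖NormedSpace.normalize a - NormedSpace.normalize b‖) ^ 2 =
      2 * (‖a‖ * ‖b‖) * (‖a‖ * ‖b‖ - inner ℝ a b) := by
    rw [mul_pow, norm_sub_sq_real, NormedSpace.norm_normalize ha, NormedSpace.norm_normalize hb]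
    simp only [NormedSpace.normalize, real_inner_smul_left, real_inner_smul_right]
    field_simp
    ring
  rw [wedgeNorm, ← Real.sqrt_mul two_pos.le]
  refine Real.le_sqrt_of_sq_le ?_
  rw [hsq]
  nlinarith [real_inner_le_norm a b]

theorem wedgeNorm_self_add {n : ℕ} (a b : EuclideanSpace ℝ (Fin n)) :
    wedgeNorm a (a + b) = wedgeNorm a b := by
  rw [wedgeNorm, wedgeNorm, norm_add_sq_real, inner_add_right, real_inner_self_eq_norm_sq]
  ring_nf

theorem mengerWeight_mul_rpow_le_invR {n : ℕ} {p q : ℝ} (hp : 0 ≤ p) (hq : 0 ≤ q)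
    {x y z : EuclideanSpace ℝ (Fin n)} (hxy : x ≠ y) (hyz : y ≠ z)
    (hinner : 0 ≤ inner ℝ (y - x) (z - y)) :
    (√2)⁻¹ ^ q * mengerWeight p q ‖y - x‖ ‖z - y‖ *
        ‖NormedSpace.normalize (y - x) - NormedSpace.normalize (z - y)‖ ^ q ≤ invR p q x y z := by
  set A := ‖y - x‖
  set B := ‖z - y‖
  set T := ‖NormedSpace.normalize (y - x) - NormedSpace.normalize (z - y)‖
  have hA0 : 0 < A := norm_sub_pos_iff.2 hxy.symm
  have hB0 : 0 < B := norm_sub_pos_iff.2 hyz.symm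
  have hzx : z - x = (y - x) + (z - y) := by abel
  have hzx_le : ‖z - x‖ ≤ A + B := by
    rw [hzx]
    exact norm_add_le _ _
  have hzx_pos : 0 < ‖z - x‖ := by
    have hsq : A ^ 2 ≤ ‖z - x‖ ^ 2 := by
      rw [hzx, norm_add_sq_real]
      nlinarith [sq_nonneg B]
    exact hA0.trans_le (le_of_sq_le_sq hsq (norm_nonneg _))
  have hwedge : (√2)⁻¹ * (A * B * T) ≤ wedgeNorm (y - x) (z - x) := by
    rw [hzx, wedgeNorm_self_add, inv_mul_le_iff₀ (by positivity)]
    exact norm_mul_norm_mul_norm_normalize_sub_le hinner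
  calc (√2)⁻¹ ^ q * mengerWeight p q A B * T ^ q
      = ((√2)⁻¹ * (A * B * T)) ^ q / (A * B * (A + B)) ^ p := by
        rw [mengerWeight, Real.rpow_sub (by positivity), Real.rpow_neg (by positivity),
          Real.mul_rpow (x := (√2)⁻¹) (by positivity) (by positivity),
          Real.mul_rpow (x := A * B) (y := T) (by positivity) (by positivity),
          Real.mul_rpow (x := A * B) (y := A + B) (by positivity) (by positivity)]
        ring
    _ ≤ wedgeNorm (y - x) (z - x) ^ q / (B * A * ‖z - x‖) ^ p := by
        have hwedge_nonneg : 0 ≤ wedgeNorm (y - x) (z - x) := Real.sqrt_nonneg _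
        rw [mul_comm B A]
        gcongr
    _ = invR p q x y z := by rw [invR, norm_sub_rev y z]

end ChordGeometry

section Cone

variable {E : Type*} [NormedAddCommGroup E] [NormedSpace ℝ E]

theorem norm_sub_smul_le_of_norm_deriv_sub_le {γ : ℝ → E}
    (hγ : Differentiable ℝ γ) {J : Set ℝ} (hJ : Convex ℝ J) {v : E} {ε : ℝ}
    (hv : ∀ y ∈ J, ‖deriv γ y - v‖ ≤ ε) {x y : ℝ} (hx : x ∈ J) (hy : y ∈ J) :
    ‖γ y - γ x - (y - x) • v‖ ≤ ε * |y - x| := by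
  have hd (y : ℝ) : HasDerivAt (fun y => γ y - y • v) (deriv γ y - v) y := by
    simpa using (hγ y).hasDerivAt.fun_sub ((hasDerivAt_id y).smul_const v)
  have := hJ.norm_image_sub_le_of_norm_hasDerivWithin_le
    (fun y _ => (hd y).hasDerivWithinAt) hv hx hy
  rwa [sub_sub_sub_comm, ← sub_smul, Real.norm_eq_abs] at this

theorem norm_le_of_norm_sub_smul_le {v x : E} {a ε : ℝ} (ha : 0 ≤ a)
    (hx : ‖x - a • v‖ ≤ ε * a) : ‖x‖ ≤ (‖v‖ + ε) * a := by
  have h := norm_le_norm_add_norm_sub' x (a • v)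
  rw [norm_smul, Real.norm_of_nonneg ha] at h
  linarith

theorem ne_zero_of_norm_sub_smul_le {v x : E} {a ε : ℝ} (ha : 0 < a) (hε : ε < ‖v‖)
    (hx : ‖x - a • v‖ ≤ ε * a) : x ≠ 0 := by
  rintro rfl
  rw [zero_sub, norm_neg, norm_smul, Real.norm_of_nonneg ha.le, mul_comm] at hx
  exact hε.not_ge (le_of_mul_le_mul_right hx ha)

theorem inner_nonneg_of_norm_sub_smul_le {E : Type*} [NormedAddCommGroup E]
    [InnerProductSpace ℝ E] {v x y : E} {a c ε : ℝ} (ha : 0 ≤ a) (hc : 0 ≤ c)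
    (hε : 0 ≤ ε) (hεv : 3 * ε ≤ ‖v‖) (hx : ‖x - a • v‖ ≤ ε * a) (hy : ‖y - c • v‖ ≤ ε * c) :
    0 ≤ inner ℝ x y := by
  have hdecomp : inner ℝ x y =
      inner ℝ (x - a • v) (y - c • v) + a * inner ℝ v (y - c • v) + c * inner ℝ (x - a • v) v +
        a * c * ‖v‖ ^ 2 := by
    simp only [inner_sub_left, inner_sub_right, real_inner_smul_left, real_inner_smul_right,
      real_inner_self_eq_norm_sq]
    ring
  have hxy : -(ε * a * (ε * c)) ≤ inner ℝ (x - a • v) (y - c • v) :=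
    (neg_le_neg (by gcongr)).trans (neg_le_of_abs_le (abs_real_inner_le_norm _ _))
  have hvy : -(‖v‖ * (ε * c)) ≤ inner ℝ v (y - c • v) :=
    (neg_le_neg (by gcongr)).trans (neg_le_of_abs_le (abs_real_inner_le_norm _ _))
  have hxv : -(ε * a * ‖v‖) ≤ inner ℝ (x - a • v) v :=
    (neg_le_neg (by gcongr)).trans (neg_le_of_abs_le (abs_real_inner_le_norm _ _))
  calc 0 ≤ a * c * (‖v‖ ^ 2 - 2 * ε * ‖v‖ - ε ^ 2) :=
        mul_nonneg (mul_nonneg ha hc) (by nlinarith)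
    _ = -(ε * a * (ε * c)) + a * -(‖v‖ * (ε * c)) + c * -(ε * a * ‖v‖) + a * c * ‖v‖ ^ 2 := by ring
    _ ≤ inner ℝ x y := by
        rw [hdecomp]
        gcongr

end Cone

section ChordDirection

variable {E : Type*} [NormedAddCommGroup E] [NormedSpace ℝ E] {γ : ℝ → E}

/-- The unit vector along the chord of `γ` from `γ u` to `γ (u + a)`, for measuring how much `γ`
bends between two consecutive chords; it is `0` if the chord is degenerate. -/
def chordDirection (γ : ℝ → E) (a u : ℝ) : E :=
  NormedSpace.normalize (γ (u + a) - γ u)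

theorem stronglyMeasurable_chordDirection (hγ : Continuous γ) :
    StronglyMeasurable (Function.uncurry (chordDirection γ)) := by
  have hchord : Continuous fun x : ℝ × ℝ => γ (x.2 + x.1) - γ x.2 := by fun_prop
  exact hchord.norm.measurable.inv.stronglyMeasurable.smul hchord.stronglyMeasurable

theorem tendsto_chordDirection {v : E} {s : ℝ} (hγ : HasStrictDerivAt γ v s) (hv : v ≠ 0) :
    Tendsto (Function.uncurry (chordDirection γ)) (𝓝[>] 0 ×ˢ 𝓝 s)
      (𝓝 (NormedSpace.normalize v)) := by
  have hpair : Tendsto (fun x : ℝ × ℝ => (x.2 + x.1, x.2)) (𝓝[>] 0 ×ˢ 𝓝 s) (𝓝 (s, s)) := by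
    have hcont : Continuous fun x : ℝ × ℝ => (x.2 + x.1, x.2) := by fun_prop
    refine (hcont.tendsto' (0, s) (s, s) (by simp)).mono_left ?_
    rw [nhds_prod_eq]
    exact Filter.prod_mono_left _ nhdsWithin_le_nhds
  have hquot : Tendsto (fun x : ℝ × ℝ => x.1⁻¹ • (γ (x.2 + x.1) - γ x.2))
      (𝓝[>] 0 ×ˢ 𝓝 s) (𝓝 v) := by
    have hlittle : (fun x : ℝ × ℝ => γ (x.2 + x.1) - γ x.2 - x.1 • v)
        =o[𝓝[>] 0 ×ˢ 𝓝 s] fun x => x.1 := by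
      simpa [Function.comp_def] using hγ.hasStrictFDerivAt.isLittleO.comp_tendsto hpair
    rw [← zero_add v]
    refine (hlittle.tendsto_inv_smul_nhds_zero.add_const v).congr' ?_
    filter_upwards [tendsto_fst.eventually self_mem_nhdsWithin] with x hx
    simp [smul_sub, inv_smul_smul₀ (ne_of_gt hx)]
  have hnormalize : ContinuousAt (NormedSpace.normalize : E → E) v :=
    (continuousAt_id.norm.inv₀ (norm_ne_zero_iff.2 hv)).smul continuousAt_id
  refine (hnormalize.tendsto.comp hquot).congr' ?_
  filter_upwards [tendsto_fst.eventually self_mem_nhdsWithin] with x hx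
  exact NormedSpace.normalize_smul_of_pos (inv_pos.2 hx) _

end ChordDirection

theorem lintegral_lintegral_lintegral_rotate {α β τ : Type*} [MeasurableSpace α]
    [MeasurableSpace β] [MeasurableSpace τ] {μ : Measure α} {ν : Measure β} {ρ : Measure τ}
    [SFinite μ] [SFinite ν] [SFinite ρ] {f : α → β → τ → ℝ≥0∞}
    (hf : Measurable fun x : α × β × τ => f x.1 x.2.1 x.2.2) :
    ∫⁻ a, ∫⁻ c, ∫⁻ u, f a c u ∂ρ ∂ν ∂μ = ∫⁻ u, ∫⁻ a, ∫⁻ c, f a c u ∂ν ∂μ ∂ρ := by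
  have hcu (a : α) : Measurable (Function.uncurry (f a)) := hf.comp measurable_prodMk_left
  have hau : Measurable (Function.uncurry fun a u => ∫⁻ c, f a c u ∂ν) :=
    Measurable.lintegral_prod_right' (f := fun x : (α × τ) × β => f x.1.1 x.2 x.1.2) <|
      hf.comp (by fun_prop : Measurable fun x : (α × τ) × β => (x.1.1, x.2, x.1.2))
  rw [← lintegral_lintegral_swap hau.aemeasurable]
  exact lintegral_congr fun a => lintegral_lintegral_swap (hcu a).aemeasurable

theorem setLIntegral_increments_le {s t δ : ℝ} {K : Set ℝ} (hK : Ioo s (t + 2 * δ) ⊆ K)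
    (F : ℝ → ℝ → ℝ → ℝ≥0∞) :
    ∫⁻ u in Ioo s t, ∫⁻ a in Ioo 0 δ, ∫⁻ c in Ioo 0 δ, F u (u + a) (u + a + c) ≤
      ∫⁻ x in K, ∫⁻ y in K, ∫⁻ z in K, F x y z := by
  rcases le_or_gt δ 0 with hδ | hδ
  · simp [Ioo_eq_empty hδ.not_gt]
  calc ∫⁻ u in Ioo s t, ∫⁻ a in Ioo 0 δ, ∫⁻ c in Ioo 0 δ, F u (u + a) (u + a + c)
      ≤ ∫⁻ u in Ioo s t, ∫⁻ a in Ioo 0 δ, ∫⁻ z in K, F u (u + a) z :=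
        setLIntegral_mono' measurableSet_Ioo fun u hu =>
          setLIntegral_mono' measurableSet_Ioo fun a ha =>
            setLIntegral_const_add_le
              (fun c hc => hK ⟨by linarith [hu.1, ha.1, hc.1], by linarith [hu.2, ha.2, hc.2]⟩) _
    _ ≤ ∫⁻ u in Ioo s t, ∫⁻ y in K, ∫⁻ z in K, F u y z :=
        setLIntegral_mono' measurableSet_Ioo fun u hu =>
          setLIntegral_const_add_le
            (fun a ha => hK ⟨by linarith [hu.1, ha.1], by linarith [hu.2, ha.2]⟩)
            fun y => ∫⁻ z in K, F u y z
    _ ≤ ∫⁻ x in K, ∫⁻ y in K, ∫⁻ z in K, F x y z :=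
        lintegral_mono_set ((Ioo_subset_Ioo_right (by linarith)).trans hK)

theorem lintegral_mengerWeight_mul_lintegral_turn {E : Type*} [NormedAddCommGroup E] {p q : ℝ}
    {D : ℝ → ℝ → E} (hD : StronglyMeasurable (Function.uncurry D)) {I J K : Set ℝ} :
    ∫⁻ a in J, ∫⁻ c in K, ENNReal.ofReal (mengerWeight p q a c) *
        ∫⁻ u in I, ‖turn D a c u‖ₑ ^ q =
      ∫⁻ u in I, ∫⁻ a in J, ∫⁻ c in K,
        ENNReal.ofReal (mengerWeight p q a c) * ‖turn D a c u‖ₑ ^ q := by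
  have hmeas : Measurable fun x : ℝ × ℝ × ℝ =>
      ENNReal.ofReal (mengerWeight p q x.1 x.2.1) * ‖turn D x.1 x.2.1 x.2.2‖ₑ ^ q :=
    ((measurable_mengerWeight p q).ennreal_ofReal.comp
      (by fun_prop : Measurable fun x : ℝ × ℝ × ℝ => (x.1, x.2.1))).mul
      (measurable_enorm_turn_rpow hD)
  rw [← lintegral_lintegral_lintegral_rotate hmeas]
  simp_rw [lintegral_const_mul' _ _ ENNReal.ofReal_ne_top]

section Energy

variable {n : ℕ} {γ : ℝ → EuclideanSpace ℝ (Fin n)} {p q : ℝ} {v : EuclideanSpace ℝ (Fin n)}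

theorem mengerWeight_mul_norm_turn_rpow_le_invR (hγ : Differentiable ℝ γ) (hq : 0 ≤ q)
    (hqp : q ≤ p) (hv : v ≠ 0) {J : Set ℝ} (hJ : Convex ℝ J)
    (hJv : ∀ y ∈ J, ‖deriv γ y - v‖ ≤ ‖v‖ / 3) {u a c : ℝ} (ha : 0 < a) (hc : 0 < c)
    (hu : u ∈ J) (hua : u + a ∈ J) (huac : u + a + c ∈ J) :
    (√2)⁻¹ ^ q * (‖v‖ + ‖v‖ / 3) ^ (2 * q - 3 * p) *
        (mengerWeight p q a c * ‖turn (chordDirection γ) a c u‖ ^ q) ≤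
      invR p q (γ u) (γ (u + a)) (γ (u + a + c)) := by
  have hchord {x h : ℝ} (hh : 0 < h) (hx : x ∈ J) (hxh : x + h ∈ J) :
      ‖γ (x + h) - γ x - h • v‖ ≤ ‖v‖ / 3 * h := by
    simpa [abs_of_pos hh] using norm_sub_smul_le_of_norm_deriv_sub_le hγ hJ hJv hx hxh
  have hv0 : 0 < ‖v‖ := norm_pos_iff.2 hv
  have hne₁ := ne_zero_of_norm_sub_smul_le ha (by linarith) (hchord ha hu hua)
  have hne₂ := ne_zero_of_norm_sub_smul_le hc (by linarith) (hchord hc hua huac)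
  have hweight : (‖v‖ + ‖v‖ / 3) ^ (2 * q - 3 * p) * mengerWeight p q a c ≤
      mengerWeight p q ‖γ (u + a) - γ u‖ ‖γ (u + a + c) - γ (u + a)‖ := by
    rw [← mengerWeight_mul_mul (by positivity) ha.le hc.le]
    exact mengerWeight_anti (hq.trans hqp) hqp
      (norm_pos_iff.2 hne₁) (norm_le_of_norm_sub_smul_le ha.le (hchord ha hu hua))
      (norm_pos_iff.2 hne₂) (norm_le_of_norm_sub_smul_le hc.le (hchord hc hua huac))
  calc (√2)⁻¹ ^ q * (‖v‖ + ‖v‖ / 3) ^ (2 * q - 3 * p) *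
        (mengerWeight p q a c * ‖turn (chordDirection γ) a c u‖ ^ q)
      = (√2)⁻¹ ^ q * ((‖v‖ + ‖v‖ / 3) ^ (2 * q - 3 * p) * mengerWeight p q a c) *
          ‖turn (chordDirection γ) a c u‖ ^ q := by ring
    _ ≤ (√2)⁻¹ ^ q * mengerWeight p q ‖γ (u + a) - γ u‖ ‖γ (u + a + c) - γ (u + a)‖ *
          ‖turn (chordDirection γ) a c u‖ ^ q := by gcongr
    _ ≤ invR p q (γ u) (γ (u + a)) (γ (u + a + c)) :=
        mengerWeight_mul_rpow_le_invR (hq.trans hqp) hq (sub_ne_zero.1 hne₁).symm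
          (sub_ne_zero.1 hne₂).symm (inner_nonneg_of_norm_sub_smul_le ha.le hc.le (by positivity)
            (by linarith) (hchord ha hu hua) (hchord hc hua huac))

theorem exists_mul_mengerWeight_mul_norm_turn_rpow_le (hγ : Differentiable ℝ γ) (hq : 0 ≤ q)
    (hqp : q ≤ p) (hv : v ≠ 0) {J : Set ℝ} (hJ : Convex ℝ J)
    (hJv : ∀ y ∈ J, ‖deriv γ y - v‖ ≤ ‖v‖ / 3) :
    ∃ C > 0, ∀ {u a c : ℝ}, 0 < a → 0 < c → u ∈ J → u + a ∈ J → u + a + c ∈ J →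
      C * (mengerWeight p q a c * ‖turn (chordDirection γ) a c u‖ ^ q) ≤
        ‖deriv γ u‖ * ‖deriv γ (u + a)‖ * ‖deriv γ (u + a + c)‖ *
          invR p q (γ u) (γ (u + a)) (γ (u + a + c)) := by
  have hspeed {y : ℝ} (hy : y ∈ J) : 2 / 3 * ‖v‖ ≤ ‖deriv γ y‖ := by
    linarith [hJv y hy, norm_le_norm_add_norm_sub (deriv γ y) v]
  refine ⟨2 / 3 * ‖v‖ * (2 / 3 * ‖v‖) * (2 / 3 * ‖v‖) *
    ((√2)⁻¹ ^ q * (‖v‖ + ‖v‖ / 3) ^ (2 * q - 3 * p)), by positivity,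
    fun {u a c} ha hc hu hua huac => ?_⟩
  have hweight_nonneg := mengerWeight_nonneg p q ha.le hc.le
  rw [mul_assoc (_ * _)]
  gcongr
  · exact hspeed hu
  · exact hspeed hua
  · exact hspeed huac
  · exact mengerWeight_mul_norm_turn_rpow_le_invR hγ hq hqp hv hJ hJv ha hc hu hua huac

theorem lintegral_mengerWeight_mul_turn_ne_top (hγ : Differentiable ℝ γ) (hq : 0 ≤ q)
    (hqp : q ≤ p) (hfin : menger p q γ (deriv γ) ≠ ⊤) (hv : v ≠ 0) {s t δ : ℝ}
    (hsub : Ioo s (t + 2 * δ) ⊆ Ico 0 1)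
    (hderiv : ∀ y ∈ Ioo s (t + 2 * δ), ‖deriv γ y - v‖ ≤ ‖v‖ / 3) :
    ∫⁻ a in Ioo 0 δ, ∫⁻ c in Ioo 0 δ, ENNReal.ofReal (mengerWeight p q a c) *
      ∫⁻ u in Ioo s t, ‖turn (chordDirection γ) a c u‖ₑ ^ q ≠ ⊤ := by
  obtain ⟨C, hC, hle⟩ :=
    exists_mul_mengerWeight_mul_norm_turn_rpow_le hγ hq hqp hv (convex_Ioo _ _) hderiv
  have hbound : ENNReal.ofReal C * ∫⁻ a in Ioo 0 δ, ∫⁻ c in Ioo 0 δ,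
      ENNReal.ofReal (mengerWeight p q a c) *
        ∫⁻ u in Ioo s t, ‖turn (chordDirection γ) a c u‖ₑ ^ q ≤ menger p q γ (deriv γ) := by
    calc _ = ∫⁻ u in Ioo s t, ∫⁻ a in Ioo 0 δ, ∫⁻ c in Ioo 0 δ, ENNReal.ofReal C *
          (ENNReal.ofReal (mengerWeight p q a c) * ‖turn (chordDirection γ) a c u‖ₑ ^ q) := by
          rw [lintegral_mengerWeight_mul_lintegral_turn
            (stronglyMeasurable_chordDirection hγ.continuous)]
          simp_rw [lintegral_const_mul' _ _ ENNReal.ofReal_ne_top]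
      _ ≤ ∫⁻ u in Ioo s t, ∫⁻ a in Ioo 0 δ, ∫⁻ c in Ioo 0 δ,
          ENNReal.ofReal (‖deriv γ u‖ * ‖deriv γ (u + a)‖ * ‖deriv γ (u + a + c)‖ *
            invR p q (γ u) (γ (u + a)) (γ (u + a + c))) := by
          refine setLIntegral_mono' measurableSet_Ioo fun u hu =>
            setLIntegral_mono' measurableSet_Ioo fun a ha =>
              setLIntegral_mono' measurableSet_Ioo fun c hc => ?_
          rw [← ofReal_norm, ENNReal.ofReal_rpow_of_nonneg (norm_nonneg _) hq,
            ← ENNReal.ofReal_mul (mengerWeight_nonneg p q ha.1.le hc.1.le),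
            ← ENNReal.ofReal_mul hC.le]
          refine ENNReal.ofReal_le_ofReal (hle ha.1 hc.1 ⟨?_, ?_⟩ ⟨?_, ?_⟩ ⟨?_, ?_⟩) <;>
            linarith [hu.1, hu.2, ha.1, ha.2, hc.1, hc.2]
      _ ≤ menger p q γ (deriv γ) :=
          setLIntegral_increments_le hsub fun x y z => ENNReal.ofReal
            (‖deriv γ x‖ * ‖deriv γ y‖ * ‖deriv γ z‖ * invR p q (γ x) (γ y) (γ z))
  intro htop
  rw [htop, ENNReal.mul_top (by simpa), top_le_iff] at hbound
  exact hfin hbound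

theorem normalize_deriv_eq_of_norm_deriv_sub_le (hq : 1 ≤ q) (hp : q + 2 / 3 ≤ p)
    (hγ : ContDiff ℝ 1 γ) (hfin : menger p q γ (deriv γ) ≠ ⊤) (hv : v ≠ 0) {s t β : ℝ}
    (hs : deriv γ s ≠ 0) (ht : deriv γ t ≠ 0) (hst : s < t) (htβ : t < β) (hsub : Ioo s β ⊆ Ico 0 1)
    (hderiv : ∀ y ∈ Ioo s β, ‖deriv γ y - v‖ ≤ ‖v‖ / 3) :
    NormedSpace.normalize (deriv γ s) = NormedSpace.normalize (deriv γ t) := by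
  have hD := stronglyMeasurable_chordDirection hγ.continuous
  have hstrict (x : ℝ) : HasStrictDerivAt γ (deriv γ x) x :=
    hγ.contDiffAt.hasStrictDerivAt one_ne_zero
  by_contra hne
  obtain ⟨b, htb, hbβ⟩ := exists_between htβ
  obtain ⟨C, hC, r, hr, hlow⟩ :=
    exists_mul_rpow_le_setLIntegral_turn hq hD hst htb hne
      (tendsto_chordDirection (hstrict s) hs) (tendsto_chordDirection (hstrict t) ht)
  obtain ⟨δ, hδ, hδr, hδβ⟩ : ∃ δ > 0, δ ≤ r ∧ b + 2 * δ ≤ β :=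
    ⟨min r ((β - b) / 2), lt_min hr (by linarith), min_le_left _ _,
      by linarith [min_le_right r ((β - b) / 2)]⟩
  have hsub' : Ioo s (b + 2 * δ) ⊆ Ioo s β := Ioo_subset_Ioo_right hδβ
  have hmeas : Measurable fun x : ℝ × ℝ =>
      ∫⁻ u in Ioo s b, ‖turn (chordDirection γ) x.1 x.2 u‖ₑ ^ q :=
    ((measurable_enorm_turn_rpow hD).comp
      MeasurableEquiv.prodAssoc.measurable).lintegral_prod_right'
  refine lintegral_mengerWeight_mul_turn_ne_top (hγ.differentiable one_ne_zero) (by linarith)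
    (by linarith) hfin hv (hsub'.trans hsub) (fun y hy => hderiv y (hsub' hy)) ?_
  exact lintegral_lintegral_mengerWeight_mul_eq_top hp hδ hC hmeas fun a ha c hc =>
    hlow a (Ioo_subset_Ioo_right hδr ha) c (Ioo_subset_Ioo_right hδr hc)

theorem normalize_deriv_eq_of_menger_ne_top (hq : 1 ≤ q) (hp : q + 2 / 3 ≤ p)
    (hγ : ContDiff ℝ 1 γ) (hγ' : ∀ u, deriv γ u ≠ 0) (hfin : menger p q γ (deriv γ) ≠ ⊤)
    {x y : ℝ} (hx : x ∈ Ioo 0 1) (hy : y ∈ Ioo 0 1) :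
    NormedSpace.normalize (deriv γ x) = NormedSpace.normalize (deriv γ y) := by
  refine isPreconnected_Ioo.induction₂
    (fun x y => NormedSpace.normalize (deriv γ x) = NormedSpace.normalize (deriv γ y))
    (fun x hx => ?_) (fun _ _ _ _ _ _ => Eq.trans) (fun _ _ _ _ => Eq.symm) hx hy
  have hnear : ∀ᶠ y in 𝓝 x, y ∈ Ioo 0 1 ∧ ‖deriv γ y - deriv γ x‖ < ‖deriv γ x‖ / 3 := by
    have hball : Metric.ball (deriv γ x) (‖deriv γ x‖ / 3) ∈ 𝓝 (deriv γ x) :=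
      Metric.ball_mem_nhds _ (div_pos (norm_pos_iff.2 (hγ' x)) three_pos)
    filter_upwards [isOpen_Ioo.mem_nhds hx, (hγ.continuous_deriv le_rfl).continuousAt hball]
      with y hy hyball using ⟨hy, mem_ball_iff_norm.1 hyball⟩
  obtain ⟨r, hr, hball⟩ := (nhds_basis_Ioo_pos x).eventually_iff.1 hnear
  have heq {s t : ℝ} (hs : x - r < s) (hst : s < t) (ht : t < x + r) :
      NormedSpace.normalize (deriv γ s) = NormedSpace.normalize (deriv γ t) :=
    normalize_deriv_eq_of_norm_deriv_sub_le hq hp hγ hfin (hγ' x) (hγ' s) (hγ' t) hst ht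
      (fun y hy => Ioo_subset_Ico_self (hball ⟨hs.trans hy.1, hy.2⟩).1)
      fun y hy => (hball ⟨hs.trans hy.1, hy.2⟩).2.le
  filter_upwards [nhdsWithin_le_nhds ((nhds_basis_Ioo_pos x).mem_of_mem hr)] with y hy
  rcases lt_trichotomy x y with hxy | rfl | hxy
  · exact heq (by linarith) hxy hy.2
  · rfl
  · exact (heq hy.1 hxy (by linarith)).symm

end Energy

theorem exists_inner_deriv_eq_zero {E : Type*} [NormedAddCommGroup E] [InnerProductSpace ℝ E]
    {γ : ℝ → E} (hγ : Differentiable ℝ γ) {a b : ℝ} (hab : a < b) (hγab : γ a = γ b) (v : E) :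
    ∃ u ∈ Ioo a b, inner ℝ (deriv γ u) v = 0 := by
  have hderiv (u : ℝ) : HasDerivAt (fun u => inner ℝ (γ u) v) (inner ℝ (deriv γ u) v) u := by
    simpa using (hγ u).hasDerivAt.inner ℝ (hasDerivAt_const u v)
  exact exists_hasDerivAt_eq_zero hab (fun u _ => (hderiv u).continuousAt.continuousWithinAt)
    (by rw [hγab]) fun u _ => hderiv u

theorem no_finite_energy_C1_knots_general {n : ℕ} {p q : ℝ} (hq : 1 ≤ q) (hp : q + 2 / 3 ≤ p)
    {γ : ℝ → EuclideanSpace ℝ (Fin n)} (hC1 : ContDiff ℝ 1 γ) (hclosed : γ 0 = γ 1)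
    (hreg : ∀ u, deriv γ u ≠ 0) : menger p q γ (deriv γ) = ⊤ := by
  by_contra hfin
  obtain ⟨u, hu, hinner⟩ := exists_inner_deriv_eq_zero (hC1.differentiable one_ne_zero)
    zero_lt_one hclosed (NormedSpace.normalize (deriv γ (1 / 2)))
  rw [normalize_deriv_eq_of_menger_ne_top hq hp hC1 hreg hfin
    (y := u) ⟨by norm_num, by norm_num⟩ hu, NormedSpace.normalize, real_inner_smul_right,
    real_inner_self_eq_norm_sq] at hinner
  simp [hreg u] at hinner

/-- **Singular energies.** For `q > 1` and `p ≥ q + 2/3`, every injective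
arc-length parametrized closed `C¹` curve has infinite energy: there are no
closed finite-energy `C¹` knots at all in this parameter range. -/
theorem no_finite_energy_C1_knots (n : ℕ) (p q : ℝ)
    (hq : 1 < q) (hp : q + 2/3 ≤ p)
    (γ : ℝ → EuclideanSpace ℝ (Fin n))
    (hC1 : ContDiff ℝ 1 γ) (hper : Function.Periodic γ 1)
    (hinj : InjCircle γ) (harc : ∀ u, ‖deriv γ u‖ = 1) :
    menger p q γ (deriv γ) = ⊤ :=
  no_finite_energy_C1_knots_general hq.le hp hC1 (by simpa using (hper 0).symm)
    fun u => by simp [← norm_pos_iff, harc u]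
end
end

section
/- Let p, q > 0 with p ≥ q + 2/3. Then every closed curve γ ∈ C³(ℝ/ℤ,ℝⁿ) parametrized by arc-length satisfies E_{p,q}(γ) = ∞; that is, there are no closed finite-energy C³ curves in this parameter range. -/
open MeasureTheory Set Filter Topology
open scoped ENNReal

noncomputable section

/-!
Near a point `t` where `γ' t` and `γ'' t` are linearly independent, the integrand of `E_{p,q}` is
comparable to `V ^ (q - p)`, where `V = |v - u| |w - u| |w - v|`: the three sides of the triangle
are parameter differences times divided differences of `γ`, and shearing the parallelogram turns its
area into `V` times the area spanned by a first and a second divided difference, which converge to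
`γ' t` and `γ'' t / 2`. Integrating `V ^ s` over the `w` with `v < w < 2 v - u`, where
`V ≤ 2 (v - u) ^ 3`, leaves a multiple of `(v - u) ^ (3 s + 1)`, which is not integrable at `v = u`
when `s ≤ -2/3`. Finally, a closed regular curve has such a point `t`, namely where it is farthest
from its starting point: there its position vector, seen from the starting point, is orthogonal to
the velocity but, by the second derivative test, not to the acceleration.
-/

section DividedDifferences

variable {E : Type*} [NormedAddCommGroup E] [NormedSpace ℝ E] {f f' : ℝ → E} {a : E} {t : ℝ}
  {ι : Type*} {l : Filter ι} {u v w : ι → ℝ}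

theorem norm_sub_eq_abs_mul_norm_slope (f : ℝ → E) (u v : ℝ) :
    ‖f v - f u‖ = |v - u| * ‖slope f u v‖ := by
  rw [← Real.norm_eq_abs, ← norm_smul, sub_smul_slope, vsub_eq_sub]

theorem tendsto_slope_of_hasStrictDerivAt (hf : HasStrictDerivAt f a t)
    (hu : Tendsto u l (𝓝 t)) (hv : Tendsto v l (𝓝 t)) (huv : ∀ᶠ i in l, u i ≠ v i) :
    Tendsto (fun i => slope f (u i) (v i)) l (𝓝 a) := by
  have hlittle := (hf.hasStrictFDerivAt.isLittleO.comp_tendsto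
    (hv.prodMk_nhds hu)).tendsto_inv_smul_nhds_zero
  rw [← tendsto_sub_nhds_zero_iff]
  refine hlittle.congr' (huv.mono fun i hi => ?_)
  have hne : v i - u i ≠ 0 := sub_ne_zero.2 hi.symm
  simp [slope, smul_sub, inv_smul_smul₀ hne]

theorem hasDerivAt_inv_smul_comp_segment {u x r : ℝ} (hux : u ≠ x)
    (hf : HasDerivAt f a (u + r * (x - u))) :
    HasDerivAt (fun r => (x - u)⁻¹ • f (u + r * (x - u))) a r := by
  have hline : HasDerivAt (fun r => u + r * (x - u)) (x - u) r := by
    simpa using ((hasDerivAt_id r).mul_const (x - u)).const_add u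
  simpa only [inv_smul_smul₀ (sub_ne_zero.2 hux.symm), Pi.smul_def, Function.comp_def] using
    (hf.scomp r hline).const_smul (x - u)⁻¹

/-- The second divided difference is the value at `1` of the curve `φ` below, which vanishes at `0`
and whose derivative is controlled by the increments of `f'`. -/
theorem norm_slope_slope_sub_half_smul_le {s : Set ℝ} {ε u v w : ℝ} (hs : Convex ℝ s)
    (hf : ∀ x ∈ s, HasDerivAt f (f' x) x)
    (hf' : ∀ x ∈ s, ∀ y ∈ s, ‖f' x - f' y - (x - y) • a‖ ≤ ε * |x - y|)
    (hu : u ∈ s) (hv : v ∈ s) (hw : w ∈ s) (huv : u ≠ v) (huw : u ≠ w) (hvw : v ≠ w) :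
    ‖slope (slope f u) v w - (1 / 2 : ℝ) • a‖ ≤ ε := by
  have hwv : w - v ≠ 0 := sub_ne_zero.2 hvw.symm
  set φ : ℝ → E := fun r =>
    (w - u)⁻¹ • f (u + r * (w - u)) - (v - u)⁻¹ • f (u + r * (v - u)) - (r ^ 2 / 2 * (w - v)) • a
  have hmem : ∀ x ∈ s, ∀ r ∈ Icc (0 : ℝ) 1, u + r * (x - u) ∈ s := fun x hx r hr =>
    hs.add_smul_sub_mem hu hx hr
  have hφ : ∀ r ∈ Icc (0 : ℝ) 1, HasDerivAt φ
      (f' (u + r * (w - u)) - f' (u + r * (v - u)) - (r * (w - v)) • a) r := by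
    intro r hr
    refine ((hasDerivAt_inv_smul_comp_segment huw (hf _ (hmem w hw r hr))).sub
      (hasDerivAt_inv_smul_comp_segment huv (hf _ (hmem v hv r hr)))).sub
        (HasDerivAt.smul_const ?_ a)
    refine (((hasDerivAt_pow 2 r).div_const 2).mul_const (w - v)).congr_deriv ?_
    norm_num
  have hbound : ∀ r ∈ Ico (0 : ℝ) 1,
      ‖f' (u + r * (w - u)) - f' (u + r * (v - u)) - (r * (w - v)) • a‖ ≤ ε * |w - v| := by
    intro r hr
    have hr' := Ico_subset_Icc_self hr
    have hincr := hf' _ (hmem w hw r hr') _ (hmem v hv r hr')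
    rw [show u + r * (w - u) - (u + r * (v - u)) = r * (w - v) by ring, abs_mul,
      abs_of_nonneg hr.1, mul_left_comm] at hincr
    exact hincr.trans (mul_le_of_le_one_left ((norm_nonneg _).trans (hf' w hw v hv)) hr.2.le)
  have hmvt := norm_image_sub_le_of_norm_deriv_le_segment_01'
    (fun r hr => (hφ r hr).hasDerivWithinAt) hbound
  have hφ_sub : φ 1 - φ 0 = (w - v) • (slope (slope f u) v w - (1 / 2 : ℝ) • a) := by
    rw [smul_sub, sub_smul_slope]
    simp only [φ, slope, vsub_eq_sub, one_mul, zero_mul, add_zero, add_sub_cancel]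
    module
  rw [hφ_sub, norm_smul, Real.norm_eq_abs, mul_comm] at hmvt
  exact le_of_mul_le_mul_right hmvt (abs_pos.2 hwv)

theorem tendsto_slope_slope_of_hasStrictDerivAt (hf : ∀ᶠ x in 𝓝 t, HasDerivAt f (f' x) x)
    (hf' : HasStrictDerivAt f' a t) (hu : Tendsto u l (𝓝 t)) (hv : Tendsto v l (𝓝 t))
    (hw : Tendsto w l (𝓝 t)) (huv : ∀ᶠ i in l, u i ≠ v i) (huw : ∀ᶠ i in l, u i ≠ w i)
    (hvw : ∀ᶠ i in l, v i ≠ w i) :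
    Tendsto (fun i => slope (slope f (u i)) (v i) (w i)) l (𝓝 ((1 / 2 : ℝ) • a)) := by
  refine Metric.nhds_basis_closedBall.tendsto_right_iff.2 fun ε hε => ?_
  have hincr := hf'.hasStrictFDerivAt.isLittleO.def hε
  rw [nhds_prod_eq, eventually_prod_self_iff'] at hincr
  obtain ⟨S, hS, hincr⟩ := hincr
  obtain ⟨r, hr, hball⟩ := Metric.mem_nhds_iff.1 (inter_mem hS hf)
  filter_upwards [hu (Metric.ball_mem_nhds t hr), hv (Metric.ball_mem_nhds t hr),
    hw (Metric.ball_mem_nhds t hr), huv, huw, hvw] with i hui hvi hwi huvi huwi hvwi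
  rw [mem_closedBall_iff_norm]
  exact norm_slope_slope_sub_half_smul_le (convex_ball t r) (fun x hx => (hball hx).2)
    (fun x hx y hy => hincr x (hball hx).1 y (hball hy).1) hui hvi hwi huvi huwi hvwi

end DividedDifferences

section FarthestPoint

theorem deriv_deriv_nonpos_of_isLocalMax {f : ℝ → ℝ} {x : ℝ} (hmax : IsLocalMax f x)
    (hf : ContinuousAt f x) : deriv (deriv f) x ≤ 0 := by
  by_contra! hpos
  have hmin : IsLocalMin f x := isLocalMin_of_deriv_deriv_pos hpos hmax.deriv_eq_zero hf
  have hconst : f =ᶠ[𝓝 x] fun _ => f x := by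
    filter_upwards [hmax, hmin] with y hle hge using le_antisymm hle hge
  simp [hconst.deriv.deriv_eq] at hpos

theorem exists_isLocalMax_norm_sub_sq {E : Type*} [NormedAddCommGroup E] {γ : ℝ → E} {a b : ℝ}
    (hγ : ContinuousOn γ (Icc a b)) (hclosed : γ a = γ b)
    (hne : ∃ s ∈ Icc a b, γ s ≠ γ a) :
    ∃ t ∈ Ioo a b, IsLocalMax (fun s => ‖γ s - γ a‖ ^ 2) t := by
  obtain ⟨s, hs, hsa⟩ := hne
  refine isCompact_Icc.exists_isLocalMax_mem_open Ioo_subset_Icc_self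
    ((hγ.sub continuousOn_const).norm.pow 2) hs (fun x hx => ?_) isOpen_Ioo
  have hpos : 0 < ‖γ s - γ a‖ ^ 2 := by have := norm_pos_iff.2 (sub_ne_zero.2 hsa); positivity
  rw [Icc_sdiff_Ioo_same (hs.1.trans hs.2)] at hx
  rcases hx with rfl | rfl <;> simpa [hclosed] using hpos

theorem exists_linearIndependent_deriv_of_closed {E : Type*} [NormedAddCommGroup E]
    [InnerProductSpace ℝ E] {γ : ℝ → E} {a b : ℝ} (hab : a < b) (hγ : Differentiable ℝ γ)
    (hγ' : Differentiable ℝ (deriv γ)) (hclosed : γ a = γ b) (hreg : ∀ t ∈ Ioo a b, deriv γ t ≠ 0) :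
    ∃ t ∈ Ioo a b, LinearIndependent ℝ ![deriv γ t, deriv (deriv γ) t] := by
  have hne : ∃ s ∈ Icc a b, γ s ≠ γ a := by
    obtain ⟨m, hm⟩ := exists_between hab
    obtain ⟨s, hs, hsm⟩ := (((hγ m).hasDerivAt.eventually_ne (hreg m hm)).and
      (mem_nhdsWithin_of_mem_nhds (Icc_mem_nhds hm.1 hm.2))).exists
    exact ⟨s, hsm, hs⟩
  obtain ⟨t, ht, hmax⟩ := exists_isLocalMax_norm_sub_sq hγ.continuous.continuousOn hclosed hne
  have hderiv : ∀ s, HasDerivAt (fun s => ‖γ s - γ a‖ ^ 2)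
      (2 * inner ℝ (γ s - γ a) (deriv γ s)) s := fun s =>
    ((hγ s).hasDerivAt.sub_const (γ a)).norm_sq
  have hderiv' : HasDerivAt (fun s => 2 * inner ℝ (γ s - γ a) (deriv γ s))
      (2 * (inner ℝ (γ t - γ a) (deriv (deriv γ) t) + ‖deriv γ t‖ ^ 2)) t := by
    rw [← real_inner_self_eq_norm_sq]
    exact (((hγ t).hasDerivAt.sub_const (γ a)).inner ℝ (hγ' t).hasDerivAt).const_mul 2
  have hvel : inner ℝ (γ t - γ a) (deriv γ t) = 0 := by
    simpa [(hderiv t).deriv] using hmax.deriv_eq_zero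
  have hacc : inner ℝ (γ t - γ a) (deriv (deriv γ) t) + ‖deriv γ t‖ ^ 2 ≤ 0 := by
    have := deriv_deriv_nonpos_of_isLocalMax hmax (hderiv t).continuousAt
    rw [funext fun s => (hderiv s).deriv, hderiv'.deriv] at this
    linarith
  have hspeed : 0 < ‖deriv γ t‖ := norm_pos_iff.2 (hreg t ht)
  refine ⟨t, ht, (LinearIndependent.pair_iff' (hreg t ht)).2 fun r hr => ?_⟩
  rw [← hr, inner_smul_right, hvel, mul_zero, zero_add] at hacc
  exact hacc.not_gt (by positivity)

end FarthestPoint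

section Vandermonde

/-- The absolute value of the Vandermonde determinant of three parameters, to whose `(q - p)`-th
power the integrand of `E_{p,q}` is comparable. -/
def absVandermonde (u v w : ℝ) : ℝ := |v - u| * |w - u| * |w - v|

variable {a b u v w s : ℝ}

theorem absVandermonde_pos (huv : u ≠ v) (huw : u ≠ w) (hvw : v ≠ w) :
    0 < absVandermonde u v w :=
  mul_pos (mul_pos (abs_sub_pos.2 huv.symm) (abs_sub_pos.2 huw.symm)) (abs_sub_pos.2 hvw.symm)

theorem absVandermonde_le_two_mul_pow (huv : u ≤ v) (hvw : v ≤ w) (hw : w ≤ 2 * v - u) :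
    absVandermonde u v w ≤ 2 * (v - u) ^ 3 := by
  rw [absVandermonde, abs_of_nonneg (by linarith), abs_of_nonneg (by linarith),
    abs_of_nonneg (by linarith)]
  calc (v - u) * (w - u) * (w - v) ≤ (v - u) * (2 * (v - u)) * (v - u) := by
        have hpos : 0 ≤ v - u := sub_nonneg.2 huv
        exact mul_le_mul (mul_le_mul_of_nonneg_left (by linarith) hpos) (by linarith)
          (sub_nonneg.2 hvw) (by positivity)
    _ = 2 * (v - u) ^ 3 := by ring

theorem lintegral_Ioo_sub_rpow_eq_top (hub : u < b) (hs : s ≤ -1) :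
    ∫⁻ v in Ioo u b, ENNReal.ofReal ((v - u) ^ s) = ⊤ := by
  have hzero : ∫⁻ x in Ioo 0 (b - u), ENNReal.ofReal (x ^ s) = ⊤ := by
    by_contra hfin
    have hint : IntegrableOn (fun x : ℝ => x ^ s) (Ioo 0 (b - u)) := by
      refine (lintegral_ofReal_ne_top_iff_integrable
        (Measurable.aestronglyMeasurable (by fun_prop)) ?_).1 hfin
      filter_upwards [ae_restrict_mem measurableSet_Ioo] with x hx using Real.rpow_nonneg hx.1.le s
    exact hs.not_gt ((intervalIntegral.integrableOn_Ioo_rpow_iff (sub_pos.2 hub)).1 hint)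
  have hshift := (measurePreserving_sub_right volume u).setLIntegral_comp_preimage_emb
    (measurableEmbedding_subRight u) (fun x => ENNReal.ofReal (x ^ s)) (Ioo 0 (b - u))
  simpa [hzero] using hshift

theorem ofReal_le_lintegral_absVandermonde_rpow (hs : s ≤ 0) (huv : u < v) (hvb : 2 * v - u ≤ b) :
    ENNReal.ofReal (2 ^ s * (v - u) ^ (3 * s + 1)) ≤
      ∫⁻ w in Ioo u b, ENNReal.ofReal (absVandermonde u v w ^ s) := by
  have hpos : 0 < v - u := sub_pos.2 huv
  calc ENNReal.ofReal (2 ^ s * (v - u) ^ (3 * s + 1))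
      = ∫⁻ _ in Ioo v (2 * v - u), ENNReal.ofReal ((2 * (v - u) ^ 3) ^ s) := by
        rw [setLIntegral_const, Real.volume_Ioo, ← ENNReal.ofReal_mul (by positivity),
          Real.mul_rpow zero_le_two (by positivity), ← Real.rpow_natCast_mul hpos.le,
          Real.rpow_add_one hpos.ne']
        congr 1
        push_cast
        ring
    _ ≤ ∫⁻ w in Ioo v (2 * v - u), ENNReal.ofReal (absVandermonde u v w ^ s) := by
        refine setLIntegral_mono' measurableSet_Ioo fun w hw => ENNReal.ofReal_le_ofReal ?_
        exact Real.rpow_le_rpow_of_nonpos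
          (absVandermonde_pos huv.ne (huv.trans hw.1).ne hw.1.ne)
          (absVandermonde_le_two_mul_pow huv.le hw.1.le hw.2.le) hs
    _ ≤ ∫⁻ w in Ioo u b, ENNReal.ofReal (absVandermonde u v w ^ s) :=
        lintegral_mono_set (Ioo_subset_Ioo huv.le hvb)

theorem lintegral_lintegral_absVandermonde_rpow_eq_top (hub : u < b) (hs : s ≤ -(2 / 3)) :
    ∫⁻ v in Ioo u b, ∫⁻ w in Ioo u b, ENNReal.ofReal (absVandermonde u v w ^ s) = ⊤ := by
  rw [eq_top_iff]
  calc ⊤ = ∫⁻ v in Ioo u ((u + b) / 2), ENNReal.ofReal (2 ^ s * (v - u) ^ (3 * s + 1)) := by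
        simp_rw [ENNReal.ofReal_mul (Real.rpow_nonneg zero_le_two s)]
        rw [lintegral_const_mul' _ _ ENNReal.ofReal_ne_top,
          lintegral_Ioo_sub_rpow_eq_top (by linarith) (by linarith), ENNReal.mul_top]
        simpa using Real.rpow_pos_of_pos zero_lt_two s
    _ ≤ ∫⁻ v in Ioo u ((u + b) / 2), ∫⁻ w in Ioo u b,
          ENNReal.ofReal (absVandermonde u v w ^ s) :=
        setLIntegral_mono' measurableSet_Ioo fun v hv =>
          ofReal_le_lintegral_absVandermonde_rpow (by linarith) hv.1 (by linarith [hv.2])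
    _ ≤ ∫⁻ v in Ioo u b, ∫⁻ w in Ioo u b, ENNReal.ofReal (absVandermonde u v w ^ s) :=
        lintegral_mono_set (Ioo_subset_Ioo_right (by linarith))

theorem lintegral_absVandermonde_rpow_eq_top (hab : a < b) (hs : s ≤ -(2 / 3)) :
    ∫⁻ u in Ioo a b, ∫⁻ v in Ioo a b, ∫⁻ w in Ioo a b,
      ENNReal.ofReal (absVandermonde u v w ^ s) = ⊤ := by
  rw [eq_top_iff]
  calc ⊤ = ∫⁻ _ in Ioo a b, ⊤ := by simp [hab]
    _ ≤ _ := setLIntegral_mono' measurableSet_Ioo fun u hu => ?_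
  rw [← lintegral_lintegral_absVandermonde_rpow_eq_top hu.2 hs]
  have hsub : Ioo u b ⊆ Ioo a b := Ioo_subset_Ioo_left hu.1.le
  exact lintegral_mono' (Measure.restrict_mono hsub le_rfl) fun v => lintegral_mono_set hsub

end Vandermonde

section WedgeNorm

variable {n : ℕ} (x y : EuclideanSpace ℝ (Fin n))

theorem wedgeNorm_nonneg : 0 ≤ wedgeNorm x y := Real.sqrt_nonneg _

theorem invR_nonneg {p q : ℝ} (x y z : EuclideanSpace ℝ (Fin n)) : 0 ≤ invR p q x y z :=
  div_nonneg (Real.rpow_nonneg (wedgeNorm_nonneg _ _) q) (by positivity)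

theorem wedgeNorm_eq_sqrt_det_gram : wedgeNorm x y = √(Matrix.gram ℝ ![x, y]).det := by
  simp [wedgeNorm, Matrix.det_fin_two, real_inner_comm, sq]

theorem wedgeNorm_pos_of_linearIndependent {x y : EuclideanSpace ℝ (Fin n)}
    (hxy : LinearIndependent ℝ ![x, y]) : 0 < wedgeNorm x y := by
  rw [wedgeNorm_eq_sqrt_det_gram]
  exact Real.sqrt_pos.2 (Matrix.posDef_gram_of_linearIndependent hxy).det_pos

theorem continuous_wedgeNorm :
    Continuous fun z : EuclideanSpace ℝ (Fin n) × EuclideanSpace ℝ (Fin n) =>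
      wedgeNorm z.1 z.2 := by
  unfold wedgeNorm
  fun_prop

theorem wedgeNorm_smul_smul (c d : ℝ) : wedgeNorm (c • x) (d • y) = |c * d| * wedgeNorm x y := by
  rw [wedgeNorm, wedgeNorm, ← Real.sqrt_sq_eq_abs, ← Real.sqrt_mul (sq_nonneg _)]
  congr 1
  simp only [norm_smul, real_inner_smul_left, real_inner_smul_right, mul_pow, Real.norm_eq_abs,
    sq_abs]
  ring

theorem wedgeNorm_smul_right (d : ℝ) : wedgeNorm x (d • y) = |d| * wedgeNorm x y := by
  simpa using wedgeNorm_smul_smul x y 1 d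

theorem wedgeNorm_add_right : wedgeNorm x (x + y) = wedgeNorm x y := by
  simp only [wedgeNorm, norm_add_sq_real, inner_add_right, real_inner_self_eq_norm_sq]
  congr 1
  ring

end WedgeNorm

section MengerIntegrand

variable {n : ℕ} {γ γ' : ℝ → EuclideanSpace ℝ (Fin n)} {a : EuclideanSpace ℝ (Fin n)}
  {p q t : ℝ}

theorem wedgeNorm_chords_eq_absVandermonde_mul (u v w : ℝ) :
    wedgeNorm (γ v - γ u) (γ w - γ u) =
      absVandermonde u v w * wedgeNorm (slope γ u v) (slope (slope γ u) v w) := by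
  have hv : γ v - γ u = (v - u) • slope γ u v := (sub_smul_slope γ u v).symm
  have hw : γ w - γ u =
      (w - u) • (slope γ u v + (w - v) • slope (slope γ u) v w) := by
    rw [sub_smul_slope, vsub_eq_sub, add_sub_cancel, sub_smul_slope, vsub_eq_sub]
  rw [hv, hw, wedgeNorm_smul_smul, wedgeNorm_add_right, wedgeNorm_smul_right, absVandermonde,
    abs_mul]
  ring

theorem invR_eq_absVandermonde_rpow_mul {u v w : ℝ} (huv : u ≠ v) (huw : u ≠ w) (hvw : v ≠ w) :
    invR p q (γ u) (γ v) (γ w) = absVandermonde u v w ^ (q - p) *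
      (wedgeNorm (slope γ u v) (slope (slope γ u) v w) ^ q /
        (‖slope γ v w‖ * ‖slope γ u v‖ * ‖slope γ u w‖) ^ p) := by
  have hV := absVandermonde_pos huv huw hvw
  have hsides : ‖γ v - γ w‖ * ‖γ v - γ u‖ * ‖γ w - γ u‖ =
      absVandermonde u v w * (‖slope γ v w‖ * ‖slope γ u v‖ * ‖slope γ u w‖) := by
    rw [norm_sub_rev (γ v)]
    simp only [norm_sub_eq_abs_mul_norm_slope, absVandermonde]
    ring
  rw [invR, hsides, wedgeNorm_chords_eq_absVandermonde_mul,
    Real.mul_rpow hV.le (wedgeNorm_nonneg _ _), Real.mul_rpow hV.le (by positivity),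
    Real.rpow_sub hV, mul_div_mul_comm]

theorem exists_pos_tendsto_absVandermonde_rpow_mul_invR {ι : Type*} {l : Filter ι} {u v w : ι → ℝ}
    (hγ : ∀ᶠ x in 𝓝 t, HasDerivAt γ (γ' x) x) (hγ' : HasStrictDerivAt γ' a t)
    (hli : LinearIndependent ℝ ![γ' t, a]) (hu : Tendsto u l (𝓝 t)) (hv : Tendsto v l (𝓝 t))
    (hw : Tendsto w l (𝓝 t)) (huv : ∀ᶠ i in l, u i ≠ v i) (huw : ∀ᶠ i in l, u i ≠ w i)
    (hvw : ∀ᶠ i in l, v i ≠ w i) :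
    ∃ G > 0, Tendsto (fun i => absVandermonde (u i) (v i) (w i) ^ (p - q) *
      invR p q (γ (u i)) (γ (v i)) (γ (w i))) l (𝓝 G) := by
  have hγt : HasStrictDerivAt γ (γ' t) t :=
    hasStrictDerivAt_of_hasDerivAt_of_continuousAt hγ hγ'.hasDerivAt.continuousAt
  have huv_slope := tendsto_slope_of_hasStrictDerivAt hγt hu hv huv
  have huw_slope := tendsto_slope_of_hasStrictDerivAt hγt hu hw huw
  have hvw_slope := tendsto_slope_of_hasStrictDerivAt hγt hv hw hvw
  have hslope_slope := tendsto_slope_slope_of_hasStrictDerivAt hγ hγ' hu hv hw huv huw hvw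
  have harea := (continuous_wedgeNorm.tendsto (γ' t, (1 / 2 : ℝ) • a)).comp
    (huv_slope.prodMk_nhds hslope_slope)
  have hsides := (hvw_slope.norm.mul huv_slope.norm).mul huw_slope.norm
  have harea_pos : 0 < wedgeNorm (γ' t) ((1 / 2 : ℝ) • a) := by
    rw [wedgeNorm_smul_right]
    exact mul_pos (by norm_num) (wedgeNorm_pos_of_linearIndependent hli)
  have hspeed : 0 < ‖γ' t‖ := norm_pos_iff.2 (hli.ne_zero 0)
  have hlim := (harea.rpow_const (.inl harea_pos.ne') (p := q)).div
    (hsides.rpow_const (.inl (by positivity)) (p := p)) (by positivity)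
  refine ⟨_, by positivity, hlim.congr' ?_⟩
  filter_upwards [huv, huw, hvw] with i huvi huwi hvwi
  rw [invR_eq_absVandermonde_rpow_mul huvi huwi hvwi, ← mul_assoc,
    ← Real.rpow_add (absVandermonde_pos huvi huwi hvwi), sub_add_sub_cancel', sub_self,
    Real.rpow_zero, one_mul]
  rfl

theorem exists_mul_absVandermonde_rpow_le (hqp : q ≠ p)
    (hγ : ∀ᶠ x in 𝓝 t, HasDerivAt γ (γ' x) x) (hγ' : HasStrictDerivAt γ' a t)
    (hli : LinearIndependent ℝ ![γ' t, a]) :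
    ∃ c > 0, ∀ᶠ x : ℝ × ℝ × ℝ in 𝓝 (t, t, t),
      c * absVandermonde x.1 x.2.1 x.2.2 ^ (q - p) ≤
        ‖γ' x.1‖ * ‖γ' x.2.1‖ * ‖γ' x.2.2‖ * invR p q (γ x.1) (γ x.2.1) (γ x.2.2) := by
  let D : Set (ℝ × ℝ × ℝ) := {x | x.1 ≠ x.2.1 ∧ x.1 ≠ x.2.2 ∧ x.2.1 ≠ x.2.2}
  have hD : ∀ᶠ x in 𝓝[D] (t, t, t), x ∈ D := self_mem_nhdsWithin
  have hu : Tendsto (fun x : ℝ × ℝ × ℝ => x.1) (𝓝[D] (t, t, t)) (𝓝 t) :=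
    (Continuous.tendsto' (by fun_prop) _ _ rfl).mono_left nhdsWithin_le_nhds
  have hv : Tendsto (fun x : ℝ × ℝ × ℝ => x.2.1) (𝓝[D] (t, t, t)) (𝓝 t) :=
    (Continuous.tendsto' (by fun_prop) _ _ rfl).mono_left nhdsWithin_le_nhds
  have hw : Tendsto (fun x : ℝ × ℝ × ℝ => x.2.2) (𝓝[D] (t, t, t)) (𝓝 t) :=
    (Continuous.tendsto' (by fun_prop) _ _ rfl).mono_left nhdsWithin_le_nhds
  obtain ⟨G, hG, hG_lim⟩ := exists_pos_tendsto_absVandermonde_rpow_mul_invR (p := p) (q := q)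
    hγ hγ' hli hu hv hw (hD.mono fun _ h => h.1) (hD.mono fun _ h => h.2.1)
    (hD.mono fun _ h => h.2.2)
  have hspeed := hγ'.hasDerivAt.continuousAt.tendsto.norm
  have hlim := (((hspeed.comp hu).mul (hspeed.comp hv)).mul (hspeed.comp hw)).mul hG_lim
  have hspeed_pos : 0 < ‖γ' t‖ := norm_pos_iff.2 (hli.ne_zero 0)
  obtain ⟨c, hc, hclim⟩ := exists_between (show 0 < ‖γ' t‖ * ‖γ' t‖ * ‖γ' t‖ * G by positivity)
  refine ⟨c, hc, ?_⟩
  filter_upwards [eventually_nhdsWithin_iff.1 (hlim.eventually_const_lt hclim)] with x hx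
  by_cases hxD : x ∈ D
  · have hV := absVandermonde_pos hxD.1 hxD.2.1 hxD.2.2
    rw [← neg_sub p q, Real.rpow_neg hV.le, ← div_eq_mul_inv,
      div_le_iff₀ (Real.rpow_pos_of_pos hV _)]
    exact (hx hxD).le.trans_eq (by simp only [Function.comp_apply]; ring)
  · have hV : absVandermonde x.1 x.2.1 x.2.2 = 0 := by
      contrapose! hxD
      simpa [absVandermonde, sub_eq_zero, D, eq_comm, and_assoc] using hxD
    rw [hV, Real.zero_rpow (sub_ne_zero.2 hqp), mul_zero]
    exact mul_nonneg (by positivity) (invR_nonneg _ _ _)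

theorem menger_eq_top_of_le {a b c s : ℝ} (hab : a < b) (hsub : Ioo a b ⊆ Ico 0 1) (hc : 0 < c)
    (hs : s ≤ -(2 / 3))
    (hle : ∀ u ∈ Ioo a b, ∀ v ∈ Ioo a b, ∀ w ∈ Ioo a b, c * absVandermonde u v w ^ s ≤
      ‖γ' u‖ * ‖γ' v‖ * ‖γ' w‖ * invR p q (γ u) (γ v) (γ w)) :
    menger p q γ γ' = ⊤ := by
  rw [eq_top_iff]
  calc ⊤ = ENNReal.ofReal c * ∫⁻ u in Ioo a b, ∫⁻ v in Ioo a b, ∫⁻ w in Ioo a b,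
          ENNReal.ofReal (absVandermonde u v w ^ s) := by
        rw [lintegral_absVandermonde_rpow_eq_top hab hs, ENNReal.mul_top (by simpa using hc)]
    _ = ∫⁻ u in Ioo a b, ∫⁻ v in Ioo a b, ∫⁻ w in Ioo a b,
          ENNReal.ofReal (c * absVandermonde u v w ^ s) := by
        simp_rw [ENNReal.ofReal_mul hc.le, lintegral_const_mul' _ _ ENNReal.ofReal_ne_top]
    _ ≤ ∫⁻ u in Ioo a b, ∫⁻ v in Ioo a b, ∫⁻ w in Ioo a b,
          ENNReal.ofReal (‖γ' u‖ * ‖γ' v‖ * ‖γ' w‖ * invR p q (γ u) (γ v) (γ w)) :=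
        setLIntegral_mono' measurableSet_Ioo fun u hu =>
          setLIntegral_mono' measurableSet_Ioo fun v hv =>
            setLIntegral_mono' measurableSet_Ioo fun w hw =>
              ENNReal.ofReal_le_ofReal (hle u hu v hv w hw)
    _ ≤ menger p q γ γ' := by
        have hmono := Measure.restrict_mono (μ := volume) hsub le_rfl
        exact lintegral_mono' hmono fun u => lintegral_mono' hmono fun v =>
          lintegral_mono' hmono le_rfl

theorem menger_eq_top_of_linearIndependent (hp : q + 2 / 3 ≤ p) (ht : t ∈ Ioo 0 1)
    (hγ : ∀ᶠ x in 𝓝 t, HasDerivAt γ (γ' x) x) (hγ' : HasStrictDerivAt γ' a t)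
    (hli : LinearIndependent ℝ ![γ' t, a]) : menger p q γ γ' = ⊤ := by
  obtain ⟨c, hc, hle⟩ :=
    exists_mul_absVandermonde_rpow_le (p := p) (q := q) (by linarith) hγ hγ' hli
  have hIoo : ∀ᶠ x : ℝ × ℝ × ℝ in 𝓝 (t, t, t), x.1 ∈ Ioo (0 : ℝ) 1 :=
    (Continuous.tendsto' continuous_fst _ _ rfl).eventually (Ioo_mem_nhds ht.1 ht.2)
  obtain ⟨r, hr, hball⟩ := Metric.eventually_nhds_iff_ball.1 (hle.and hIoo)
  simp_rw [← ball_prod_same, Real.ball_eq_Ioo] at hball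
  exact menger_eq_top_of_le (by linarith)
    (fun x hx => Ioo_subset_Ico_self (hball (x, x, x) ⟨hx, hx, hx⟩).2) hc (by linarith)
    fun u hu v hv w hw => (hball (u, v, w) ⟨hu, hv, hw⟩).1

end MengerIntegrand

theorem no_finite_energy_C3_curves_general {n : ℕ} {p q : ℝ} (hp : q + 2 / 3 ≤ p)
    {γ : ℝ → EuclideanSpace ℝ (Fin n)} (hC2 : ContDiff ℝ 2 γ) (hclosed : γ 0 = γ 1)
    (hreg : ∀ u ∈ Ioo 0 1, deriv γ u ≠ 0) : menger p q γ (deriv γ) = ⊤ := by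
  have hγ : Differentiable ℝ γ := hC2.differentiable two_ne_zero
  have hC1 : ContDiff ℝ 1 (deriv γ) := hC2.deriv'
  obtain ⟨t, ht, hli⟩ := exists_linearIndependent_deriv_of_closed zero_lt_one hγ
    (hC1.differentiable one_ne_zero) hclosed hreg
  exact menger_eq_top_of_linearIndependent hp ht (.of_forall fun x => (hγ x).hasDerivAt)
    (hC1.contDiffAt.hasStrictDerivAt one_ne_zero) hli

/-- **No finite-energy `C³` curves for `p ≥ q + 2/3`.** For `p, q > 0` with
`p ≥ q + 2/3`, every closed arc-length parametrized `C³` curve satisfies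
`E_{p,q}(γ) = ∞`. -/
theorem no_finite_energy_C3_curves (n : ℕ) (p q : ℝ)
    (hp0 : 0 < p) (hq0 : 0 < q) (hp : q + 2/3 ≤ p)
    (γ : ℝ → EuclideanSpace ℝ (Fin n))
    (hC3 : ContDiff ℝ 3 γ) (hper : Function.Periodic γ 1)
    (harc : ∀ u, ‖deriv γ u‖ = 1) :
    menger p q γ (deriv γ) = ⊤ :=
  no_finite_energy_C3_curves_general hp (hC3.of_le (by norm_num)) (by simpa using (hper 0).symm)
    fun u _ => norm_ne_zero_iff.1 ((harc u).trans_ne one_ne_zero)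
end
end

section
/- Assume the sub-critical range q > 1 and (2/3)q + 1 < p < q + 2/3. Then there is a constant C depending only on p and q such that for every f ∈ W^{(3p−2)/q−1,q}(ℝ/ℤ,ℝⁿ): ∭_{ℝ/ℤ×D} |(f(u+w)−f(u))/w − (f(u+v)−f(u))/v|^q / (|w|^{p−q} |v|^{p−q} |v−w|^p) dw dv du ≤ C ‖f‖^q_{W^{(3p−2)/q−1,q}}. -/
open MeasureTheory Set Filter Topology
open scoped ENNReal

noncomputable section

/-!
Difference quotients of `f` are averages of `f'`, so by Jensen's inequality the `L^q(du)` norm of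
`Δ_w f / w - Δ_v f / v` is bounded by an average over `θ ∈ (0, 1)` of the modulus of continuity of
`f'` under the translation by `θ (w - v)`. This bound depends on `(v, w)` only through `t = w - v`,
and integrating the kernel along the segments `w - v = t` of the triangle `v < 0 < w`, `w - v < 1`
is Liouville's formula: it leaves the weight `t ^ (-(3p - 2q - 1))` times a beta integral. Hardy's
averaging inequality removes the average over `θ`, and by periodicity the offsets `t ∈ (0, 1)` can
be moved to `[-1/2, 1/2]`, which only enlarges the weight.
-/

open ProbabilityTheory (beta beta_pos)

lemma lintegral_rpow_le_lintegral_rpow {Ω : Type*} [MeasurableSpace Ω] {μ : Measure Ω}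
    [IsProbabilityMeasure μ] {q : ℝ} (hq : 1 ≤ q) {φ : Ω → ℝ≥0∞} (hφ : AEMeasurable φ μ) :
    (∫⁻ x, φ x ∂μ) ^ q ≤ ∫⁻ x, φ x ^ q ∂μ := by
  have hnorm := eLpNorm'_le_eLpNorm'_of_exponent_le one_pos hq μ hφ.aestronglyMeasurable
  simp only [eLpNorm', enorm_eq_self, ENNReal.rpow_one, div_one] at hnorm
  rwa [one_div, ENNReal.le_rpow_inv_iff (by linarith)] at hnorm

section Periodic

variable {T : ℝ} {φ : ℝ → ℝ≥0∞}

lemma setLIntegral_Ico_eq_of_periodic (hT : 0 < T) (hφ : Function.Periodic φ T) (a b : ℝ) :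
    ∫⁻ x in Ico a (a + T), φ x = ∫⁻ x in Ico b (b + T), φ x := by
  rw [setLIntegral_congr Ico_ae_eq_Ioc, setLIntegral_congr Ico_ae_eq_Ioc]
  exact (isAddFundamentalDomain_Ioc hT a).setLIntegral_eq (isAddFundamentalDomain_Ioc hT b) φ
    hφ.map_vadd_zmultiples

lemma setLIntegral_Ico_add_right_of_periodic (hT : 0 < T) (hφ : Function.Periodic φ T) (c : ℝ) :
    ∫⁻ x in Ico 0 T, φ (x + c) = ∫⁻ x in Ico 0 T, φ x :=
  calc ∫⁻ x in Ico 0 T, φ (x + c) = ∫⁻ x in Ico c (c + T), φ x := by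
        rw [(measurePreserving_add_right volume c).setLIntegral_comp_emb
          (measurableEmbedding_addRight c) φ, image_add_const_Ico, zero_add, add_comm T]
    _ = ∫⁻ x in Ico 0 T, φ x := by
        simpa only [zero_add] using setLIntegral_Ico_eq_of_periodic hT hφ c 0

/- Among the representatives of a class modulo `T`, the one in `[-T/2, T/2]` has the least absolute
value, namely the norm of the class in `AddCircle T`. -/
lemma setLIntegral_Ioo_rpow_neg_mul_le_of_periodic (hT : 0 < T) (hφ : Function.Periodic φ T)
    {a : ℝ} (ha : 0 ≤ a) :
    ∫⁻ r in Ioo 0 T, ENNReal.ofReal (r ^ (-a)) * φ r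
      ≤ ∫⁻ w in Icc (-(T / 2)) (T / 2), ENNReal.ofReal (|w| ^ (-a)) * φ w := by
  set ψ : ℝ → ℝ≥0∞ := fun r => ENNReal.ofReal (‖(r : AddCircle T)‖ ^ (-a)) * φ r with hψ
  have hψper : Function.Periodic ψ T := fun r => by
    simp only [hψ, AddCircle.coe_add_period, hφ r]
  calc ∫⁻ r in Ioo 0 T, ENNReal.ofReal (r ^ (-a)) * φ r
      ≤ ∫⁻ r in Ioo 0 T, ψ r := by
        refine setLIntegral_mono' measurableSet_Ioo fun r hr => ?_
        have hpos : 0 < ‖(r : AddCircle T)‖ := by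
          have : Fact (0 < T) := ⟨hT⟩
          rw [norm_pos_iff, Ne, AddCircle.coe_eq_zero_iff_of_mem_Ico ⟨hr.1.le, hr.2⟩]
          exact hr.1.ne'
        have hle : ‖(r : AddCircle T)‖ ≤ r :=
          QuotientAddGroup.norm_mk_le_norm.trans_eq (Real.norm_of_nonneg hr.1.le)
        refine mul_le_mul_left (ENNReal.ofReal_le_ofReal ?_) _
        exact Real.rpow_le_rpow_of_nonpos hpos hle (neg_nonpos.2 ha)
    _ ≤ ∫⁻ r in Ico 0 (0 + T), ψ r :=
        lintegral_mono_set (by simpa only [zero_add] using Ioo_subset_Ico_self)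
    _ = ∫⁻ w in Ico (-(T / 2)) (-(T / 2) + T), ψ w :=
        setLIntegral_Ico_eq_of_periodic hT hψper _ _
    _ ≤ ∫⁻ w in Icc (-(T / 2)) (T / 2), ψ w :=
        lintegral_mono_set fun w hw => ⟨hw.1, by linarith [hw.2]⟩
    _ = ∫⁻ w in Icc (-(T / 2)) (T / 2), ENNReal.ofReal (|w| ^ (-a)) * φ w := by
        refine setLIntegral_congr_fun measurableSet_Icc fun w hw => ?_
        have hnorm : ‖(w : AddCircle T)‖ = |w| :=
          (AddCircle.norm_coe_eq_abs_iff T hT.ne').2 (by rw [abs_of_pos hT]; exact abs_le.2 hw)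
        simp only [hψ, hnorm]

end Periodic

section BetaIntegral

lemma setLIntegral_Ioo_rpow_mul_comp_mul_left {c : ℝ} (hc : 0 < c) (b s : ℝ) (φ : ℝ → ℝ≥0∞) :
    ∫⁻ t in Ioo 0 b, ENNReal.ofReal (t ^ s) * φ (c * t)
      = ENNReal.ofReal (c ^ (-s - 1)) * ∫⁻ r in Ioo 0 (c * b), ENNReal.ofReal (r ^ s) * φ r := by
  have himage : (c * ·) '' Ioo 0 b = Ioo 0 (c * b) := by
    rw [image_mul_left_Ioo hc, mul_zero]
  rw [← himage, lintegral_image_eq_lintegral_abs_deriv_mul measurableSet_Ioo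
    (fun t _ => (hasDerivAt_const_mul c).hasDerivWithinAt)
    (mul_right_injective₀ hc.ne').injOn, ← lintegral_const_mul' _ _ ENNReal.ofReal_ne_top]
  refine setLIntegral_congr_fun measurableSet_Ioo fun t ht => ?_
  simp only [abs_of_pos hc]
  rw [← mul_assoc, ← mul_assoc, ← ENNReal.ofReal_mul (by positivity),
    ← ENNReal.ofReal_mul (by positivity), Real.mul_rpow hc.le ht.1.le, ← mul_assoc,
    ← Real.rpow_add_one hc.ne', ← Real.rpow_add hc, show -s - 1 + 1 + s = 0 by ring, Real.rpow_zero,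
    one_mul]

variable {α β : ℝ}

lemma setLIntegral_Ioo_rpow_mul_one_sub_rpow (hα : 0 < α) (hβ : 0 < β) :
    ∫⁻ x in Ioo (0 : ℝ) 1, ENNReal.ofReal (x ^ (α - 1) * (1 - x) ^ (β - 1))
      = ENNReal.ofReal (beta α β) := by
  have hbeta := beta_pos hα hβ
  have hpdf := ProbabilityTheory.lintegral_betaPDF_eq_one hα hβ
  simp_rw [ProbabilityTheory.lintegral_betaPDF, mul_assoc,
    ENNReal.ofReal_mul (one_div_pos.2 hbeta).le] at hpdf
  rw [lintegral_const_mul' _ _ ENNReal.ofReal_ne_top, one_div,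
    ENNReal.ofReal_inv_of_pos hbeta] at hpdf
  rw [ENNReal.eq_inv_of_mul_eq_one_left ((mul_comm _ _).trans hpdf), inv_inv]

lemma setLIntegral_Ioo_rpow_sub_one (hα : 0 < α) :
    ∫⁻ x in Ioo (0 : ℝ) 1, ENNReal.ofReal (x ^ (α - 1)) = ENNReal.ofReal α⁻¹ := by
  have hbeta : beta α 1 = α⁻¹ := by
    rw [beta, Real.Gamma_one, Real.Gamma_add_one hα.ne', mul_one,
      div_mul_cancel_right₀ (Real.Gamma_pos_of_pos hα).ne']
  simpa only [sub_self, Real.rpow_zero, mul_one, hbeta] using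
    setLIntegral_Ioo_rpow_mul_one_sub_rpow hα one_pos

lemma setLIntegral_Ioo_rpow_mul_sub_rpow (hα : 0 < α) (hβ : 0 < β) {t : ℝ} (ht : 0 < t) :
    ∫⁻ x in Ioo 0 t, ENNReal.ofReal (x ^ (α - 1) * (t - x) ^ (β - 1))
      = ENNReal.ofReal (beta α β) * ENNReal.ofReal (t ^ (α + β - 1)) := by
  have hscale (x : ℝ) (hx : x ∈ Ioo 0 t) :
      ENNReal.ofReal (x ^ (α - 1) * (t - x) ^ (β - 1))
        = ENNReal.ofReal (t ^ (β - 1)) *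
          (ENNReal.ofReal (x ^ (α - 1)) * ENNReal.ofReal ((1 - t⁻¹ * x) ^ (β - 1))) := by
    have hfactor : t - x = t * (1 - t⁻¹ * x) := by field_simp
    have hnonneg : 0 ≤ 1 - t⁻¹ * x :=
      nonneg_of_mul_nonneg_right (hfactor ▸ (sub_pos.2 hx.2).le) ht
    rw [hfactor, Real.mul_rpow ht.le hnonneg, mul_left_comm, ENNReal.ofReal_mul (by positivity),
      ENNReal.ofReal_mul (Real.rpow_nonneg hx.1.le _)]
  rw [setLIntegral_congr_fun measurableSet_Ioo hscale,
    lintegral_const_mul' _ _ ENNReal.ofReal_ne_top,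
    setLIntegral_Ioo_rpow_mul_comp_mul_left (inv_pos.2 ht) t (α - 1)
      fun x => ENNReal.ofReal ((1 - x) ^ (β - 1)), inv_mul_cancel₀ ht.ne']
  have hbeta := setLIntegral_Ioo_rpow_mul_one_sub_rpow hα hβ
  rw [setLIntegral_congr_fun measurableSet_Ioo fun x hx =>
    ENNReal.ofReal_mul (Real.rpow_nonneg hx.1.le _)] at hbeta
  rw [hbeta, ← mul_assoc, ← ENNReal.ofReal_mul (by positivity), mul_comm, Real.inv_rpow ht.le,
    ← Real.rpow_neg ht.le, ← Real.rpow_add ht]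
  ring_nf

end BetaIntegral

section Hardy

lemma setLIntegral_Ioo_rpow_neg_mul_average_le {a : ℝ} (ha : 0 < a) (b : ℝ) {φ : ℝ → ℝ≥0∞}
    (hφ : Measurable φ) :
    ∫⁻ t in Ioo 0 b, ENNReal.ofReal (t ^ (-a)) * ∫⁻ θ in Ioo (0 : ℝ) 1, φ (θ * t)
      ≤ ENNReal.ofReal a⁻¹ * ∫⁻ r in Ioo 0 b, ENNReal.ofReal (r ^ (-a)) * φ r := by
  have hscale (θ : ℝ) (hθ : θ ∈ Ioo (0 : ℝ) 1) :
      ∫⁻ t in Ioo 0 b, ENNReal.ofReal (t ^ (-a)) * φ (θ * t)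
        ≤ ENNReal.ofReal (θ ^ (a - 1)) * ∫⁻ r in Ioo 0 b, ENNReal.ofReal (r ^ (-a)) * φ r := by
    rw [setLIntegral_Ioo_rpow_mul_comp_mul_left hθ.1, neg_neg]
    gcongr _ * ?_
    refine lintegral_mono_set fun r hr => ⟨hr.1, hr.2.trans_le ?_⟩
    exact mul_le_of_le_one_left (pos_of_mul_pos_right (hr.1.trans hr.2) hθ.1.le).le hθ.2.le
  calc ∫⁻ t in Ioo 0 b, ENNReal.ofReal (t ^ (-a)) * ∫⁻ θ in Ioo (0 : ℝ) 1, φ (θ * t)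
      = ∫⁻ θ in Ioo (0 : ℝ) 1, ∫⁻ t in Ioo 0 b, ENNReal.ofReal (t ^ (-a)) * φ (θ * t) := by
        simp only [← lintegral_const_mul' _ _ ENNReal.ofReal_ne_top]
        exact lintegral_lintegral_swap (by fun_prop)
    _ ≤ ∫⁻ θ in Ioo (0 : ℝ) 1, ENNReal.ofReal (θ ^ (a - 1)) *
          ∫⁻ r in Ioo 0 b, ENNReal.ofReal (r ^ (-a)) * φ r :=
        setLIntegral_mono' measurableSet_Ioo hscale
    _ = ENNReal.ofReal a⁻¹ * ∫⁻ r in Ioo 0 b, ENNReal.ofReal (r ^ (-a)) * φ r := by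
        rw [lintegral_mul_const _ (by fun_prop), setLIntegral_Ioo_rpow_sub_one ha]

end Hardy

section StraddlingPairs

/-- The pairs `(v, w)` of offsets on either side of `0` at distance less than a period: a triangle
containing `domainD`, on which the kernel of the triple integral can be integrated exactly. -/
def straddlingPairs : Set (ℝ × ℝ) :=
  {x | x.1 < 0 ∧ 0 < x.2 ∧ x.2 - x.1 < 1}

lemma measurableSet_straddlingPairs : MeasurableSet straddlingPairs :=
  (measurableSet_lt measurable_fst measurable_const).inter
    ((measurableSet_lt measurable_const measurable_snd).inter
      (measurableSet_lt (measurable_snd.sub measurable_fst) measurable_const))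

lemma domainD_subset_straddlingPairs : domainD ⊆ straddlingPairs :=
  fun _ ⟨⟨hv, hv'⟩, ⟨hw, hw'⟩, _⟩ => ⟨hv', hw, by linarith⟩

lemma setLIntegral_straddlingPairs_eq {k : ℝ → ℝ → ℝ≥0∞} (hk : Measurable (Function.uncurry k)) :
    ∫⁻ x in straddlingPairs, k (-x.1) (x.2 - x.1)
      = ∫⁻ t in Ioo (0 : ℝ) 1, ∫⁻ r in Ioo 0 t, k r t := by
  let S : Set (ℝ × ℝ) := {z | (0 < z.1 ∧ z.1 < z.2) ∧ z.2 < 1}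
  have hS : MeasurableSet S :=
    ((measurableSet_lt measurable_const measurable_fst).inter
      (measurableSet_lt measurable_fst measurable_snd)).inter
        (measurableSet_lt measurable_snd measurable_const)
  let Ψ : ℝ × ℝ → ℝ≥0∞ := S.indicator (Function.uncurry k)
  have hΨ : Measurable Ψ := hk.indicator hS
  have hslice (t : ℝ) :
      ∫⁻ r, Ψ (r, t) = (Ioo 0 1).indicator (fun t => ∫⁻ r in Ioo 0 t, k r t) t := by
    by_cases ht : t ∈ Ioo (0 : ℝ) 1
    · rw [indicator_of_mem ht, ← lintegral_indicator measurableSet_Ioo]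
      refine lintegral_congr fun r => ?_
      simp only [Ψ, S, indicator, mem_ofPred_eq, mem_Ioo, ht.2, and_true,
        Function.uncurry_apply_pair]
    · rw [indicator_of_notMem ht, lintegral_eq_zero_of_ae_eq_zero]
      refine ae_of_all _ fun r => indicator_of_notMem (fun hr => ht ?_) _
      exact ⟨hr.1.1.trans hr.1.2, hr.2⟩
  calc ∫⁻ x in straddlingPairs, k (-x.1) (x.2 - x.1)
      = ∫⁻ x : ℝ × ℝ, Ψ (-x.1, x.2 - x.1) := by
        rw [← lintegral_indicator measurableSet_straddlingPairs]
        refine lintegral_congr fun x => ?_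
        simp only [Ψ, S, straddlingPairs, indicator, mem_ofPred_eq, Function.uncurry_apply_pair]
        congr 1
        simp [neg_lt_sub_iff_lt_add, and_assoc]
    _ = ∫⁻ v, ∫⁻ w, Ψ (-v, w - v) := by
        rw [Measure.volume_eq_prod, lintegral_prod _ (by fun_prop)]
    _ = ∫⁻ v, ∫⁻ t, Ψ (-v, t) :=
        lintegral_congr fun v => lintegral_sub_right_eq_self (fun t => Ψ (-v, t)) v
    _ = ∫⁻ r, ∫⁻ t, Ψ (r, t) := lintegral_neg_eq_self fun r => ∫⁻ t, Ψ (r, t)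
    _ = ∫⁻ t, ∫⁻ r, Ψ (r, t) := lintegral_lintegral_swap (by fun_prop)
    _ = ∫⁻ t in Ioo (0 : ℝ) 1, ∫⁻ r in Ioo 0 t, k r t := by
        rw [lintegral_congr hslice, lintegral_indicator measurableSet_Ioo]

lemma setLIntegral_straddlingPairs_rpow_mul_rpow_mul_comp_sub {α β : ℝ} (hα : 0 < α) (hβ : 0 < β)
    {φ : ℝ → ℝ≥0∞} (hφ : Measurable φ) :
    ∫⁻ x in straddlingPairs, ENNReal.ofReal ((-x.1) ^ (α - 1) * x.2 ^ (β - 1)) * φ (x.2 - x.1)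
      = ENNReal.ofReal (beta α β) *
        ∫⁻ t in Ioo (0 : ℝ) 1, ENNReal.ofReal (t ^ (α + β - 1)) * φ t := by
  have hshear := setLIntegral_straddlingPairs_eq
    (k := fun r t => ENNReal.ofReal (r ^ (α - 1) * (t - r) ^ (β - 1)) * φ t) (by fun_prop)
  simp only [sub_neg_eq_add, sub_add_cancel] at hshear
  rw [hshear, ← lintegral_const_mul' _ _ ENNReal.ofReal_ne_top]
  refine setLIntegral_congr_fun measurableSet_Ioo fun t ht => ?_
  rw [lintegral_mul_const _ (by fun_prop), setLIntegral_Ioo_rpow_mul_sub_rpow hα hβ ht.1, mul_assoc]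

lemma setLIntegral_straddlingPairs_kernel_mul {b : ℝ} (hb : b < 1) (p : ℝ) {φ : ℝ → ℝ≥0∞}
    (hφ : Measurable φ) :
    ∫⁻ x in straddlingPairs,
        ENNReal.ofReal (|x.2| ^ b * |x.1| ^ b * |x.1 - x.2| ^ p)⁻¹ * φ (x.2 - x.1)
      = ENNReal.ofReal (beta (1 - b) (1 - b)) *
        ∫⁻ t in Ioo (0 : ℝ) 1, ENNReal.ofReal (t ^ (-(2 * b + p - 1))) * φ t := by
  have hkernel (x : ℝ × ℝ) (hx : x ∈ straddlingPairs) :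
      ENNReal.ofReal (|x.2| ^ b * |x.1| ^ b * |x.1 - x.2| ^ p)⁻¹ * φ (x.2 - x.1)
        = ENNReal.ofReal ((-x.1) ^ (1 - b - 1) * x.2 ^ (1 - b - 1)) *
          (ENNReal.ofReal ((x.2 - x.1) ^ (-p)) * φ (x.2 - x.1)) := by
    obtain ⟨hv, hw, -⟩ := hx
    have hv' : 0 < -x.1 := neg_pos.2 hv
    have hpos : 0 < x.2 - x.1 := by linarith
    rw [← mul_assoc, ← ENNReal.ofReal_mul (by positivity), sub_sub_cancel_left,
      abs_of_pos hw, abs_of_neg hv, abs_sub_comm, abs_of_pos hpos, Real.rpow_neg hw.le,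
      Real.rpow_neg hv'.le, Real.rpow_neg hpos.le, mul_inv, mul_inv, mul_comm (x.2 ^ b)⁻¹]
  have hb' : 0 < 1 - b := sub_pos.2 hb
  rw [setLIntegral_congr_fun measurableSet_straddlingPairs hkernel,
    setLIntegral_straddlingPairs_rpow_mul_rpow_mul_comp_sub hb' hb'
      (φ := fun t => ENNReal.ofReal (t ^ (-p)) * φ t) (by fun_prop)]
  congr 1
  refine setLIntegral_congr_fun measurableSet_Ioo fun t ht => ?_
  rw [← mul_assoc, ← ENNReal.ofReal_mul (Real.rpow_nonneg ht.1.le _), ← Real.rpow_add ht.1]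
  ring_nf

lemma setLIntegral_straddlingPairs_kernel_mul_average_le {b p : ℝ} (hb : b < 1)
    (ha : 0 < 2 * b + p - 1) {φ : ℝ → ℝ≥0∞} (hφ : Measurable φ) :
    ∫⁻ x in straddlingPairs, ENNReal.ofReal (|x.2| ^ b * |x.1| ^ b * |x.1 - x.2| ^ p)⁻¹ *
        ∫⁻ θ in Ioo (0 : ℝ) 1, φ (θ * (x.2 - x.1))
      ≤ ENNReal.ofReal (beta (1 - b) (1 - b) / (2 * b + p - 1)) *
        ∫⁻ r in Ioo (0 : ℝ) 1, ENNReal.ofReal (r ^ (-(2 * b + p - 1))) * φ r := by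
  have hbeta : 0 < beta (1 - b) (1 - b) := beta_pos (sub_pos.2 hb) (sub_pos.2 hb)
  have haverage : Measurable fun t => ∫⁻ θ in Ioo (0 : ℝ) 1, φ (θ * t) :=
    Measurable.lintegral_prod_right' (f := fun x : ℝ × ℝ => φ (x.2 * x.1)) (by fun_prop)
  rw [setLIntegral_straddlingPairs_kernel_mul hb p haverage, div_eq_mul_inv,
    ENNReal.ofReal_mul hbeta.le, mul_assoc]
  gcongr
  exact setLIntegral_Ioo_rpow_neg_mul_average_le ha 1 hφ

end StraddlingPairs

section TranslationModulus

variable {E : Type*} [NormedAddCommGroup E] {q : ℝ} {g : ℝ → E}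

/-- The `q`-th power of the `L^q` modulus of continuity of a function on `ℝ/ℤ`, represented by a
`1`-periodic `g`, under the translation by `t`. -/
def translationModulus (q : ℝ) (g : ℝ → E) (t : ℝ) : ℝ≥0∞ :=
  ∫⁻ u in Ico (0 : ℝ) 1, ‖g (u + t) - g u‖ₑ ^ q

/-- The `q`-th power of the Gagliardo seminorm of `g` on `ℝ/ℤ` with a free weight exponent `a`, the
fractional order `s` corresponding to `a = 1 + q * s`. -/
def gagliardoEnergy (q a : ℝ) (g : ℝ → E) : ℝ≥0∞ :=
  ∫⁻ u in Ico (0 : ℝ) 1, ∫⁻ w in Icc (-(1 / 2) : ℝ) (1 / 2),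
    ENNReal.ofReal (‖g (u + w) - g u‖ ^ q / |w| ^ a)

lemma measurable_translationModulus (hg : StronglyMeasurable g) :
    Measurable (translationModulus q g) :=
  Measurable.lintegral_prod_right' (f := fun x : ℝ × ℝ => ‖g (x.2 + x.1) - g x.2‖ₑ ^ q)
    (by fun_prop)

lemma periodic_translationModulus (hper : Function.Periodic g 1) :
    Function.Periodic (translationModulus q g) 1 := fun t => by
  simp only [translationModulus, ← add_assoc, hper _]

lemma lintegral_enorm_add_sub_add_rpow_eq_translationModulus (hper : Function.Periodic g 1)
    (s t : ℝ) :
    ∫⁻ u in Ico (0 : ℝ) 1, ‖g (u + t) - g (u + s)‖ₑ ^ q = translationModulus q g (t - s) := by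
  have hper' : Function.Periodic (fun u => ‖g (u + (t - s)) - g u‖ₑ ^ q) 1 := fun u => by
    simp only [hper u, add_right_comm u 1, hper (u + (t - s))]
  rw [translationModulus, ← setLIntegral_Ico_add_right_of_periodic one_pos hper' s]
  simp only [add_assoc, add_sub_cancel]

lemma ofReal_norm_rpow_div (hq : 0 ≤ q) (x : E) (d : ℝ) :
    ENNReal.ofReal (‖x‖ ^ q / d) = ENNReal.ofReal d⁻¹ * ‖x‖ₑ ^ q := by
  rw [div_eq_inv_mul, ENNReal.ofReal_mul' (by positivity),
    ← ENNReal.ofReal_rpow_of_nonneg (norm_nonneg x) hq, ofReal_norm]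

lemma gagliardoEnergy_eq_lintegral_enorm (hq : 0 ≤ q) (a : ℝ) (g : ℝ → E) :
    gagliardoEnergy q a g = ∫⁻ u in Ico (0 : ℝ) 1, ∫⁻ w in Icc (-(1 / 2) : ℝ) (1 / 2),
      ENNReal.ofReal (|w| ^ (-a)) * ‖g (u + w) - g u‖ₑ ^ q := by
  simp only [gagliardoEnergy, ofReal_norm_rpow_div hq, Real.rpow_neg (abs_nonneg _)]

lemma gagliardoEnergy_eq_lintegral_translationModulus (hq : 0 ≤ q) (a : ℝ)
    (hg : StronglyMeasurable g) :
    gagliardoEnergy q a g = ∫⁻ w in Icc (-(1 / 2) : ℝ) (1 / 2),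
      ENNReal.ofReal (|w| ^ (-a)) * translationModulus q g w := by
  rw [gagliardoEnergy_eq_lintegral_enorm hq, lintegral_lintegral_swap (by fun_prop)]
  simp only [translationModulus, lintegral_const_mul' _ _ ENNReal.ofReal_ne_top]

lemma setLIntegral_Ioo_rpow_neg_mul_translationModulus_le (hq : 0 ≤ q) {a : ℝ} (ha : 0 ≤ a)
    (hg : StronglyMeasurable g) (hper : Function.Periodic g 1) :
    ∫⁻ r in Ioo (0 : ℝ) 1, ENNReal.ofReal (r ^ (-a)) * translationModulus q g r
      ≤ gagliardoEnergy q a g := by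
  rw [gagliardoEnergy_eq_lintegral_translationModulus hq a hg]
  exact setLIntegral_Ioo_rpow_neg_mul_le_of_periodic one_pos (periodic_translationModulus hper) ha

lemma setLIntegral_Icc_le_setLIntegral_Icc_abs_rpow_neg_mul {a b : ℝ} (ha : 0 ≤ a) (hb : b ≤ 1)
    (φ : ℝ → ℝ≥0∞) :
    ∫⁻ w in Icc (-b) b, φ w ≤ ∫⁻ w in Icc (-b) b, ENNReal.ofReal (|w| ^ (-a)) * φ w := by
  refine lintegral_mono_ae ?_
  filter_upwards [ae_restrict_mem measurableSet_Icc,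
    ae_restrict_of_ae (Measure.ae_ne volume (0 : ℝ))] with w hw hw0
  refine le_mul_of_one_le_left' (ENNReal.one_le_ofReal.2 ?_)
  exact Real.one_le_rpow_of_pos_of_le_one_of_nonpos (abs_pos.2 hw0) ((abs_le.2 hw).trans hb)
    (neg_nonpos.2 ha)

lemma intervalIntegrable_of_gagliardoEnergy_lt_top (hq : 1 ≤ q) {a : ℝ} (ha : 0 ≤ a)
    (hg : StronglyMeasurable g) (hper : Function.Periodic g 1)
    (hfin : gagliardoEnergy q a g < ⊤) (b c : ℝ) : IntervalIntegrable g volume b c := by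
  have hIco : IsProbabilityMeasure (volume.restrict (Ico (0 : ℝ) 1)) := ⟨by simp⟩
  have hIcc : IsProbabilityMeasure (volume.restrict (Icc (-(1 / 2) : ℝ) (1 / 2))) :=
    ⟨by norm_num [Real.volume_Icc]⟩
  rw [gagliardoEnergy_eq_lintegral_enorm (by linarith)] at hfin
  -- Some base point `u` has inner integral at most the energy; integrability around it suffices.
  obtain ⟨u, hu⟩ := exists_le_lintegral (μ := volume.restrict (Ico (0 : ℝ) 1))
    (f := fun u => ∫⁻ w in Icc (-(1 / 2) : ℝ) (1 / 2),
      ENNReal.ofReal (|w| ^ (-a)) * ‖g (u + w) - g u‖ₑ ^ q)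
    (Measurable.lintegral_prod_right' (f := fun x : ℝ × ℝ =>
      ENNReal.ofReal (|x.2| ^ (-a)) * ‖g (x.1 + x.2) - g x.1‖ₑ ^ q) (by fun_prop)).aemeasurable
  have hdiff : IntegrableOn (fun w => g (u + w) - g u) (Icc (-(1 / 2) : ℝ) (1 / 2)) := by
    refine ⟨StronglyMeasurable.aestronglyMeasurable (by fun_prop), ?_⟩
    refine (ENNReal.rpow_lt_top_iff_of_pos (zero_lt_one.trans_le hq)).1 ?_
    calc (∫⁻ w in Icc (-(1 / 2) : ℝ) (1 / 2), ‖g (u + w) - g u‖ₑ) ^ q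
        ≤ ∫⁻ w in Icc (-(1 / 2) : ℝ) (1 / 2), ‖g (u + w) - g u‖ₑ ^ q :=
          lintegral_rpow_le_lintegral_rpow hq (Measurable.aemeasurable (by fun_prop))
      _ ≤ ∫⁻ w in Icc (-(1 / 2) : ℝ) (1 / 2),
            ENNReal.ofReal (|w| ^ (-a)) * ‖g (u + w) - g u‖ₑ ^ q :=
          setLIntegral_Icc_le_setLIntegral_Icc_abs_rpow_neg_mul ha (by norm_num) _
      _ < ⊤ := hu.trans_lt hfin
  have hcenter : IntervalIntegrable (fun w => g (u + w)) volume (-(1 / 2)) (1 / 2) := by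
    rw [intervalIntegrable_iff_integrableOn_Icc_of_le (by norm_num)]
    exact (hdiff.add (integrableOn_const (C := g u) (by simp))).congr_fun (fun w _ => by simp)
      measurableSet_Icc
  have hperiod : IntervalIntegrable g volume (u - 1 / 2) (u - 1 / 2 + 1) := by
    convert hcenter.comp_add_left (-u) using 1
    · simp only [add_neg_cancel_left]
    · ring
    · ring
  exact hper.intervalIntegrable one_ne_zero hperiod b c

end TranslationModulus

section DifferenceQuotient

variable {E : Type*} [NormedAddCommGroup E] {q : ℝ} {f f' : ℝ → E}

lemma integrableOn_comp_add_mul (hint : ∀ a b, IntervalIntegrable f' volume a b) (u w : ℝ) :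
    IntegrableOn (fun θ => f' (u + w * θ)) (Ioo (0 : ℝ) 1) := by
  rcases eq_or_ne w 0 with rfl | hw
  · simp
  have hscaled := ((hint u (u + w)).comp_add_left u).comp_mul_left (c := w)
  rwa [sub_self, zero_div, add_sub_cancel_left, div_self hw,
    intervalIntegrable_iff_integrableOn_Ioo_of_le zero_le_one] at hscaled

variable [NormedSpace ℝ E]

lemma continuous_of_eq_add_intervalIntegral (hint : ∀ a b, IntervalIntegrable f' volume a b)
    (hprim : ∀ u, f u = f 0 + ∫ t in (0 : ℝ)..u, f' t) : Continuous f := by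
  rw [funext hprim]
  exact continuous_const.add (intervalIntegral.continuous_primitive hint 0)

lemma inv_smul_sub_eq_setIntegral (hint : ∀ a b, IntervalIntegrable f' volume a b)
    (hprim : ∀ u, f u = f 0 + ∫ t in (0 : ℝ)..u, f' t) (u : ℝ) {w : ℝ} (hw : w ≠ 0) :
    w⁻¹ • (f (u + w) - f u) = ∫ θ in Ioo (0 : ℝ) 1, f' (u + w * θ) := by
  rw [← integral_Ioc_eq_integral_Ioo, ← intervalIntegral.integral_of_le zero_le_one,
    intervalIntegral.integral_comp_add_mul _ hw, mul_zero, mul_one, add_zero,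
    hprim (u + w), hprim u, add_sub_add_left_eq_sub,
    intervalIntegral.integral_interval_sub_left (hint _ _) (hint _ _)]

lemma enorm_diffQuot_sub_rpow_le (hq : 1 ≤ q) (hmeas : StronglyMeasurable f')
    (hint : ∀ a b, IntervalIntegrable f' volume a b)
    (hprim : ∀ u, f u = f 0 + ∫ t in (0 : ℝ)..u, f' t) (u : ℝ) {v w : ℝ} (hv : v ≠ 0)
    (hw : w ≠ 0) :
    ‖w⁻¹ • (f (u + w) - f u) - v⁻¹ • (f (u + v) - f u)‖ₑ ^ q
      ≤ ∫⁻ θ in Ioo (0 : ℝ) 1, ‖f' (u + w * θ) - f' (u + v * θ)‖ₑ ^ q := by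
  have hIoo : IsProbabilityMeasure (volume.restrict (Ioo (0 : ℝ) 1)) := ⟨by simp⟩
  rw [inv_smul_sub_eq_setIntegral hint hprim u hw, inv_smul_sub_eq_setIntegral hint hprim u hv,
    ← integral_sub (integrableOn_comp_add_mul hint u w) (integrableOn_comp_add_mul hint u v)]
  exact (ENNReal.rpow_le_rpow (enorm_integral_le_lintegral_enorm _) (by linarith)).trans
    (lintegral_rpow_le_lintegral_rpow hq (Measurable.aemeasurable (by fun_prop)))

lemma lintegral_enorm_diffQuot_sub_rpow_le (hq : 1 ≤ q) (hmeas : StronglyMeasurable f')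
    (hper : Function.Periodic f' 1) (hint : ∀ a b, IntervalIntegrable f' volume a b)
    (hprim : ∀ u, f u = f 0 + ∫ t in (0 : ℝ)..u, f' t) {v w : ℝ} (hv : v ≠ 0) (hw : w ≠ 0) :
    ∫⁻ u in Ico (0 : ℝ) 1, ‖w⁻¹ • (f (u + w) - f u) - v⁻¹ • (f (u + v) - f u)‖ₑ ^ q
      ≤ ∫⁻ θ in Ioo (0 : ℝ) 1, translationModulus q f' (θ * (w - v)) :=
  calc ∫⁻ u in Ico (0 : ℝ) 1, ‖w⁻¹ • (f (u + w) - f u) - v⁻¹ • (f (u + v) - f u)‖ₑ ^ q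
      ≤ ∫⁻ u in Ico (0 : ℝ) 1, ∫⁻ θ in Ioo (0 : ℝ) 1, ‖f' (u + w * θ) - f' (u + v * θ)‖ₑ ^ q :=
        lintegral_mono fun u => enorm_diffQuot_sub_rpow_le hq hmeas hint hprim u hv hw
    _ = ∫⁻ θ in Ioo (0 : ℝ) 1, ∫⁻ u in Ico (0 : ℝ) 1, ‖f' (u + w * θ) - f' (u + v * θ)‖ₑ ^ q :=
        lintegral_lintegral_swap (by fun_prop)
    _ = ∫⁻ θ in Ioo (0 : ℝ) 1, translationModulus q f' (θ * (w - v)) := by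
        simp only [lintegral_enorm_add_sub_add_rpow_eq_translationModulus hper, ← sub_mul,
          mul_comm _ (w - v)]

lemma lintegral_lintegral_diffQuot_sub_rpow_div_eq (hq : 0 ≤ q) (hf : StronglyMeasurable f)
    {d : ℝ × ℝ → ℝ} (hd : Measurable d) (S : Set (ℝ × ℝ)) :
    ∫⁻ u in Ico (0 : ℝ) 1, ∫⁻ x in S,
        ENNReal.ofReal (‖x.2⁻¹ • (f (u + x.2) - f u) - x.1⁻¹ • (f (u + x.1) - f u)‖ ^ q / d x)
      = ∫⁻ x in S, ENNReal.ofReal (d x)⁻¹ * ∫⁻ u in Ico (0 : ℝ) 1,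
          ‖x.2⁻¹ • (f (u + x.2) - f u) - x.1⁻¹ • (f (u + x.1) - f u)‖ₑ ^ q := by
  simp only [ofReal_norm_rpow_div hq]
  rw [lintegral_lintegral_swap (by fun_prop)]
  simp only [lintegral_const_mul' _ _ ENNReal.ofReal_ne_top]

end DifferenceQuotient

section SobNorm

variable {n : ℕ} {q : ℝ}

lemma sobSemiPow_eq_gagliardoEnergy (hq : q ≠ 0) (a : ℝ) (f' : ℝ → EuclideanSpace ℝ (Fin n)) :
    sobSemiPow ((a - 1) / q) q f' = gagliardoEnergy q a f' := by
  rw [sobSemiPow, gagliardoEnergy, mul_div_cancel₀ _ hq, add_sub_cancel]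

lemma toReal_sobSemiPow_le_sobNorm_rpow (s : ℝ) (hq : 0 < q)
    (f f' : ℝ → EuclideanSpace ℝ (Fin n)) :
    (sobSemiPow s q f').toReal ≤ sobNorm s q f f' ^ q := by
  have hnonneg (g : ℝ → EuclideanSpace ℝ (Fin n)) :
      0 ≤ (∫ u in Ico (0 : ℝ) 1, ‖g u‖ ^ q) ^ (1 / q) :=
    Real.rpow_nonneg (integral_nonneg fun u => by positivity) _
  calc (sobSemiPow s q f').toReal = ((sobSemiPow s q f').toReal ^ (1 / q)) ^ q := by
        rw [one_div, Real.rpow_inv_rpow ENNReal.toReal_nonneg hq.ne']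
    _ ≤ sobNorm s q f f' ^ q :=
        Real.rpow_le_rpow (by positivity)
          (le_add_of_nonneg_left (add_nonneg (hnonneg f) (hnonneg f'))) hq.le

lemma ofReal_mul_gagliardoEnergy_le {C a : ℝ} (hC : 0 ≤ C) (hq : 0 < q)
    (f : ℝ → EuclideanSpace ℝ (Fin n)) {f' : ℝ → EuclideanSpace ℝ (Fin n)}
    (hfin : sobSemiPow ((a - 1) / q) q f' < ⊤) :
    ENNReal.ofReal C * gagliardoEnergy q a f'
      ≤ ENNReal.ofReal (C * sobNorm ((a - 1) / q) q f f' ^ q) := by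
  rw [← sobSemiPow_eq_gagliardoEnergy hq.ne', ENNReal.ofReal_mul hC]
  gcongr
  exact (ENNReal.le_ofReal_iff_toReal_le hfin.ne (by unfold sobNorm; positivity)).2
    (toReal_sobSemiPow_le_sobNorm_rpow _ hq f f')

end SobNorm

theorem triple_integral_estimate_general {E : Type*} [NormedAddCommGroup E] [NormedSpace ℝ E]
    [CompleteSpace E] {p q : ℝ} (hq : 1 ≤ q) (hp₁ : 2 / 3 * q + 1 / 3 < p) (hp₂ : p < q + 1)
    {f f' : ℝ → E} (hmeas : StronglyMeasurable f') (hper : Function.Periodic f' 1)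
    (hprim : ∀ u, f u = f 0 + ∫ t in (0 : ℝ)..u, f' t) :
    (∫⁻ u in Ico (0 : ℝ) 1, ∫⁻ x in straddlingPairs,
        ENNReal.ofReal
          (‖x.2⁻¹ • (f (u + x.2) - f u) - x.1⁻¹ • (f (u + x.1) - f u)‖ ^ q /
            (|x.2| ^ (p - q) * |x.1| ^ (p - q) * |x.1 - x.2| ^ p)))
      ≤ ENNReal.ofReal (beta (1 - (p - q)) (1 - (p - q)) / (3 * p - 2 * q - 1)) *
          gagliardoEnergy q (3 * p - 2 * q - 1) f' := by
  have ha : 0 < 3 * p - 2 * q - 1 := by linarith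
  have hq0 : 0 ≤ q := by linarith
  have hbeta : 0 < beta (1 - (p - q)) (1 - (p - q)) := beta_pos (by linarith) (by linarith)
  rcases eq_top_or_lt_top (gagliardoEnergy q (3 * p - 2 * q - 1) f') with htop | hfin
  · simp [htop, ENNReal.mul_top, hbeta, ha]
  have hint := intervalIntegrable_of_gagliardoEnergy_lt_top hq ha.le hmeas hper hfin
  have hf := (continuous_of_eq_add_intervalIntegral hint hprim).stronglyMeasurable
  have hexp : 2 * (p - q) + p - 1 = 3 * p - 2 * q - 1 := by ring
  rw [lintegral_lintegral_diffQuot_sub_rpow_div_eq hq0 hf (by fun_prop)]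
  calc _ ≤ ∫⁻ x in straddlingPairs,
          ENNReal.ofReal (|x.2| ^ (p - q) * |x.1| ^ (p - q) * |x.1 - x.2| ^ p)⁻¹ *
            ∫⁻ θ in Ioo (0 : ℝ) 1, translationModulus q f' (θ * (x.2 - x.1)) :=
        setLIntegral_mono' measurableSet_straddlingPairs fun x hx => mul_le_mul_right
          (lintegral_enorm_diffQuot_sub_rpow_le hq hmeas hper hint hprim hx.1.ne hx.2.1.ne') _
    _ ≤ ENNReal.ofReal (beta (1 - (p - q)) (1 - (p - q)) / (3 * p - 2 * q - 1)) *
          ∫⁻ r in Ioo (0 : ℝ) 1,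
            ENNReal.ofReal (r ^ (-(3 * p - 2 * q - 1))) * translationModulus q f' r := by
        rw [← hexp] at ha ⊢
        exact setLIntegral_straddlingPairs_kernel_mul_average_le (by linarith) ha
          (measurable_translationModulus hmeas)
    _ ≤ _ := by
        gcongr
        exact setLIntegral_Ioo_rpow_neg_mul_translationModulus_le hq0 ha.le hmeas hper

/-- **A triple-integral estimate for Sobolev functions.** In the sub-critical
range `q > 1`, `(2/3)q + 1 < p < q + 2/3`, there is a constant `C = C(p,q)`
such that for every `f ∈ W^{(3p-2)/q-1,q}(ℝ/ℤ,ℝⁿ)`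
`∭_{ℝ/ℤ×D} |Δ_w f/w - Δ_v f/v|^q / (|w|^{p-q} |v|^{p-q} |v-w|^p)
  ≤ C ‖f‖^q_{W^{(3p-2)/q-1,q}}`. -/
theorem triple_integral_estimate (n : ℕ) (p q : ℝ)
    (hq : 1 < q) (hp₁ : 2/3 * q + 1 < p) (hp₂ : p < q + 2/3) :
    ∃ C : ℝ, 0 < C ∧
      ∀ f f' : ℝ → EuclideanSpace ℝ (Fin n),
        CurvePair f f' → sobSemiPow ((3*p - 2*q - 2)/q) q f' < ⊤ →
        (∫⁻ u in Ico (0:ℝ) 1, ∫⁻ x in domainD,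
            ENNReal.ofReal
              (‖x.2⁻¹ • (f (u + x.2) - f u) - x.1⁻¹ • (f (u + x.1) - f u)‖ ^ q /
                (|x.2| ^ (p - q) * |x.1| ^ (p - q) * |x.1 - x.2| ^ p))) ≤
          ENNReal.ofReal (C * sobNorm ((3*p - 2*q - 2)/q) q f f' ^ q) := by
  have hconst : 0 < beta (1 - (p - q)) (1 - (p - q)) / (3 * p - 2 * q - 1) :=
    div_pos (beta_pos (by linarith) (by linarith)) (by linarith)
  rw [show 3 * p - 2 * q - 2 = 3 * p - 2 * q - 1 - 1 by ring]
  refine ⟨_, hconst, fun f f' hf hfin => ?_⟩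
  refine (lintegral_mono fun u => lintegral_mono_set domainD_subset_straddlingPairs).trans ?_
  refine (triple_integral_estimate_general hq.le (by linarith) (by linarith)
    hf.meas'.stronglyMeasurable hf.periodic' hf.primitive).trans ?_
  exact ofReal_mul_gagliardoEnergy_le hconst.le (by linarith) f hfin
end
end

section
/- Let p, q > 0 and let γ_k, γ ∈ C¹(ℝ/ℤ,ℝⁿ) be injective regular curves such that γ_k → γ in C¹(ℝ/ℤ,ℝⁿ). Then E_{p,q} is lower semi-continuous along this sequence: E_{p,q}(γ) ≤ liminf_{k→∞} E_{p,q}(γ_k). -/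
open MeasureTheory Set Filter Topology
open scoped ENNReal

noncomputable section

/-!
The integrand of `E_{p,q}` depends only on the positions and velocities of the curve at three
parameters, and as a function of these six vectors it is lower semicontinuous: it is continuous
where the denominator is nonzero, and elsewhere it takes its minimum `0`, by the convention
`x / 0 = 0`. Pointwise convergence of positions and velocities therefore bounds the limit integrand
by the lower limit of the integrands, and Fatou's lemma concludes.

The convention does not affect the energy: a curve has zero velocity at almost every parameter at
which it passes through a given point, so triples with coinciding points carry no weight.
-/

theorem le_liminf_of_lowerSemicontinuousAt {X Y ι : Type*} [TopologicalSpace X]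
    [CompleteLinearOrder Y] {f : X → Y} {x : X} (hf : LowerSemicontinuousAt f x) {l : Filter ι}
    {c : ι → X} (hc : Tendsto c l (𝓝 x)) : f x ≤ liminf (fun i => f (c i)) l :=
  (le_liminf_iff).mpr fun y hy => hc.eventually (hf y hy)

section Fatou

variable {α X ι : Type*} [MeasurableSpace α] {μ : Measure α} [SFinite μ] {l : Filter ι}
  [l.IsCountablyGenerated]

theorem lintegral_lintegral_lintegral_liminf_comp_le [MeasurableSpace X] {Φ : X × X × X → ℝ≥0∞}
    (hΦ : Measurable Φ) {c : ι → α → X} (hc : ∀ i, AEMeasurable (c i) μ) :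
    ∫⁻ s, ∫⁻ t, ∫⁻ u, liminf (fun i => Φ (c i s, c i t, c i u)) l ∂μ ∂μ ∂μ ≤
      liminf (fun i => ∫⁻ s, ∫⁻ t, ∫⁻ u, Φ (c i s, c i t, c i u) ∂μ ∂μ ∂μ) l := by
  have inner_meas (i : ι) (s t : α) : AEMeasurable (fun u => Φ (c i s, c i t, c i u)) μ :=
    hΦ.comp_aemeasurable (aemeasurable_const.prodMk (aemeasurable_const.prodMk (hc i)))
  have middle_meas (i : ι) (s : α) : AEMeasurable (fun t => ∫⁻ u, Φ (c i s, c i t, c i u) ∂μ) μ :=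
    (hΦ.comp_aemeasurable (aemeasurable_const.prodMk
      ((hc i).comp_fst.prodMk (hc i).comp_snd))).lintegral_prod_right'
  have outer_meas (i : ι) :
      AEMeasurable (fun s => ∫⁻ t, ∫⁻ u, Φ (c i s, c i t, c i u) ∂μ ∂μ) μ :=
    (hΦ.comp_aemeasurable ((hc i).comp_fst.comp_fst.prodMk
      ((hc i).comp_snd.comp_fst.prodMk (hc i).comp_snd)))
      |>.lintegral_prod_right'.lintegral_prod_right'
  calc ∫⁻ s, ∫⁻ t, ∫⁻ u, liminf (fun i => Φ (c i s, c i t, c i u)) l ∂μ ∂μ ∂μ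
      ≤ ∫⁻ s, ∫⁻ t, liminf (fun i => ∫⁻ u, Φ (c i s, c i t, c i u) ∂μ) l ∂μ ∂μ :=
        lintegral_mono fun s => lintegral_mono fun t => lintegral_liminf_le' (inner_meas · s t)
    _ ≤ ∫⁻ s, liminf (fun i => ∫⁻ t, ∫⁻ u, Φ (c i s, c i t, c i u) ∂μ ∂μ) l ∂μ :=
        lintegral_mono fun s => lintegral_liminf_le' (middle_meas · s)
    _ ≤ liminf (fun i => ∫⁻ s, ∫⁻ t, ∫⁻ u, Φ (c i s, c i t, c i u) ∂μ ∂μ ∂μ) l :=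
        lintegral_liminf_le' outer_meas

theorem lintegral_lintegral_lintegral_comp_le_liminf [TopologicalSpace X] [MeasurableSpace X]
    [OpensMeasurableSpace X] [SecondCountableTopology X] {Φ : X × X × X → ℝ≥0∞}
    (hΦ : LowerSemicontinuous Φ) {c : ι → α → X} (hc : ∀ i, AEMeasurable (c i) μ)
    {c₀ : α → X} (hlim : ∀ᵐ s ∂μ, Tendsto (fun i => c i s) l (𝓝 (c₀ s))) :
    ∫⁻ s, ∫⁻ t, ∫⁻ u, Φ (c₀ s, c₀ t, c₀ u) ∂μ ∂μ ∂μ ≤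
      liminf (fun i => ∫⁻ s, ∫⁻ t, ∫⁻ u, Φ (c i s, c i t, c i u) ∂μ ∂μ ∂μ) l := by
  refine le_trans ?_ (lintegral_lintegral_lintegral_liminf_comp_le hΦ.measurable hc)
  refine lintegral_mono_ae (hlim.mono fun s hs => ?_)
  refine lintegral_mono_ae (hlim.mono fun t ht => ?_)
  refine lintegral_mono_ae (hlim.mono fun u hu => ?_)
  exact le_liminf_of_lowerSemicontinuousAt (hΦ (c₀ s, c₀ t, c₀ u))
    (hs.prodMk_nhds (ht.prodMk_nhds hu))

end Fatou

section Integrand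

variable {n : ℕ}

local notation "E" => EuclideanSpace ℝ (Fin n)

theorem continuous_wedgeNorm_s18 : Continuous fun x : E × E => wedgeNorm x.1 x.2 := by
  unfold wedgeNorm
  fun_prop

theorem continuousAt_invR {p q : ℝ} (hq : 0 ≤ q) {x : E × E × E}
    (hx : (‖x.2.1 - x.2.2‖ * ‖x.2.1 - x.1‖ * ‖x.2.2 - x.1‖) ^ p ≠ 0) :
    ContinuousAt (fun x : E × E × E => invR p q x.1 x.2.1 x.2.2) x := by
  have hbase : ‖x.2.1 - x.2.2‖ * ‖x.2.1 - x.1‖ * ‖x.2.2 - x.1‖ ≠ 0 ∨ 0 ≤ p := by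
    by_contra! h
    exact hx (by rw [h.1, Real.zero_rpow h.2.ne])
  have hnum : ContinuousAt (fun x : E × E × E => wedgeNorm (x.2.1 - x.1) (x.2.2 - x.1)) x :=
    (continuous_wedgeNorm_s18.comp (f := fun x : E × E × E => (x.2.1 - x.1, x.2.2 - x.1))
      (by fun_prop)).continuousAt
  exact (hnum.rpow_const (Or.inr hq)).div (ContinuousAt.rpow_const (by fun_prop) hbase) hx

/-- The integrand of `menger` as a function of the pairs (position, velocity) of the curve at the
three parameters. -/
def mengerDensity (p q : ℝ) (j : (E × E) × (E × E) × (E × E)) : ℝ≥0∞ :=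
  ENNReal.ofReal (‖j.1.2‖ * ‖j.2.1.2‖ * ‖j.2.2.2‖ * invR p q j.1.1 j.2.1.1 j.2.2.1)

theorem lowerSemicontinuous_mengerDensity (p : ℝ) {q : ℝ} (hq : 0 ≤ q) :
    LowerSemicontinuous (mengerDensity (n := n) p q) := by
  intro j
  by_cases hj : (‖j.2.1.1 - j.2.2.1‖ * ‖j.2.1.1 - j.1.1‖ * ‖j.2.2.1 - j.1.1‖) ^ p = 0
  · have hzero : mengerDensity p q j = 0 := by simp [mengerDensity, invR, hj]
    intro y hy
    exact absurd (hzero ▸ hy) not_lt_zero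
  · have hinv : ContinuousAt (fun j : (E × E) × (E × E) × (E × E) =>
        invR p q j.1.1 j.2.1.1 j.2.2.1) j :=
      ContinuousAt.comp (f := fun j : (E × E) × (E × E) × (E × E) => (j.1.1, j.2.1.1, j.2.2.1))
        (continuousAt_invR hq hj) (by fun_prop)
    refine ContinuousAt.lowerSemicontinuousAt ?_
    exact ENNReal.continuous_ofReal.continuousAt.comp (ContinuousAt.mul (by fun_prop) hinv)

end Integrand

theorem tendsto_and_tendsto_of_forall_norm_sub_add_norm_sub_le {E F : Type*}
    [SeminormedAddCommGroup E] [SeminormedAddCommGroup F] {f : ℕ → E} {g : ℕ → F} {a : E} {b : F}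
    (h : ∀ ε : ℝ, 0 < ε → ∃ N : ℕ, ∀ k ≥ N, ‖f k - a‖ + ‖g k - b‖ ≤ ε) :
    Tendsto f atTop (𝓝 a) ∧ Tendsto g atTop (𝓝 b) := by
  constructor <;> refine Metric.nhds_basis_closedBall.tendsto_right_iff.2 fun ε hε => ?_
  all_goals
    filter_upwards [eventually_atTop.2 (h ε hε)] with k hk
    rw [mem_closedBall_iff_norm]
  · exact (le_add_of_nonneg_right (norm_nonneg _)).trans hk
  · exact (le_add_of_nonneg_left (norm_nonneg _)).trans hk

theorem menger_lower_semicontinuous_general {n : ℕ} (p : ℝ) {q : ℝ} (hq : 0 ≤ q)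
    {ι : Type*} {l : Filter ι} [l.IsCountablyGenerated]
    {γseq : ι → ℝ → EuclideanSpace ℝ (Fin n)} {γ : ℝ → EuclideanSpace ℝ (Fin n)}
    (hγseq : ∀ i, AbsolutelyContinuousOnInterval (γseq i) 0 1)
    (_hγ : AbsolutelyContinuousOnInterval γ 0 1)
    (hlim : ∀ᵐ u ∂volume.restrict (Ico (0 : ℝ) 1), Tendsto (fun i => γseq i u) l (𝓝 (γ u)))
    (hlim' : ∀ᵐ u ∂volume.restrict (Ico (0 : ℝ) 1),
      Tendsto (fun i => deriv (γseq i) u) l (𝓝 (deriv γ u))) :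
    menger p q γ (deriv γ) ≤ liminf (fun i => menger p q (γseq i) (deriv (γseq i))) l := by
  have hmeas (i : ι) : AEMeasurable (fun u => (γseq i u, deriv (γseq i) u))
      (volume.restrict (Ico (0 : ℝ) 1)) := by
    have hcont : ContinuousOn (γseq i) (Ico 0 1) :=
      (hγseq i).continuousOn.mono (Ico_subset_Icc_self.trans Icc_subset_uIcc)
    exact (hcont.aemeasurable measurableSet_Ico).prodMk (measurable_deriv _).aemeasurable
  exact lintegral_lintegral_lintegral_comp_le_liminf (lowerSemicontinuous_mengerDensity p hq)
    (c₀ := fun u => (γ u, deriv γ u)) hmeas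
    (hlim.mp (hlim'.mono fun u hvel hpos => hpos.prodMk_nhds hvel))

/-- **Lower semi-continuity of `E_{p,q}` along `C¹`-convergent sequences of
injective regular curves.** -/
theorem menger_lower_semicontinuous (n : ℕ) (p q : ℝ)
    (hp0 : 0 < p) (hq0 : 0 < q)
    (γseq : ℕ → ℝ → EuclideanSpace ℝ (Fin n))
    (γ : ℝ → EuclideanSpace ℝ (Fin n))
    (hC1 : ∀ k, ContDiff ℝ 1 (γseq k)) (hC1' : ContDiff ℝ 1 γ)
    (hper : ∀ k, Function.Periodic (γseq k) 1) (hper' : Function.Periodic γ 1)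
    (hinj : ∀ k, InjCircle (γseq k)) (hinj' : InjCircle γ)
    (hreg : ∀ k, ∃ c : ℝ, 0 < c ∧ ∀ u, c ≤ ‖deriv (γseq k) u‖)
    (hreg' : ∃ c : ℝ, 0 < c ∧ ∀ u, c ≤ ‖deriv γ u‖)
    (hconv : ∀ ε : ℝ, 0 < ε → ∃ N : ℕ, ∀ k ≥ N, ∀ u : ℝ,
      ‖γseq k u - γ u‖ + ‖deriv (γseq k) u - deriv γ u‖ ≤ ε) :
    menger p q γ (deriv γ) ≤
      Filter.liminf (fun k => menger p q (γseq k) (deriv (γseq k))) atTop := by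
  have hlim (u : ℝ) :=
    tendsto_and_tendsto_of_forall_norm_sub_add_norm_sub_le fun ε hε =>
      (hconv ε hε).imp fun _ hN k hk => hN k hk u
  exact menger_lower_semicontinuous_general p hq0.le
    (fun k => (hC1 k).contDiffOn.absolutelyContinuousOnInterval)
    hC1'.contDiffOn.absolutelyContinuousOnInterval
    (.of_forall fun u => (hlim u).1) (.of_forall fun u => (hlim u).2)
end
end
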